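/- arXiv:2012.04816 — 2 statements merged into one kernel-verified Lean document; each statement's English description precedes it below -/
import Mathlib

section
/- For every positive integer m and every tree T of order m, every 3-connected finite simple graph G with minimum degree δ(G) ≥ m + 3 contains a subgraph T′ isomorphic to T such that G − V(T′) is still 3-connected. -/
/-- A graph `G` is `k`-connected if it has at least `k+1` vertices and
deleting any set of fewer than `k` vertices leaves a connected graph. -/
def KConnected {V : Type*} (G : SimpleGraph V) (k : ℕ) : Prop :=
  k + 1 ≤ Nat.card V ∧
    ∀ X : Finset V, X.card < k → (G.induce ((X : Set V)ᶜ)).Connected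



set_option linter.unusedSectionVars false
set_option linter.unusedDecidableInType false
set_option linter.unusedVariables false
section core
variable {V : Type*} [DecidableEq V]

/-- neighbours of `v` inside `B` -/
noncomputable def nb (G : SimpleGraph V) (B : Finset V) (v : V) : Finset V := by
  classical exact B.filter (fun w => G.Adj v w)

lemma mem_nb {G : SimpleGraph V} {B : Finset V} {v w : V} :
    w ∈ nb G B v ↔ w ∈ B ∧ G.Adj v w := by
  classical
  simp [nb]

lemma nb_mono {G : SimpleGraph V} {B B' : Finset V} (h : B ⊆ B') (v : V) :
    nb G B v ⊆ nb G B' v := by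
  intro w hw
  rw [mem_nb] at hw ⊢
  exact ⟨h hw.1, hw.2⟩

lemma nb_card_sdiff {G : SimpleGraph V} (B X : Finset V) (v : V) :
    (nb G B v).card ≤ (nb G (B \ X) v).card + X.card := by
  have : nb G B v ⊆ nb G (B \ X) v ∪ X := by
    intro w hw
    rw [mem_nb] at hw
    rw [Finset.mem_union, mem_nb, Finset.mem_sdiff]
    tauto
  exact (Finset.card_le_card this).trans (Finset.card_union_le _ _)

lemma nb_card_union {G : SimpleGraph V} (B X : Finset V) (v : V) :
    (nb G (B ∪ X) v).card ≤ (nb G B v).card + (nb G X v).card := by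
  have : nb G (B ∪ X) v ⊆ nb G B v ∪ nb G X v := by
    intro w hw
    rw [mem_nb, Finset.mem_union] at hw
    rw [Finset.mem_union, mem_nb, mem_nb]
    tauto
  exact (Finset.card_le_card this).trans (Finset.card_union_le _ _)

/-- connected inside `B` -/
def Cn (G : SimpleGraph V) (B : Finset V) (a b : V) : Prop :=
  ∃ w : G.Walk a b, ∀ v ∈ w.support, v ∈ B

variable {G : SimpleGraph V} {B B' : Finset V} {a b c : V}

lemma Cn.refl (h : a ∈ B) : Cn G B a a := ⟨SimpleGraph.Walk.nil, by simpa using h⟩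

lemma Cn.symm (h : Cn G B a b) : Cn G B b a := by
  obtain ⟨w, hw⟩ := h
  exact ⟨w.reverse, by simpa using hw⟩

lemma Cn.trans (h : Cn G B a b) (h' : Cn G B b c) : Cn G B a c := by
  obtain ⟨w, hw⟩ := h
  obtain ⟨w', hw'⟩ := h'
  refine ⟨w.append w', fun v hv => ?_⟩
  rw [SimpleGraph.Walk.mem_support_append_iff] at hv
  exact hv.elim (hw v) (hw' v)

lemma Cn.mono (h : B ⊆ B') (hc : Cn G B a b) : Cn G B' a b := by
  obtain ⟨w, hw⟩ := hc
  exact ⟨w, fun v hv => h (hw v hv)⟩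

lemma Cn.left (h : Cn G B a b) : a ∈ B := by
  obtain ⟨w, hw⟩ := h
  exact hw _ w.start_mem_support

lemma Cn.right (h : Cn G B a b) : b ∈ B := h.symm.left

lemma Cn.adj (h : G.Adj a b) (ha : a ∈ B) (hb : b ∈ B) : Cn G B a b :=
  ⟨h.toWalk, by simp [SimpleGraph.Adj.toWalk, ha, hb]⟩

/-- induction principle for propagation along a walk -/
lemma Cn.prop {I : V → Prop} (h : Cn G B a b) (ha : I a)
    (step : ∀ u v, u ∈ B → v ∈ B → G.Adj u v → I u → I v) : I b := by
  obtain ⟨w, hw⟩ := h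
  induction w with
  | nil => exact ha
  | cons hadj p ih =>
    rename_i u v w'
    have hu : u ∈ B := hw _ (by simp)
    have hv : v ∈ B := hw _ (by simp)
    exact ih (step _ _ hu hv hadj ha) (fun x hx => hw x (by simp [hx]))

/-- a connection restricted to a closed set -/
lemma Cn.restrict {B' : Finset V} (h : Cn G B a b) (ha : a ∈ B')
    (step : ∀ u v, u ∈ B → v ∈ B → G.Adj u v → u ∈ B' → v ∈ B') : Cn G B' a b := by
  have := Cn.prop (I := fun v => Cn G B' a v) h (Cn.refl ha) (fun u v hu hv hadj hI =>
    hI.trans (Cn.adj hadj hI.right (step u v hu hv hadj hI.right)))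
  exact this

end core


section trees
variable {W : Type*} [Fintype W] [DecidableEq W]

structure Rooted (T : SimpleGraph W) (r : W) (par : W → W) (dep : W → ℕ) : Prop where
  par_r : par r = r
  adj : ∀ t, t ≠ r → T.Adj (par t) t
  dep_lt : ∀ t, t ≠ r → dep (par t) < dep t
  edge : ∀ a b, T.Adj a b → (b ≠ r ∧ par b = a) ∨ (a ≠ r ∧ par a = b)

lemma exists_rooted (T : SimpleGraph W) (hT : T.IsTree) (r : W) :
    ∃ par dep, Rooted T r par dep := by
  have h := fun t => hT.existsUnique_path t r
  choose p hp hu using h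
  simp only at hp hu
  have hpr : p r = SimpleGraph.Walk.nil := (hu r _ (by simp)).symm
  have tailp : ∀ t, t ≠ r → (p t).tail = p (p t).snd := fun t ht =>
    hu _ _ ((hp t).tail)
  have nn : ∀ t, t ≠ r → ¬ (p t).Nil := fun t ht hn => ht hn.eq
  refine ⟨fun t => (p t).snd, fun t => (p t).length, ?_, ?_, ?_, ?_⟩
  · rw [hpr]; simp
  · intro t ht
    exact ((p t).adj_snd (nn t ht)).symm
  · intro t ht
    have := SimpleGraph.Walk.length_tail_add_one (nn t ht)
    rw [tailp t ht] at this
    omega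
  · intro a b hab
    by_cases ha : a ∈ (p b).support
    · left
      have hbr : b ≠ r := by
        rintro rfl
        rw [hpr] at ha
        simp at ha
        exact hab.ne ha
      refine ⟨hbr, ?_⟩
      have h1 := (hp b).takeUntil ha
      obtain ⟨q, hq, hqu⟩ := hT.existsUnique_path b a
      have h2 : (p b).takeUntil a ha = hab.symm.toWalk := by
        rw [hqu _ h1]
        exact (hqu _ (by simpa [SimpleGraph.Adj.toWalk] using hab.symm.ne)).symm
      have h3 := SimpleGraph.Walk.snd_takeUntil hab.ne (p b) ha
      rw [← h3, h2]
      simp [SimpleGraph.Adj.toWalk]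
    · right
      have h1 : (SimpleGraph.Walk.cons hab (p b)).IsPath := by
        rw [SimpleGraph.Walk.cons_isPath_iff]
        exact ⟨hp b, ha⟩
      have h2 := hu a _ h1
      refine ⟨?_, ?_⟩
      · rintro rfl
        exact ha (SimpleGraph.Walk.end_mem_support _)
      · rw [← h2]; simp
end trees

section ext
variable {W : Type*} [Fintype W] [DecidableEq W] {V : Type*} [DecidableEq V]

lemma ext_lemma {T : SimpleGraph W} {r : W} {par : W → W} {dep : W → ℕ}
    (hT : Rooted T r par dep) (G : SimpleGraph V) :
    ∀ (n : ℕ) (P Q : Finset W) (g : W → V) (R : Finset V), Q.card = n → r ∈ P →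
    (∀ t ∈ P, par t ∈ P) → (∀ t ∈ Q, t ∉ P) → (∀ t ∈ Q, par t ∈ P ∪ Q) →
    (∀ s ∈ P, ∀ t ∈ P, g s = g t → s = t) →
    (∀ t ∈ P, t ≠ r → G.Adj (g (par t)) (g t)) → (∀ t ∈ P, g t ∉ R) →
    (∀ t ∈ Q, par t ∈ P → Q.card ≤ (nb G R (g (par t))).card) →
    ((∃ t ∈ Q, par t ∈ Q) → ∀ x ∈ R, Q.card ≤ (nb G R x).card + 1) →
    ∃ g' : W → V, (∀ t ∈ P, g' t = g t) ∧
      (∀ s ∈ P ∪ Q, ∀ t ∈ P ∪ Q, g' s = g' t → s = t) ∧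
      (∀ t ∈ P ∪ Q, t ≠ r → G.Adj (g' (par t)) (g' t)) ∧ (∀ t ∈ Q, g' t ∈ R) := by
  intro n
  induction n with
  | zero =>
    intro P Q g R hQ hr hP hPQ hpar hinj hadj hR ha hb
    rw [Finset.card_eq_zero] at hQ
    subst hQ
    exact ⟨g, fun _ _ => rfl, by simpa using hinj, by simpa using hadj, by simp⟩
  | succ n ih =>
    intro P Q g R hQ hr hP hPQ hpar hinj hadj hR ha hb
    have hne : Q.Nonempty := Finset.card_pos.1 (by omega)
    obtain ⟨t, htQ, htmin⟩ := Finset.exists_min_image Q dep hne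
    have htr : t ≠ r := fun h => hPQ t htQ (h ▸ hr)
    have htP : par t ∈ P := by
      rcases Finset.mem_union.1 (hpar t htQ) with h | h
      · exact h
      · exact absurd (htmin _ h) (by have := hT.dep_lt t htr; omega)
    have h1 := ha t htQ htP
    obtain ⟨y, hy⟩ := Finset.card_pos.1 (show 0 < (nb G R (g (par t))).card by omega)
    rw [mem_nb] at hy
    have hgy : ∀ s ∈ P, g s ≠ y := fun s hs h => hR s hs (h ▸ hy.1)
    have hup : ∀ s ∈ P, Function.update g t y s = g s := fun s hs => by
      rw [Function.update_of_ne]; rintro rfl; exact hPQ _ htQ hs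
    have herase : ∀ x, (nb G R x).card ≤ (nb G (R.erase y) x).card + 1 := by
      intro x
      have := nb_card_sdiff (G := G) R {y} x
      rwa [Finset.sdiff_singleton_eq_erase, Finset.card_singleton] at this
    have hyy : (nb G R y).card ≤ (nb G (R.erase y) y).card := by
      apply Finset.card_le_card
      intro w hw
      rw [mem_nb] at hw ⊢
      exact ⟨Finset.mem_erase.2 ⟨fun h => hw.2.ne h.symm, hw.1⟩, hw.2⟩
    have hQc : (Q.erase t).card = n := by rw [Finset.card_erase_of_mem htQ]; omega
    refine Exists.elim (ih (insert t P) (Q.erase t) (Function.update g t y) (R.erase y)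
      hQc (Finset.mem_insert_of_mem hr) ?_ ?_ ?_ ?_ ?_ ?_ ?_ ?_) ?_
    · intro s hs
      rcases Finset.mem_insert.1 hs with rfl | hs
      · exact Finset.mem_insert_of_mem htP
      · exact Finset.mem_insert_of_mem (hP s hs)
    · intro s hs hs'
      rcases Finset.mem_insert.1 hs' with rfl | hs'
      · simp at hs
      · exact hPQ s (Finset.mem_of_mem_erase hs) hs'
    · intro s hs
      have := hpar s (Finset.mem_of_mem_erase hs)
      by_cases h : par s = t
      · simp [h]
      · simpa [h] using this
    · intro s hs s' hs' he
      rw [Finset.mem_insert] at hs hs'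
      rcases hs with hs | hs <;> rcases hs' with hs' | hs'
      · rw [hs, hs']
      · rw [hup s' hs', hs] at he; simp at he; exact absurd he.symm (hgy _ hs')
      · rw [hup s hs, hs'] at he; simp at he; exact absurd he (hgy _ hs)
      · rw [hup s hs, hup s' hs'] at he; exact hinj _ hs _ hs' he
    · intro s hs hsr
      rcases Finset.mem_insert.1 hs with rfl | hs
      · rw [hup _ htP]; simpa using hy.2
      · rw [hup _ hs, hup _ (hP s hs)]; exact hadj s hs hsr
    · intro s hs
      rcases Finset.mem_insert.1 hs with rfl | hs
      · simp
      · rw [hup _ hs]; exact fun h => hR s hs (Finset.mem_of_mem_erase h)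
    · intro s hs hsP
      rcases Finset.mem_insert.1 hsP with h | h
      · rw [h]; simp only [Function.update_self]
        have := hb ⟨s, Finset.mem_of_mem_erase hs, h ▸ htQ⟩ y hy.1
        omega
      · rw [hup _ h]
        have := ha s (Finset.mem_of_mem_erase hs) h
        have := herase (g (par s))
        omega
    · rintro ⟨s, hs, hs'⟩ x hx
      have := hb ⟨s, Finset.mem_of_mem_erase hs, Finset.mem_of_mem_erase hs'⟩ x (Finset.mem_of_mem_erase hx)
      have := herase x
      omega
    · rintro g' ⟨h1, h2, h3, h4⟩
      have hun : insert t P ∪ Q.erase t = P ∪ Q := by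
        ext s; by_cases h : s = t <;> simp [h, htQ]
      rw [hun] at h2 h3
      refine ⟨g', ?_, h2, h3, ?_⟩
      · intro s hs
        rw [h1 s (Finset.mem_insert_of_mem hs), hup s hs]
      · intro s hs
        by_cases h : s = t
        · subst h
          rw [h1 s (Finset.mem_insert_self _ _)]
          simpa using hy.1
        · exact Finset.mem_of_mem_erase (h4 s (Finset.mem_erase.2 ⟨h, hs⟩))

/-- embeddings of `T` -/
def TEmb (T : SimpleGraph W) (G : SimpleGraph V) (f : W → V) : Prop :=
  Function.Injective f ∧ ∀ a b, T.Adj a b → G.Adj (f a) (f b)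

lemma Rooted.temb {T : SimpleGraph W} {r : W} {par : W → W} {dep : W → ℕ}
    (hT : Rooted T r par dep) {G : SimpleGraph V} {f : W → V} (hi : Function.Injective f)
    (h : ∀ t, t ≠ r → G.Adj (f (par t)) (f t)) : TEmb T G f := by
  refine ⟨hi, fun a b hab => ?_⟩
  rcases hT.edge a b hab with ⟨h1, h2⟩ | ⟨h1, h2⟩
  · rw [← h2]; exact h b h1
  · rw [← h2]; exact (h a h1).symm

lemma TEmb.par {T : SimpleGraph W} {r : W} {par : W → W} {dep : W → ℕ}
    (hT : Rooted T r par dep) {G : SimpleGraph V} {f : W → V} (h : TEmb T G f) (t : W)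
    (ht : t ≠ r) : G.Adj (f (par t)) (f t) := h.2 _ _ (hT.adj t ht)

lemma greedy {T : SimpleGraph W} (hT : T.IsTree) (G : SimpleGraph V) (R : Finset V)
    (hR : R.Nonempty) (h : ∀ x ∈ R, Fintype.card W ≤ (nb G R x).card + 1) :
    ∃ f, TEmb T G f ∧ ∀ t, f t ∈ R := by
  obtain ⟨r⟩ := hT.1.nonempty
  obtain ⟨par, dep, hro⟩ := exists_rooted T hT r
  obtain ⟨x, hx⟩ := hR
  have hc : (Finset.univ.erase r : Finset W).card + 1 = Fintype.card W := by
    rw [Finset.card_erase_add_one (Finset.mem_univ _), Finset.card_univ]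
  have herase : ∀ y, (nb G R y).card ≤ (nb G (R.erase x) y).card + 1 := by
    intro y
    have := nb_card_sdiff (G := G) R {x} y
    rwa [Finset.sdiff_singleton_eq_erase, Finset.card_singleton] at this
  have hxx : (nb G R x).card ≤ (nb G (R.erase x) x).card := by
    apply Finset.card_le_card
    intro w hw
    rw [mem_nb] at hw ⊢
    exact ⟨Finset.mem_erase.2 ⟨fun h => hw.2.ne h.symm, hw.1⟩, hw.2⟩
  obtain ⟨g, h1, h2, h3, h4⟩ := ext_lemma hro G _ {r} (Finset.univ.erase r) (fun _ => x) (R.erase x) rfl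
    (by simp) (by simp [hro.par_r]) (by simp) (by intro t _; by_cases h : par t = r <;> simp [h])
    (by simp) (by intro t ht ht'; simp at ht; contradiction) (by simp)
    (by intro t ht htp; have := h x hx; omega)
    (by
      intro _ y hy
      have := h y (Finset.mem_of_mem_erase hy)
      have := herase y
      omega)
  have hun : ({r} : Finset W) ∪ Finset.univ.erase r = Finset.univ := by
    ext s; by_cases h : s = r <;> simp [h]
  rw [hun] at h2 h3
  refine ⟨g, hro.temb (fun a b hab => h2 a (by simp) b (by simp) hab) (fun t ht => h3 t (by simp) ht), ?_⟩
  intro t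
  by_cases ht : t = r
  · rw [ht, h1 r (by simp)]; exact hx
  · exact Finset.mem_of_mem_erase (h4 t (by simp [ht]))
end ext


section subtree
variable {W : Type*} [Fintype W] [DecidableEq W]

noncomputable def Dsc (par : W → W) (q : W) : Finset W := by
  classical exact Finset.univ.filter (fun t => ∃ k, par^[k] t = q)

variable {par : W → W} {T : SimpleGraph W} {r : W} {dep : W → ℕ} {q s t a b : W}

lemma mem_Dsc : t ∈ Dsc par q ↔ ∃ k, par^[k] t = q := by
  classical simp [Dsc]

lemma Dsc_self : q ∈ Dsc par q := mem_Dsc.2 ⟨0, rfl⟩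

lemma Dsc_par (h : t ∈ Dsc par q) (hne : t ≠ q) : par t ∈ Dsc par q := by
  rw [mem_Dsc] at *
  obtain ⟨k, hk⟩ := h
  cases k with
  | zero => exact absurd hk hne
  | succ k => exact ⟨k, hk⟩

lemma Dsc_of_par (h : par t ∈ Dsc par q) : t ∈ Dsc par q := by
  rw [mem_Dsc] at *
  obtain ⟨k, hk⟩ := h
  exact ⟨k + 1, hk⟩

lemma Dsc_trans (h : t ∈ Dsc par s) (h' : s ∈ Dsc par q) : t ∈ Dsc par q := by
  rw [mem_Dsc] at *
  obtain ⟨k, hk⟩ := h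
  obtain ⟨l, hl⟩ := h'
  exact ⟨l + k, by rw [Function.iterate_add_apply, hk, hl]⟩

lemma Dsc_comp (h : t ∈ Dsc par a) (h' : t ∈ Dsc par b) : a ∈ Dsc par b ∨ b ∈ Dsc par a := by
  rw [mem_Dsc] at h h'
  obtain ⟨k, hk⟩ := h
  obtain ⟨l, hl⟩ := h'
  rw [mem_Dsc, mem_Dsc]
  rcases le_total k l with hkl | hkl
  · left
    obtain ⟨d, rfl⟩ := Nat.exists_eq_add_of_le' hkl
    exact ⟨d, by rw [← hk, ← Function.iterate_add_apply, hl]⟩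
  · right
    obtain ⟨d, rfl⟩ := Nat.exists_eq_add_of_le' hkl
    exact ⟨d, by rw [← hl, ← Function.iterate_add_apply, hk]⟩

lemma Rooted.Dsc_r (hT : Rooted T r par dep) (h : r ∈ Dsc par q) : q = r := by
  obtain ⟨k, hk⟩ := mem_Dsc.1 h
  rw [← hk]
  exact Function.iterate_fixed hT.par_r k

lemma Rooted.dep_le (hT : Rooted T r par dep) (t : W) : dep (par t) ≤ dep t := by
  by_cases h : t = r
  · rw [h, hT.par_r]
  · exact (hT.dep_lt t h).le

lemma Rooted.Dsc_dep (hT : Rooted T r par dep) (h : t ∈ Dsc par q) : dep q ≤ dep t := by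
  obtain ⟨k, hk⟩ := mem_Dsc.1 h
  rw [← hk]
  clear hk h
  induction k generalizing t with
  | zero => exact le_rfl
  | succ k ih => exact (ih (t := par t)).trans (hT.dep_le t)

lemma Rooted.Dsc_dep_lt (hT : Rooted T r par dep) (h : t ∈ Dsc par q) (hne : t ≠ q) :
    dep q < dep t := by
  have h1 := hT.Dsc_dep (Dsc_par h hne)
  have h2 : t ≠ r := by
    rintro rfl
    exact hne (hT.Dsc_r h).symm
  exact h1.trans_lt (hT.dep_lt t h2)

lemma Rooted.Dsc_antisymm (hT : Rooted T r par dep) (h : t ∈ Dsc par q) (h' : q ∈ Dsc par t) :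
    t = q := by
  by_contra hne
  have := hT.Dsc_dep_lt h hne
  have := hT.Dsc_dep h'
  omega

lemma Rooted.Dsc_child (hT : Rooted T r par dep) (h : s ∈ Dsc par t) (hne : s ≠ t) :
    ∃ c, c ≠ r ∧ par c = t ∧ s ∈ Dsc par c := by
  obtain ⟨k, hk⟩ := mem_Dsc.1 h
  clear h
  induction k generalizing s with
  | zero => exact absurd hk hne
  | succ k ih =>
    by_cases h : par s = t
    · refine ⟨s, ?_, h, Dsc_self⟩
      rintro rfl
      rw [hT.par_r] at h
      exact hne h
    · obtain ⟨c, h1, h2, h3⟩ := ih h hk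
      exact ⟨c, h1, h2, Dsc_of_par h3⟩

lemma Rooted.Dsc_root (hT : Rooted T r par dep) (t : W) : t ∈ Dsc par r := by
  by_cases h : t = r
  · rw [h]; exact Dsc_self
  · exact Dsc_of_par (Rooted.Dsc_root hT (par t))
termination_by dep t
decreasing_by exact hT.dep_lt t h

lemma Rooted.Dsc_leaf (hT : Rooted T r par dep) (q : W) :
    ∃ l ∈ Dsc par q, ∀ s, s ≠ r → par s ≠ l := by
  obtain ⟨l, hl, hm⟩ := Finset.exists_max_image (Dsc par q) dep ⟨q, Dsc_self⟩
  refine ⟨l, hl, fun s hs h => ?_⟩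
  have := hm s (Dsc_of_par (h ▸ hl))
  have := hT.dep_lt s hs
  rw [h] at this
  omega

lemma Rooted.Dsc_child_card (hT : Rooted T r par dep) (hs : s ∈ Dsc par q) (hne : s ≠ q) :
    (Dsc par s).card < (Dsc par q).card := by
  apply Finset.card_lt_card
  rw [Finset.ssubset_iff_of_subset (fun x hx => Dsc_trans hx hs)]
  exact ⟨q, Dsc_self, fun h => hne (hT.Dsc_antisymm hs h)⟩
end subtree


section lemA
variable {W : Type*} [Fintype W] [DecidableEq W] {V : Type*} [DecidableEq V]

lemma nb_cover {G : SimpleGraph V} {H R E : Finset V} {x : V}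
    (h : ∀ w ∈ H, G.Adj x w → w ∈ R ∨ w ∈ E) : (nb G H x).card ≤ (nb G R x).card + E.card := by
  have : nb G H x ⊆ nb G R x ∪ E := by
    intro w hw
    rw [mem_nb] at hw
    rw [Finset.mem_union, mem_nb]
    rcases h w hw.1 hw.2 with h | h
    · exact Or.inl ⟨h, hw.2⟩
    · exact Or.inr h
  exact (Finset.card_le_card this).trans (Finset.card_union_le _ _)

def Good (G : SimpleGraph V) (T : SimpleGraph W) (H L : Finset V) (r : W) (par : W → W)
    (f : W → V) (q : W) : Prop :=
  TEmb T G f ∧ (∀ t, f t ∈ H) ∧ q ≠ r ∧ (∃ d ∈ H, (∀ t, f t ≠ d) ∧ G.Adj (f (par q)) d) ∧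
    ∃ t ∈ Dsc par q, f t ∈ L

structure AC (G : SimpleGraph V) (T : SimpleGraph W) (H L : Finset V) (r : W) (par : W → W)
    (dep : W → ℕ) (f : W → V) (q : W) : Prop where
  hT : Rooted T r par dep
  hcov : ∀ f', TEmb T G f' → (∀ t, f' t ∈ H) → ∀ u ∈ L, ∃ t, f' t = u
  hdeg : ∀ v ∈ H, v ∉ L → Fintype.card W ≤ (nb G H v).card
  hgood : Good G T H L r par f q
  hmin : ∀ f' q', Good G T H L r par f' q' → (Dsc par q).card ≤ (Dsc par q').card

def Fam (G : SimpleGraph V) (T : SimpleGraph W) (H L : Finset V) (par : W → W)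
    (f : W → V) (q : W) (f' : W → V) : Prop :=
  TEmb T G f' ∧ (∀ t, f' t ∈ H) ∧ (∀ t, t ∉ Dsc par q → f' t = f t) ∧ (∀ t, f t ∈ L → f' t = f t)

lemma U_free {G : SimpleGraph V} {T : SimpleGraph W} {H L : Finset V}
    (hdeg : ∀ v ∈ H, v ∉ L → Fintype.card W ≤ (nb G H v).card)
    {f : W → V} (hf : TEmb T G f) (hH : ∀ t, f t ∈ H) {t : W} (ht : f t ∉ L) :
    ∃ d ∈ H, (∀ t, f t ≠ d) ∧ G.Adj (f t) d := by
  by_contra hcon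
  push Not at hcon
  have h1 := hdeg _ (hH t) ht
  have h2 := nb_cover (G := G) (H := H) (R := ∅) (E := (Finset.univ.erase t).image f) (x := f t) ?_
  · have h3 : (nb G ∅ (f t)).card = 0 := by
      rw [Finset.card_eq_zero]; ext w; simp [mem_nb]
    have h4 := Finset.card_image_le (s := Finset.univ.erase t) (f := f)
    rw [Finset.card_erase_of_mem (Finset.mem_univ _), Finset.card_univ] at h4
    have : 0 < Fintype.card W := Fintype.card_pos_iff.2 ⟨t⟩
    omega
  · intro w hw hadj
    right
    have : ∃ s, f s = w := by
      by_contra h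
      push Not at h
      exact hcon w hw h hadj
    obtain ⟨s, rfl⟩ := this
    refine Finset.mem_image.2 ⟨s, ?_, rfl⟩
    simp only [Finset.mem_erase, Finset.mem_univ, and_true]
    rintro rfl
    exact hadj.ne rfl

namespace AC
variable {G : SimpleGraph V} {T : SimpleGraph W} {H L : Finset V} {r : W} {par : W → W}
    {dep : W → ℕ} {f f' : W → V} {q : W}

lemma fam (h : AC G T H L r par dep f q) : Fam G T H L par f q f :=
  ⟨h.hgood.1, h.hgood.2.1, fun _ _ => rfl, fun _ _ => rfl⟩

lemma famU (h : AC G T H L r par dep f q) (hf : Fam G T H L par f q f') {t : W}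
    (ht : f t ∉ L) : f' t ∉ L := by
  intro h'
  obtain ⟨s, hs⟩ := h.hcov f h.hgood.1 h.hgood.2.1 _ h'
  have h1 : f' s = f s := hf.2.2.2 s (by rw [hs]; exact h')
  rw [hs] at h1
  have := hf.1.1 h1
  subst this
  exact ht (by rw [hs]; exact h')

lemma Dnot (h : AC G T H L r par dep f q) (hf : Fam G T H L par f q f') {d : V}
    (hd : ∀ t, f' t ≠ d) : d ∉ L := by
  intro h'
  obtain ⟨s, hs⟩ := h.hcov f' hf.1 hf.2.1 _ h'
  exact hd s hs

lemma big (h : AC G T H L r par dep f q) (hf : Fam G T H L par f q f') {t s : W}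
    (ht : t ∈ Dsc par q) (hs : s ∈ Dsc par t) (hst : s ≠ t) (hsL : f s ∈ L) {d : V}
    (hdH : d ∈ H) (hd : ∀ t, f' t ≠ d) : ¬ G.Adj (f' t) d := by
  intro hadj
  obtain ⟨c, hc, hct, hsc⟩ := h.hT.Dsc_child hs hst
  have hg : Good G T H L r par f' c := by
    refine ⟨hf.1, hf.2.1, hc, ⟨d, hdH, hd, ?_⟩, s, hsc, ?_⟩
    · rw [hct]; exact hadj
    · rw [hf.2.2.2 s hsL]; exact hsL
  have h1 := h.hmin _ _ hg
  have h2 : c ∈ Dsc par q := Dsc_of_par (by rw [hct]; exact ht)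
  have h3 : c ≠ q := by
    rintro rfl
    have h4 := h.hT.dep_lt c hc
    have h5 := h.hT.Dsc_dep ht
    rw [hct] at h4
    omega
  have h6 := h.hT.Dsc_child_card h2 h3
  omega

lemma below (h : AC G T H L r par dep f q) {t s : W} (ht : t ∈ Dsc par q) (htL : f t ∉ L)
    (hs : s ∈ Dsc par t) : f s ∉ L := by
  intro hsL
  have hst : s ≠ t := by
    rintro rfl
    exact htL hsL
  obtain ⟨d, hdH, hd, hadj⟩ := U_free h.hdeg h.hgood.1 h.hgood.2.1 htL
  exact h.big h.fam ht hs hst hsL hdH hd hadj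

lemma qL (h : AC G T H L r par dep f q) : f q ∈ L := by
  by_contra hq
  obtain ⟨t, ht, htL⟩ := h.hgood.2.2.2.2
  exact h.below Dsc_self hq ht htL

lemma re (h : AC G T H L r par dep f q) (hf : Fam G T H L par f q f') {c : W} (hc : c ∈ Dsc par q)
    (hcL : f c ∉ L) {x : V} (hxH : x ∈ H) (hx : ∀ t, f' t ≠ x) (hadj : G.Adj (f' (par c)) x) :
    ∃ f'', Fam G T H L par f q f'' ∧ (∀ t, t ∉ Dsc par c → f'' t = f' t) ∧ ∀ t, f'' t ≠ f' c := by
  have hcr : c ≠ r := by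
    rintro rfl
    exact h.hgood.2.2.1 (h.hT.Dsc_r hc)
  set S := Dsc par c with hS
  have hcS : c ∈ S := Dsc_self
  have hSm : S.card ≤ Fintype.card W := Finset.card_le_univ _
  have hSp : 0 < S.card := Finset.card_pos.2 ⟨c, hcS⟩
  have hup : ∀ t, t ≠ c → Function.update f' c x t = f' t := fun t ht => Function.update_of_ne ht _ _
  set E := insert (f' c) (Sᶜ.image f') with hE
  have hEc : E.card ≤ Fintype.card W - S.card + 1 := by
    have h1 : E.card ≤ _ := Finset.card_insert_le (f' c) (Sᶜ.image f')
    have h2 := Finset.card_image_le (s := Sᶜ) (f := f')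
    rw [Finset.card_compl] at h2
    omega
  set R := (H \ E).erase x with hR
  have hRU : ∀ y ∈ R, y ∈ H ∧ y ∉ L := by
    intro y hy
    simp only [hR, hE, Finset.mem_erase, Finset.mem_sdiff, Finset.mem_insert, Finset.mem_image,
      Finset.mem_compl, not_or, not_exists, not_and] at hy
    refine ⟨hy.2.1, fun hyL => ?_⟩
    obtain ⟨s, hs⟩ := h.hcov f' hf.1 hf.2.1 _ hyL
    have hsS : s ∈ S := by
      by_contra hsS
      exact hy.2.2.2 s hsS hs
    exact h.famU hf (h.below hc hcL hsS) (hs ▸ hyL)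
  have hxL := h.Dnot hf hx
  have hQc : (S.erase c).card + 1 = S.card := Finset.card_erase_add_one hcS
  have hparQ : ∀ t ∈ S.erase c, par t ∈ S := fun t ht =>
    Dsc_par (Finset.mem_of_mem_erase ht) (Finset.ne_of_mem_erase ht)
  have key := ext_lemma h.hT G _ (insert c Sᶜ) (S.erase c) (Function.update f' c x) R rfl ?_ ?_ ?_ ?_ ?_ ?_ ?_ ?_ ?_
  · obtain ⟨g, g1, g2, g3, g4⟩ := key
    have hun : ∀ t, t ∈ insert c Sᶜ ∪ S.erase c := by
      intro t
      by_cases h1 : t = c <;> by_cases h2 : t ∈ S <;> simp [h1, h2]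
    have hgo : ∀ t, t ∉ S → g t = f' t := by
      intro t ht
      rw [g1 t (by simp [ht]), hup]
      rintro rfl
      exact ht hcS
    have hgc : g c = x := by rw [g1 c (by simp)]; simp
    have hgS : ∀ t ∈ S, t ≠ c → g t ∈ R := fun t ht htc => g4 t (Finset.mem_erase.2 ⟨htc, ht⟩)
    refine ⟨g, ⟨h.hT.temb (fun a b hab => g2 a (hun a) b (hun b) hab) (fun t ht => g3 t (hun t) ht),
      ?_, ?_, ?_⟩, hgo, ?_⟩
    · intro t
      by_cases hts : t ∈ S
      · by_cases htc : t = c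
        · rw [htc, hgc]; exact hxH
        · exact (hRU _ (hgS t hts htc)).1
      · rw [hgo t hts]; exact hf.2.1 t
    · intro t ht
      rw [hgo t (fun h' => ht (Dsc_trans h' hc))]
      exact hf.2.2.1 t ht
    · intro t ht
      rw [hgo t (fun h' => h.below hc hcL h' ht)]
      exact hf.2.2.2 t ht
    · intro t
      by_cases hts : t ∈ S
      · by_cases htc : t = c
        · rw [htc, hgc]; exact (hx c).symm
        · have := hgS t hts htc
          rintro he
          rw [he] at this
          simp [hR, hE] at this
      · rw [hgo t hts]
        intro he
        have := hf.1.1 he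
        subst this
        exact hts hcS
  · rw [Finset.mem_insert, Finset.mem_compl]
    exact Or.inr fun hr => hcr (h.hT.Dsc_r hr)
  · intro t ht
    rw [Finset.mem_insert, Finset.mem_compl] at ht ⊢
    by_cases hp : par t ∈ S
    · rcases ht with ht | ht
      · right
        intro hp
        have h1 := h.hT.Dsc_dep hp
        have h2 := h.hT.dep_lt c hcr
        rw [ht] at h1
        omega
      · exact absurd (Dsc_of_par hp) ht
    · exact Or.inr hp
  · intro t ht
    simp only [Finset.mem_erase] at ht
    simp [ht.1, ht.2]
  · intro t ht
    have := hparQ t ht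
    by_cases hp : par t = c <;> simp [hp, this]
  · intro s hs t ht he
    rw [Finset.mem_insert] at hs ht
    by_cases hsc : s = c <;> by_cases htc : t = c
    · rw [hsc, htc]
    · rw [hsc, hup t htc] at he; simp at he; exact absurd he.symm (hx t)
    · rw [htc, hup s hsc] at he; simp at he; exact absurd he (hx s)
    · rw [hup t htc, hup s hsc] at he; exact hf.1.1 he
  · intro t ht htr
    rw [Finset.mem_insert, Finset.mem_compl] at ht
    by_cases htc : t = c
    · subst htc
      rw [hup (par t) (fun e => (h.hT.adj t htr).ne e)]
      simpa using hadj
    · rw [hup t htc]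
      rw [hup (par t)]
      · exact hf.1.par h.hT t htr
      · intro e
        rcases ht with ht | ht
        · exact htc ht
        · exact ht (Dsc_of_par (by rw [e]; exact hcS))
  · intro t ht
    rw [Finset.mem_insert, Finset.mem_compl] at ht
    by_cases htc : t = c
    · subst htc; simp [hR]
    · rw [hup t htc]
      have : t ∉ S := ht.resolve_left htc
      simp only [hR, hE, Finset.mem_erase, Finset.mem_sdiff, Finset.mem_insert, Finset.mem_image,
        Finset.mem_compl]
      intro h'
      exact h'.2.2 (Or.inr ⟨t, this, rfl⟩)
  · intro t ht htP
    have h1 := hparQ t ht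
    have h2 : par t = c := by
      rw [Finset.mem_insert, Finset.mem_compl] at htP
      exact htP.resolve_right (fun h' => h' h1)
    rw [h2]
    simp only [Function.update_self]
    have h3 := h.hdeg x hxH hxL
    have h4 := nb_cover (G := G) (H := H) (R := R) (E := E) (x := x) (by
      intro w hw hxw
      by_cases hwE : w ∈ E
      · exact Or.inr hwE
      · left
        simp only [hR, Finset.mem_erase, Finset.mem_sdiff]
        exact ⟨hxw.ne.symm, hw, hwE⟩)
    omega
  · rintro - y hy
    obtain ⟨hyH, hyL⟩ := hRU y hy
    have h3 := h.hdeg y hyH hyL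
    have h4 := nb_cover (G := G) (H := H) (R := R) (E := insert x E) (x := y) (by
      intro w hw hxw
      by_cases hwE : w ∈ E
      · exact Or.inr (Finset.mem_insert_of_mem hwE)
      · by_cases hwx : w = x
        · right; simp [hwx]
        · left
          simp only [hR, Finset.mem_erase, Finset.mem_sdiff]
          exact ⟨hwx, hw, hwE⟩)
    have h5 := Finset.card_insert_le x E
    omega

end AC
end lemA


section lemA2
variable {W : Type*} [Fintype W] [DecidableEq W] {V : Type*} [DecidableEq V]

def TopN (L : Finset V) (par : W → W) (f : W → V) (q c : W) : Prop :=
  c ∈ Dsc par q ∧ f c ∉ L ∧ f (par c) ∈ L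

def PA (G : SimpleGraph V) (T : SimpleGraph W) (H L : Finset V) (par : W → W)
    (f : W → V) (q : W) (A : Finset W) : Prop :=
  (∀ a ∈ A, a ∈ Dsc par q ∧ f a ∈ L ∧ ∀ s ∈ Dsc par a, s ≠ a → f s ∉ L) ∧
  ∀ c, TopN L par f q c → par c ∈ A → ∃ f', Fam G T H L par f q f' ∧
    (∀ c', TopN L par f q c' → par c' ∉ A → f' c' = f c') ∧ ∀ t, f' t ≠ f c

namespace AC
variable {G : SimpleGraph V} {T : SimpleGraph W} {H L : Finset V} {r : W} {par : W → W}
    {dep : W → ℕ} {f f' : W → V} {q : W}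

lemma exists_maxA (h : AC G T H L r par dep f q) :
    ∃ A, PA G T H L par f q A ∧ ∀ a, a ∉ A → ¬ PA G T H L par f q (insert a A) := by
  classical
  obtain ⟨A, hA, hm⟩ := Finset.exists_max_image
    (Finset.univ.filter (fun A : Finset W => PA G T H L par f q A)) Finset.card
    ⟨∅, Finset.mem_filter.2 ⟨Finset.mem_univ _, by simp [PA]⟩⟩
  simp only [Finset.mem_filter, Finset.mem_univ, true_and] at hA hm
  refine ⟨A, hA, fun a ha hP => ?_⟩
  have := hm _ hP
  rw [Finset.card_insert_of_notMem ha] at this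
  omega

/-- the free set -/
noncomputable def Fr (H L : Finset V) (par : W → W) (f : W → V) (q : W) (A : Finset W) : Finset V := by
  classical exact H.filter (fun x => ∀ t, f t = x → t ∈ Dsc par q ∧ f t ∉ L ∧ (f (par t) ∈ L → par t ∈ A))

lemma mem_Fr {A : Finset W} {x : V} : x ∈ Fr H L par f q A ↔
    x ∈ H ∧ ∀ t, f t = x → t ∈ Dsc par q ∧ f t ∉ L ∧ (f (par t) ∈ L → par t ∈ A) := by
  classical simp [Fr]

lemma Fr_U (h : AC G T H L r par dep f q) {A : Finset W} {x : V} (hx : x ∈ Fr H L par f q A) :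
    x ∈ H ∧ x ∉ L := by
  rw [mem_Fr] at hx
  refine ⟨hx.1, fun hxL => ?_⟩
  obtain ⟨s, hs⟩ := h.hcov f h.hgood.1 h.hgood.2.1 _ hxL
  exact (hx.2 s hs).2.1 (hs ▸ hxL)

lemma top_sep (h : AC G T H L r par dep f q) {c c' : W} (hc : c ∈ Dsc par q) (hcL : f c ∉ L)
    (hc' : TopN L par f q c') (hne : c' ≠ c) : c' ∉ Dsc par c := by
  intro h'
  exact h.below hc hcL (Dsc_par h' hne) hc'.2.2

lemma miss (h : AC G T H L r par dep f q) {A : Finset W} (hA : PA G T H L par f q A) {x : V}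
    (hx : x ∈ Fr H L par f q A) : ∃ f', Fam G T H L par f q f' ∧
    (∀ c', TopN L par f q c' → par c' ∉ A → f' c' = f c') ∧ ∀ t, f' t ≠ x := by
  rw [mem_Fr] at hx
  by_cases hex : ∃ c, f c = x
  · obtain ⟨c, rfl⟩ := hex
    obtain ⟨h1, h2, h3⟩ := hx.2 c rfl
    by_cases hp : f (par c) ∈ L
    · exact hA.2 c ⟨h1, h2, hp⟩ (h3 hp)
    · obtain ⟨d, hdH, hd, hadj⟩ := U_free h.hdeg h.hgood.1 h.hgood.2.1 hp
      obtain ⟨f', k1, k2, k3⟩ := h.re h.fam h1 h2 hdH hd hadj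
      refine ⟨f', k1, ?_, k3⟩
      intro c' hc' hA'
      apply k2
      apply h.top_sep h1 h2 hc'
      rintro rfl
      exact hp hc'.2.2
  · push Not at hex
    exact ⟨f, h.fam, fun _ _ _ => rfl, hex⟩

lemma nonadj (h : AC G T H L r par dep f q) {A : Finset W} (hA : PA G T H L par f q A)
    (hmax : ∀ a, a ∉ A → ¬ PA G T H L par f q (insert a A)) {x : V}
    (hx : x ∈ Fr H L par f q A) {a : W} (ha : a ∈ Dsc par q) (haL : f a ∈ L) (haA : a ∉ A) :
    ¬ G.Adj (f a) x := by
  intro hadj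
  obtain ⟨f', k1, k2, k3⟩ := h.miss hA hx
  have hxH := (h.Fr_U hx).1
  have hfa : f' a = f a := k1.2.2.2 a haL
  by_cases hb : ∃ s ∈ Dsc par a, s ≠ a ∧ f s ∈ L
  · obtain ⟨s, hs, hsa, hsL⟩ := hb
    exact h.big k1 ha hs hsa hsL hxH k3 (by rw [hfa]; exact hadj)
  · push Not at hb
    apply hmax a haA
    refine ⟨?_, ?_⟩
    · intro b hb'
      rcases Finset.mem_insert.1 hb' with rfl | hb'
      · exact ⟨ha, haL, hb⟩
      · exact hA.1 b hb'
    · intro c hc hcA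
      rw [Finset.mem_insert] at hcA
      by_cases hcA' : par c ∈ A
      · obtain ⟨f'', l1, l2, l3⟩ := hA.2 c hc hcA'
        exact ⟨f'', l1, fun c' hc' hn => l2 c' hc' (fun h' => hn (Finset.mem_insert_of_mem h')), l3⟩
      · have hca := hcA.resolve_right hcA'
        have hfc := k2 c hc hcA'
        obtain ⟨f'', l1, l2, l3⟩ := h.re k1 hc.1 hc.2.1 hxH k3 (by rw [hca, hfa]; exact hadj)
        refine ⟨f'', l1, ?_, by rw [← hfc]; exact l3⟩
        intro c' hc' hn
        rw [l2, k2 c' hc' (fun h' => hn (Finset.mem_insert_of_mem h'))]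
        apply h.top_sep hc.1 hc.2.1 hc'
        rintro rfl
        exact hn (by rw [hca]; simp)

lemma count (h : AC G T H L r par dep f q) {A : Finset W} (hA : PA G T H L par f q A)
    (hmax : ∀ a, a ∉ A → ¬ PA G T H L par f q (insert a A)) {Q : Finset W}
    (hQ : ∀ t ∈ Q, t ∈ Dsc par q ∧ ∃ s, s ≠ r ∧ par s = t) {x : V}
    (hx : x ∈ Fr H L par f q A) : Q.card ≤ (nb G (Fr H L par f q A) x).card := by
  classical
  obtain ⟨hxH, hxL⟩ := h.Fr_U hx
  set S := Dsc par q with hS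
  set C := S.filter (fun c => TopN L par f q c ∧ par c ∉ A) with hC
  have hSm : S.card ≤ Fintype.card W := Finset.card_le_univ _
  have h1 := h.hdeg x hxH hxL
  have h2 := nb_cover (G := G) (H := H) (R := Fr H L par f q A) (E := (Sᶜ ∪ (A ∪ C)).image f) (x := x) (by
    intro w hw hxw
    by_cases hwF : w ∈ Fr H L par f q A
    · exact Or.inl hwF
    · right
      rw [mem_Fr] at hwF
      push Not at hwF
      obtain ⟨t, rfl, ht⟩ := hwF hw
      refine Finset.mem_image.2 ⟨t, ?_, rfl⟩
      simp only [Finset.mem_union, Finset.mem_compl, hC, Finset.mem_filter]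
      by_cases htS : t ∈ S
      · right
        by_cases htL : f t ∈ L
        · left
          by_contra htA
          exact h.nonadj hA hmax hx htS htL htA hxw.symm
        · right
          obtain ⟨k1, k2⟩ := ht htS htL
          exact ⟨htS, ⟨htS, htL, k1⟩, k2⟩
      · exact Or.inl htS)
  have h3 := Finset.card_image_le (s := Sᶜ ∪ (A ∪ C)) (f := f)
  have h4 := Finset.card_union_le Sᶜ (A ∪ C)
  rw [Finset.card_compl] at h4
  set Lf := S.filter (fun t => ∀ s, s ≠ r → par s ≠ t) with hLf
  have h5 : (A ∪ C).card ≤ Lf.card := by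
    have hl := fun t => h.hT.Dsc_leaf t
    choose l hl1 hl2 using hl
    have hES : ∀ e ∈ A ∪ C, e ∈ S := by
      intro e he
      rcases Finset.mem_union.1 he with he | he
      · exact (hA.1 e he).1
      · exact (Finset.mem_filter.1 he).1
    have hsep : ∀ e ∈ A ∪ C, ∀ e' ∈ A ∪ C, e ∈ Dsc par e' → e = e' := by
      intro e he e' he' hee
      by_contra hne
      rcases Finset.mem_union.1 he' with he'A | he'C
      · obtain ⟨k1, k2, k3⟩ := hA.1 e' he'A
        rcases Finset.mem_union.1 he with heA | heC
        · exact k3 e hee hne (hA.1 e heA).2.1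
        · obtain ⟨l1, l2, l3⟩ := Finset.mem_filter.1 heC
          by_cases hpe : par e = e'
          · exact l3 (hpe ▸ he'A)
          · exact k3 _ (Dsc_par hee hne) hpe l2.2.2
      · obtain ⟨k1, k2, k3⟩ := Finset.mem_filter.1 he'C
        rcases Finset.mem_union.1 he with heA | heC
        · exact h.below k1 k2.2.1 hee (hA.1 e heA).2.1
        · obtain ⟨l1, l2, l3⟩ := Finset.mem_filter.1 heC
          exact h.below k1 k2.2.1 (Dsc_par hee hne) l2.2.2
    apply Finset.card_le_card_of_injOn l
    · intro e he
      simp only [hLf, Finset.coe_filter, Set.mem_ofPred_eq]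
      exact ⟨Dsc_trans (hl1 e) (hES e he), hl2 e⟩
    · intro e he e' he' hee
      have k1 := hl1 e
      have k2 := hl1 e'
      rw [← hee] at k2
      rcases Dsc_comp k1 k2 with k | k
      · exact hsep e he e' he' k
      · exact (hsep e' he' e he k).symm
  have h6 : Q.card + Lf.card ≤ S.card := by
    rw [← Finset.card_union_of_disjoint]
    · apply Finset.card_le_card
      intro t ht
      rcases Finset.mem_union.1 ht with ht | ht
      · exact (hQ t ht).1
      · exact (Finset.mem_filter.1 ht).1
    · rw [Finset.disjoint_left]
      intro t ht ht'
      obtain ⟨s, hs, hst⟩ := (hQ t ht).2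
      exact (Finset.mem_filter.1 ht').2 s hs hst
  omega

end AC
end lemA2


section lemA3
variable {W : Type*} [Fintype W] [DecidableEq W] {V : Type*} [DecidableEq V]

lemma aux1 (a b c : Prop) : ((a ∨ ¬ b) ∨ (¬ a ∧ b) ∧ c) ∨ (¬ a ∧ b) ∧ ¬ c := by tauto
lemma aux2 {a b c : Prop} : ((a ∨ ¬ b) ∨ (¬ a ∧ b) ∧ c) → (¬ a ∧ b) ∧ ¬ c → False := by tauto

lemma AC.elimF {G : SimpleGraph V} {T : SimpleGraph W} {H L : Finset V} {r : W} {par : W → W}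
    {dep : W → ℕ} {f : W → V} {q : W} (h : AC G T H L r par dep f q) : False := by
  classical
  obtain ⟨A, hA, hmax⟩ := h.exists_maxA
  obtain ⟨hfe, hfH, hqr, ⟨d, hdH, hd, hqd⟩, -⟩ := h.hgood
  have hqL := h.qL
  set S := Dsc par q with hS
  have hqS : q ∈ S := Dsc_self
  set F := AC.Fr H L par f q A with hF
  have hdF : d ∈ F := AC.mem_Fr.2 ⟨hdH, fun t ht => absurd ht (hd t)⟩
  have hup : ∀ t, t ≠ q → Function.update f q d t = f t := fun t ht => Function.update_of_ne ht _ _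
  set Q1 := (S.erase q).filter (fun t => ∃ s, s ≠ r ∧ par s = t) with hQ1
  set Q2 := (S.erase q).filter (fun t => ¬ ∃ s, s ≠ r ∧ par s = t) with hQ2
  have m1 : ∀ t, t ∈ Q1 ↔ (t ≠ q ∧ t ∈ S) ∧ ∃ s, s ≠ r ∧ par s = t := fun t => by
    rw [hQ1, Finset.mem_filter, Finset.mem_erase]
  have m2 : ∀ t, t ∈ Q2 ↔ (t ≠ q ∧ t ∈ S) ∧ ¬ ∃ s, s ≠ r ∧ par s = t := fun t => by
    rw [hQ2, Finset.mem_filter, Finset.mem_erase]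
  have hrS : r ∉ S := fun h' => hqr (h.hT.Dsc_r h')
  have hnr : ∀ t ∈ S, t ≠ r := fun t ht e => hrS (e ▸ ht)
  have hparS : ∀ t, par t ∈ S → t ∈ S := fun t => Dsc_of_par
  have hSpar : ∀ t ∈ S, t ≠ q → par t ∈ S := fun t ht hne => Dsc_par ht hne
  have hcnt : ∀ x ∈ F, Q1.card ≤ (nb G F x).card := fun x hx => h.count hA hmax
    (fun t ht => ⟨((m1 t).1 ht).1.2, ((m1 t).1 ht).2⟩) hx
  have hpq : par q ∉ S := by
    intro hp
    have h1 := h.hT.Dsc_dep hp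
    have h2 := h.hT.dep_lt q hqr
    omega
  have herase : ∀ y, (nb G F y).card ≤ (nb G (F.erase d) y).card + 1 := by
    intro y
    have := nb_card_sdiff (G := G) F {d} y
    rwa [Finset.sdiff_singleton_eq_erase, Finset.card_singleton] at this
  have hdd : (nb G F d).card ≤ (nb G (F.erase d) d).card := by
    apply Finset.card_le_card
    intro w hw
    rw [mem_nb] at hw ⊢
    exact ⟨Finset.mem_erase.2 ⟨fun h => hw.2.ne h.symm, hw.1⟩, hw.2⟩
  set P0 := insert q Sᶜ with hP0
  have mP0 : ∀ t, t ∈ P0 ↔ t = q ∨ t ∉ S := fun t => by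
    rw [hP0, Finset.mem_insert, Finset.mem_compl]
  have key := ext_lemma h.hT G _ P0 Q1 (Function.update f q d) (F.erase d) rfl ?_ ?_ ?_ ?_ ?_ ?_ ?_ ?_ ?_
  · obtain ⟨g, g1, g2, g3, g4⟩ := key
    set P1 := P0 ∪ Q1 with hP1
    have mP1 : ∀ t, t ∈ P1 ↔ t ∈ P0 ∨ t ∈ Q1 := fun t => by rw [hP1, Finset.mem_union]
    have m12 : ∀ t, t ∈ P1 ∨ t ∈ Q2 := by
      intro t
      rw [mP1, mP0, m1, m2]
      exact aux1 _ _ _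
    have hdis : ∀ t ∈ Q2, t ∉ P1 := by
      intro t ht ht'
      rw [mP1, mP0, m1] at ht'
      rw [m2] at ht
      exact aux2 ht' ht
    have hcard : P1.card + Q2.card = Fintype.card W := by
      rw [← Finset.card_univ, ← Finset.card_union_of_disjoint]
      · congr 1
        ext t
        simp [m12 t]
      · rw [Finset.disjoint_left]
        exact fun t ht ht' => hdis t ht' ht
    set E := insert (f q) (P1.image g) with hE
    have hgq : g q = d := by rw [g1 q ((mP0 q).2 (Or.inl rfl))]; simp
    have hgo : ∀ t, t ∉ S → g t = f t := fun t ht => by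
      rw [g1 t ((mP0 t).2 (Or.inr ht)), hup]
      rintro rfl
      exact ht hqS
    have hgF : ∀ t ∈ P1, t ∈ S → g t ∈ F := by
      intro t ht htS
      rw [mP1, mP0] at ht
      rcases ht with (ht | ht) | ht
      · rw [ht, hgq]; exact hdF
      · exact absurd htS ht
      · exact Finset.mem_of_mem_erase (g4 t ht)
    have hparP1 : ∀ t ∈ Q2, par t ∈ S ∧ par t ∈ P1 := by
      intro t ht
      rw [m2] at ht
      have h1 := hSpar t ht.1.2 ht.1.1
      refine ⟨h1, ?_⟩
      rw [mP1, mP0, m1]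
      by_cases h2 : par t = q
      · exact Or.inl (Or.inl h2)
      · exact Or.inr ⟨⟨h2, h1⟩, t, hnr t ht.1.2, rfl⟩
    have key2 := ext_lemma h.hT G _ P1 Q2 g (H \ E) rfl ?_ ?_ hdis ?_ g2 g3 ?_ ?_ ?_
    · obtain ⟨g', k1, k2, k3, k4⟩ := key2
      have hun : ∀ t, t ∈ P1 ∪ Q2 := fun t => Finset.mem_union.2 (m12 t)
      have he : TEmb T G g' := h.hT.temb (fun a b hab => k2 a (hun a) b (hun b) hab)
        (fun t ht => k3 t (hun t) ht)
      obtain ⟨t, ht⟩ := h.hcov g' he (by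
        intro t
        rcases m12 t with ht | ht
        · rw [k1 t ht]
          by_cases hts : t ∈ S
          · exact (h.Fr_U (hgF t ht hts)).1
          · rw [hgo t hts]; exact hfH t
        · exact (Finset.mem_sdiff.1 (k4 t ht)).1) _ hqL
      rcases m12 t with ht' | ht'
      · rw [k1 t ht'] at ht
        by_cases hts : t ∈ S
        · have := (h.Fr_U (hgF t ht' hts)).2
          rw [ht] at this
          exact this hqL
        · rw [hgo t hts] at ht
          have := hfe.1 ht
          subst this
          exact hts hqS
      · have := (Finset.mem_sdiff.1 (k4 t ht')).2
        rw [ht] at this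
        simp [hE] at this
    · rw [mP1, mP0]; exact Or.inl (Or.inr hrS)
    · intro t ht
      rw [mP1, mP0, m1] at ht
      rw [mP1, mP0, m1]
      by_cases hp : par t ∈ S
      · have hts := hparS t hp
        by_cases hpq' : par t = q
        · exact Or.inl (Or.inl hpq')
        · exact Or.inr ⟨⟨hpq', hp⟩, t, hnr t hts, rfl⟩
      · exact Or.inl (Or.inr hp)
    · intro t ht
      exact Finset.mem_union_left _ (hparP1 t ht).2
    · intro t ht ht'
      rw [Finset.mem_sdiff] at ht'
      exact ht'.2 (Finset.mem_insert_of_mem (Finset.mem_image_of_mem g ht))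
    · intro t ht htP
      obtain ⟨hyH, hyL⟩ := h.Fr_U (hgF _ htP (hparP1 t ht).1)
      have h3 := h.hdeg _ hyH hyL
      have h4 := nb_cover (G := G) (H := H) (R := H \ E) (E := insert (f q) ((P1.erase (par t)).image g))
        (x := g (par t)) (by
          intro w hw hxw
          by_cases hwE : w ∈ E
          · right
            rw [hE, Finset.mem_insert, Finset.mem_image] at hwE
            rw [Finset.mem_insert, Finset.mem_image]
            rcases hwE with hwE | ⟨s, hs, rfl⟩
            · exact Or.inl hwE
            · refine Or.inr ⟨s, Finset.mem_erase.2 ⟨?_, hs⟩, rfl⟩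
              rintro rfl
              exact hxw.ne rfl
          · exact Or.inl (Finset.mem_sdiff.2 ⟨hw, hwE⟩))
      have h5 := Finset.card_insert_le (f q) ((P1.erase (par t)).image g)
      have h6 := Finset.card_image_le (s := P1.erase (par t)) (f := g)
      have h7 := Finset.card_erase_add_one htP
      omega
    · rintro ⟨t, ht, ht'⟩
      exact absurd (hparP1 t ht).2 (hdis _ ht')
  · exact (mP0 r).2 (Or.inr hrS)
  · intro t ht
    rw [mP0] at ht ⊢
    right
    rcases ht with rfl | ht
    · exact hpq
    · exact fun h' => ht (hparS t h')
  · intro t ht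
    rw [m1] at ht
    rw [mP0]
    exact fun h' => h'.elim ht.1.1 (fun h2 => h2 ht.1.2)
  · intro t ht
    rw [m1] at ht
    rw [Finset.mem_union, mP0, m1]
    have h1 := hSpar t ht.1.2 ht.1.1
    by_cases h2 : par t = q
    · exact Or.inl (Or.inl h2)
    · exact Or.inr ⟨⟨h2, h1⟩, t, hnr t ht.1.2, rfl⟩
  · intro s hs t ht he
    by_cases hsc : s = q <;> by_cases htc : t = q
    · rw [hsc, htc]
    · rw [hsc, hup t htc] at he; simp at he; exact absurd he.symm (hd t)
    · rw [htc, hup s hsc] at he; simp at he; exact absurd he (hd s)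
    · rw [hup t htc, hup s hsc] at he; exact hfe.1 he
  · intro t ht htr
    rw [mP0] at ht
    by_cases htc : t = q
    · subst htc
      rw [hup (par t) (fun e => (h.hT.adj t htr).ne e)]
      simpa using hqd
    · rw [hup t htc]
      rw [hup (par t)]
      · exact hfe.par h.hT t htr
      · intro e
        rcases ht with ht | ht
        · exact htc ht
        · exact ht (hparS t (by rw [e]; exact hqS))
  · intro t ht
    rw [mP0] at ht
    by_cases htc : t = q
    · subst htc; simp
    · rw [hup t htc]
      have : t ∉ S := ht.resolve_left htc
      intro h'
      have := (AC.mem_Fr.1 (Finset.mem_of_mem_erase h')).2 t rfl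
      exact absurd this.1 ‹t ∉ S›
  · intro t ht htP
    rw [m1] at ht
    have h1 := hSpar t ht.1.2 ht.1.1
    have h2 : par t = q := by
      rw [mP0] at htP
      exact htP.resolve_right (fun h' => h' h1)
    rw [h2]
    simp only [Function.update_self]
    exact (hcnt d hdF).trans hdd
  · rintro - x hx
    have := hcnt x (Finset.mem_of_mem_erase hx)
    have := herase x
    omega

theorem lemmaA {G : SimpleGraph V} {T : SimpleGraph W} (hT : T.IsTree) {H L : Finset V}
    (hLH : L ⊆ H) (hL : L.Nonempty) (hc : Fintype.card W + 1 ≤ H.card)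
    (hdeg : ∀ v ∈ H, v ∉ L → Fintype.card W ≤ (nb G H v).card)
    {f0 : W → V} (hf0 : TEmb T G f0) (hH0 : ∀ t, f0 t ∈ H) :
    ∃ u ∈ L, ∃ f, TEmb T G f ∧ ∀ t, f t ∈ H ∧ f t ≠ u := by
  classical
  by_contra hcon
  have hcov : ∀ f', TEmb T G f' → (∀ t, f' t ∈ H) → ∀ u ∈ L, ∃ t, f' t = u := by
    intro f' h1 h2 u hu
    by_contra h3
    push Not at h3
    exact hcon ⟨u, hu, f', h1, fun t => ⟨h2 t, h3 t⟩⟩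
  set D := H \ Finset.univ.image f0 with hD
  have mD : ∀ x, x ∈ D ↔ x ∈ H ∧ ∀ t, f0 t ≠ x := by
    intro x
    simp [hD]
  have hDne : D.Nonempty := by
    rw [← Finset.card_pos]
    have h1 : _ ≤ D.card := Finset.le_card_sdiff (Finset.univ.image f0) H
    have h2 := Finset.card_image_le (s := Finset.univ) (f := f0)
    rw [Finset.card_univ] at h2
    omega
  have hDL : ∀ x ∈ D, x ∉ L := by
    intro x hx hxL
    obtain ⟨t, ht⟩ := hcov f0 hf0 hH0 x hxL
    exact ((mD x).1 hx).2 t ht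
  have nogreedy : ¬ ∀ x ∈ D, Fintype.card W ≤ (nb G D x).card + 1 := by
    intro h
    obtain ⟨f, k1, k2⟩ := greedy hT G D hDne h
    obtain ⟨u, hu⟩ := hL
    obtain ⟨t, ht⟩ := hcov f k1 (fun t => ((mD _).1 (k2 t)).1) u hu
    exact hDL _ (k2 t) (ht ▸ hu)
  have main : ∀ a t d, a ≠ t → f0 t ∈ L → d ∈ D → G.Adj (f0 a) d → False := by
    intro a t d hat htL hdD had
    obtain ⟨par, dep, hro⟩ := exists_rooted T hT a
    obtain ⟨c, hc1, hc2, hc3⟩ := hro.Dsc_child (hro.Dsc_root t) hat.symm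
    have hg : Good G T H L a par f0 c :=
      ⟨hf0, hH0, hc1, ⟨d, ((mD d).1 hdD).1, ((mD d).1 hdD).2, by rw [hc2]; exact had⟩, t, hc3, htL⟩
    have hex : ∃ n, ∃ f q, Good G T H L a par f q ∧ (Dsc par q).card = n := ⟨_, f0, c, hg, rfl⟩
    obtain ⟨f, q, hfq, hn⟩ := Nat.find_spec hex
    exact AC.elimF (f := f) (q := q) ⟨hro, hcov, hdeg, hfq, fun f' q' h' => by
      rw [hn]; exact Nat.find_min' hex ⟨f', q', h', rfl⟩⟩
  apply nogreedy
  intro x hx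
  by_contra hlt
  have hx' := (mD x).1 hx
  have h1 := hdeg x hx'.1 (hDL x hx)
  have h2 : ∃ a, G.Adj (f0 a) x := by
    by_contra hno
    push Not at hno
    have h3 := nb_cover (G := G) (H := H) (R := D) (E := ∅) (x := x) (by
      intro w hw hxw
      left
      rw [mD]
      refine ⟨hw, fun t ht => ?_⟩
      subst ht
      exact hno t hxw.symm)
    simp at h3
    omega
  obtain ⟨a, ha⟩ := h2
  obtain ⟨u, hu⟩ := hL
  obtain ⟨t, ht⟩ := hcov f0 hf0 hH0 u hu
  by_cases hat : a = t
  · have hcard : 1 < Fintype.card W := by omega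
    obtain ⟨b, hb⟩ := Fintype.exists_ne_of_one_lt_card hcard a
    by_cases hbL : f0 b ∈ L
    · exact main a b x hb.symm hbL hx ha
    · obtain ⟨d, k1, k2, k3⟩ := U_free hdeg hf0 hH0 hbL
      exact main b t d (hat ▸ hb) (ht ▸ hu) ((mD d).2 ⟨k1, k2⟩) k3
  · exact main a t x hat (ht ▸ hu) hx ha
end lemA3


section claimI
variable {V : Type*} [DecidableEq V]

noncomputable def comp (G : SimpleGraph V) (B : Finset V) (a : V) : Finset V := by
  classical exact B.filter (fun v => Cn G B a v)

lemma mem_comp {G : SimpleGraph V} {B : Finset V} {a v : V} : v ∈ comp G B a ↔ Cn G B a v := by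
  classical
  simp only [comp, Finset.mem_filter, and_iff_right_iff_imp]
  exact fun h => h.right

lemma comp_sub {G : SimpleGraph V} {B : Finset V} {a : V} : comp G B a ⊆ B :=
  fun _ hv => (mem_comp.1 hv).right

lemma comp_step {G : SimpleGraph V} {B : Finset V} {a u v : V} (hu : u ∈ comp G B a) (hv : v ∈ B)
    (h : G.Adj u v) : v ∈ comp G B a := by
  rw [mem_comp] at *
  exact hu.trans (Cn.adj h hu.right hv)

def Insep (G : SimpleGraph V) (B C : Finset V) : Prop :=
  ∀ X : Finset V, X.card ≤ 2 → ∀ c ∈ C, c ∉ X → ∀ c' ∈ C, c' ∉ X → Cn G (B \ X) c c'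

def HasCore (G : SimpleGraph V) (B : Finset V) : Prop :=
  ∃ C, C ⊆ B ∧ 4 ≤ C.card ∧ Insep G B C

lemma nb_notself {G : SimpleGraph V} {B : Finset V} {v : V} (hv : v ∈ B) :
    (nb G B v).card + 1 ≤ B.card := by
  rw [← Finset.card_erase_add_one hv]
  apply Nat.succ_le_succ
  apply Finset.card_le_card
  intro w hw
  rw [mem_nb] at hw
  exact Finset.mem_erase.2 ⟨hw.2.ne.symm, hw.1⟩

lemma nb_card_le {G : SimpleGraph V} {B B' : Finset V} {v : V}
    (h : ∀ w ∈ B, G.Adj v w → w ∈ B') : (nb G B v).card ≤ (nb G B' v).card := by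
  apply Finset.card_le_card
  intro w hw
  rw [mem_nb] at *
  exact ⟨h w hw.1 hw.2, hw.2⟩

theorem claimI (G : SimpleGraph V) (Bg : Finset V) : ∀ (n : ℕ) (Y : Finset V) (x y : V),
    Y.card ≤ n → Y ⊆ Bg → Y.Nonempty → x ≠ y → x ∈ Bg → y ∈ Bg → x ∉ Y → y ∉ Y →
    Cn G (Bg \ Y) x y → (∀ v ∈ Y, 3 ≤ (nb G (insert x (insert y Y)) v).card) → HasCore G Bg := by
  intro n
  induction n with
  | zero =>
    intro Y x y hY _ hne
    rw [← Finset.card_pos] at hne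
    omega
  | succ n ih =>
    intro Y x y hYn hYB hYne hxy hxB hyB hxY hyY hlink hdeg
    have one : ∀ (A : Finset V) (a : V), A ⊆ Bg → A.card ≤ n + 1 → A.Nonempty → a ∈ Bg → a ∉ A →
        (∀ v ∈ A, 3 ≤ (nb G (insert a A) v).card) → HasCore G Bg := by
      intro A a hAB hAn hAne haB haA hd
      by_cases hb : ∃ b ∈ A, G.Adj a b
      · obtain ⟨b, hbA, hab⟩ := hb
        have hins : insert b (A.erase b) = A := Finset.insert_erase hbA
        have hc := Finset.card_erase_add_one hbA
        have h1 := hd b hbA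
        have h2 := nb_notself (G := G) (Finset.mem_insert_of_mem hbA : b ∈ insert a A)
        have h3 := Finset.card_insert_of_notMem haA
        refine ih (A.erase b) a b (by omega) ((Finset.erase_subset _ _).trans hAB)
          (Finset.card_pos.1 (by omega)) hab.ne haB (hAB hbA)
          (fun h => haA (Finset.mem_of_mem_erase h)) (by simp) ?_ ?_
        · apply Cn.adj hab
          · simp [haB, haA]
          · simp [hAB hbA]
        · rw [hins]
          exact fun v hv => hd v (Finset.mem_of_mem_erase hv)
      · push Not at hb
        have hd' : ∀ v ∈ A, 3 ≤ (nb G A v).card := by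
          intro v hv
          refine (hd v hv).trans (nb_card_le ?_)
          intro w hw hvw
          rcases Finset.mem_insert.1 hw with rfl | hw
          · exact absurd hvw.symm (hb v hv)
          · exact hw
        obtain ⟨v, hv⟩ := hAne
        have h1 := hd' v hv
        obtain ⟨b, hb'⟩ := Finset.card_pos.1 (show 0 < (nb G A v).card by omega)
        rw [mem_nb] at hb'
        have hbv : b ∈ A.erase v := Finset.mem_erase.2 ⟨hb'.2.ne.symm, hb'.1⟩
        have hins : insert v (insert b ((A.erase v).erase b)) = A := by
          rw [Finset.insert_erase hbv, Finset.insert_erase hv]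
        have hc := Finset.card_erase_add_one hv
        have hc2 := Finset.card_erase_add_one hbv
        have h2 := nb_notself (G := G) hv
        have hsub : (A.erase v).erase b ⊆ A :=
          (Finset.erase_subset _ _).trans (Finset.erase_subset _ _)
        refine ih ((A.erase v).erase b) v b (by omega) (hsub.trans hAB)
          (Finset.card_pos.1 (by omega)) hb'.2.ne (hAB hv) (hAB hb'.1) (by simp) (by simp) ?_ ?_
        · apply Cn.adj hb'.2
          · simp [hAB hv]
          · simp [hAB hb'.1]
        · rw [hins]
          exact fun w hw => hd' w (hsub hw)
    set Om := insert x (insert y Y) with hOm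
    have mOm : ∀ w, w ∈ Om ↔ w = x ∨ w = y ∨ w ∈ Y := fun w => by simp [hOm]
    have hOmB : Om ⊆ Bg := by
      intro w hw
      rcases (mOm w).1 hw with rfl | rfl | h
      · exact hxB
      · exact hyB
      · exact hYB h
    have two' : ∀ (A : Finset V) (a b : V), A ⊆ Y → a ∈ Om → b ∈ Om → a ∉ A → b ∉ A →
        (∀ v ∈ A, ∀ w ∈ Om, G.Adj v w → w ∈ A ∨ w = a ∨ w = b) → A.Nonempty →
        ¬ Cn G (Bg \ A) a b → ¬ Cn G (Bg \ A) b x → HasCore G Bg := by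
      intro A a b hAY ha hb haA hbA hN hAne hnc hnx
      have hny : ¬ Cn G (Bg \ A) b y := fun h =>
        hnx (h.trans (hlink.mono (Finset.sdiff_subset_sdiff (Finset.Subset.refl _) hAY)).symm)
      set A2 := A ∪ (comp G (Bg \ A) b ∩ Om) with hA2
      have hA2Y : A2 ⊆ Y := by
        intro w hw
        rw [hA2, Finset.mem_union, Finset.mem_inter, mem_comp] at hw
        rcases hw with hw | ⟨hw1, hw2⟩
        · exact hAY hw
        · rcases (mOm w).1 hw2 with rfl | rfl | h
          · exact absurd hw1 hnx
          · exact absurd hw1 hny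
          · exact h
      refine one A2 a (hA2Y.trans hYB) ((Finset.card_le_card hA2Y).trans hYn)
        (hAne.mono Finset.subset_union_left) (hOmB ha) ?_ ?_
      · rw [hA2, Finset.mem_union, Finset.mem_inter, mem_comp]
        rintro (h | h)
        · exact haA h
        · exact hnc h.1.symm
      · intro v hv
        refine (hdeg v (hA2Y hv)).trans (nb_card_le ?_)
        intro w hw hvw
        rw [Finset.mem_insert, hA2, Finset.mem_union, Finset.mem_inter]
        rw [hA2, Finset.mem_union, Finset.mem_inter] at hv
        by_cases hwA : w ∈ A
        · exact Or.inr (Or.inl hwA)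
        · rcases hv with hv | hv
          · rcases hN v hv w hw hvw with h | h | h
            · exact absurd h hwA
            · exact Or.inl h
            · subst h
              exact Or.inr (Or.inr ⟨mem_comp.2 (Cn.refl (Finset.mem_sdiff.2 ⟨hOmB hw, hwA⟩)), hw⟩)
          · exact Or.inr (Or.inr ⟨comp_step hv.1 (Finset.mem_sdiff.2 ⟨hOmB hw, hwA⟩) hvw, hw⟩)
    have handle : ∀ (A Z : Finset V), A ⊆ Y → A.Nonempty → Z ⊆ Om → (∀ z ∈ Z, z ∉ A) →
        Z.card ≤ 2 → (Z.card = 2 → A ≠ Y) →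
        (∀ v ∈ A, ∀ w ∈ Om, G.Adj v w → w ∈ A ∨ w ∈ Z) → HasCore G Bg := by
      intro A Z hAY hAne hZO hZA hZ hZ2 hN
      have hAn := (Finset.card_le_card hAY).trans hYn
      rcases (show Z.card = 0 ∨ Z.card = 1 ∨ Z.card = 2 by omega) with h | h | h
      · rw [Finset.card_eq_zero] at h
        subst h
        refine one A x (hAY.trans hYB) hAn hAne hxB (fun h => hxY (hAY h)) ?_
        intro v hv
        refine (hdeg v (hAY hv)).trans (nb_card_le ?_)
        intro w hw hvw
        rcases hN v hv w hw hvw with h | h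
        · exact Finset.mem_insert_of_mem h
        · simp at h
      · obtain ⟨a, rfl⟩ := Finset.card_eq_one.1 h
        refine one A a (hAY.trans hYB) hAn hAne (hOmB (hZO (by simp))) (hZA a (by simp)) ?_
        intro v hv
        refine (hdeg v (hAY hv)).trans (nb_card_le ?_)
        intro w hw hvw
        rcases hN v hv w hw hvw with h | h
        · exact Finset.mem_insert_of_mem h
        · simp at h; simp [h]
      · obtain ⟨a, b, hab, rfl⟩ := Finset.card_eq_two.1 h
        have hAlt : A.card < Y.card := Finset.card_lt_card (hAY.ssubset_of_ne (hZ2 h))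
        have haO : a ∈ Om := hZO (by simp)
        have hbO : b ∈ Om := hZO (by simp)
        have haA : a ∉ A := hZA a (by simp)
        have hbA : b ∉ A := hZA b (by simp)
        have hN' : ∀ v ∈ A, ∀ w ∈ Om, G.Adj v w → w ∈ A ∨ w = a ∨ w = b := by
          intro v hv w hw hvw
          simpa using hN v hv w hw hvw
        by_cases hcn : Cn G (Bg \ A) a b
        · refine ih A a b (by omega) (hAY.trans hYB) hAne hab (hOmB haO) (hOmB hbO) haA hbA hcn ?_
          intro v hv
          refine (hdeg v (hAY hv)).trans (nb_card_le ?_)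
          intro w hw hvw
          have := hN' v hv w hw hvw
          rcases this with h | h | h <;> simp [h]
        · by_cases hbx : Cn G (Bg \ A) b x
          · refine two' A b a hAY hbO haO hbA haA ?_ hAne (fun h => hcn h.symm) ?_
            · intro v hv w hw hvw
              exact (hN' v hv w hw hvw).imp_right Or.symm
            · exact fun h => hcn (h.trans hbx.symm)
          · exact two' A a b hAY haO hbO haA hbA hN' hAne hcn hbx
    have hOm4 : 4 ≤ Om.card := by
      obtain ⟨v, hv⟩ := hYne
      have := hdeg v hv
      have := nb_notself (G := G) ((mOm v).2 (Or.inr (Or.inr hv)))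
      omega
    have hOmc : Om.card = Y.card + 2 := by
      rw [hOm, Finset.card_insert_of_notMem, Finset.card_insert_of_notMem hyY]
      simp [hxy, hxY]
    by_cases hins : Insep G Bg Om
    · exact ⟨Om, hOmB, hOm4, hins⟩
    unfold Insep at hins
    push Not at hins
    obtain ⟨X, hX, c, hc, hcX, c', hc', hcX', hncn⟩ := hins
    have hKsub : ∀ v, comp G (Om \ X) v ⊆ Om := fun v => comp_sub.trans Finset.sdiff_subset
    have hKX : ∀ v, ∀ w ∈ comp G (Om \ X) v, w ∉ X := fun v w hw =>
      (Finset.mem_sdiff.1 (comp_sub hw)).2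
    have hKN : ∀ v, ∀ u ∈ comp G (Om \ X) v, ∀ w ∈ Om, G.Adj u w →
        w ∈ comp G (Om \ X) v ∨ w ∈ X ∩ Om := by
      intro v u hu w hw huw
      by_cases hwX : w ∈ X
      · exact Or.inr (Finset.mem_inter.2 ⟨hwX, hw⟩)
      · exact Or.inl (comp_step hu (Finset.mem_sdiff.2 ⟨hw, hwX⟩) huw)
    have hKB : ∀ v w, w ∈ comp G (Om \ X) v → Cn G (Bg \ X) v w := fun v w hw =>
      (mem_comp.1 hw).mono (Finset.sdiff_subset_sdiff hOmB (Finset.Subset.refl _))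
    have hself : ∀ v ∈ Om, v ∉ X → v ∈ comp G (Om \ X) v := fun v hv hvX =>
      mem_comp.2 (Cn.refl (Finset.mem_sdiff.2 ⟨hv, hvX⟩))
    have caseA : ∀ c ∈ Om, c ∉ X → ∀ c' ∈ Om, c' ∉ X → ¬ Cn G (Bg \ X) c c' →
        x ∉ comp G (Om \ X) c → y ∉ comp G (Om \ X) c → HasCore G Bg := by
      intro c hc hcX c' hc' hcX' hncn hxK hyK
      have hKY : comp G (Om \ X) c ⊆ Y := by
        intro w hw
        rcases (mOm w).1 (hKsub c hw) with rfl | rfl | h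
        · exact absurd hw hxK
        · exact absurd hw hyK
        · exact h
      refine handle (comp G (Om \ X) c) (X ∩ Om) hKY ⟨c, hself c hc hcX⟩ Finset.inter_subset_right
        (fun z hz hz' => hKX c z hz' (Finset.mem_inter.1 hz).1)
        ((Finset.card_le_card Finset.inter_subset_left).trans hX) ?_ (hKN c)
      intro h2 hKe
      have hZsub : X ∩ Om ⊆ ({x, y} : Finset V) := by
        intro z hz
        have hzX := (Finset.mem_inter.1 hz).1
        rcases (mOm z).1 (Finset.mem_inter.1 hz).2 with h | h | h
        · simp [h]
        · simp [h]
        · rw [← hKe] at h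
          exact absurd hzX (hKX c z h)
      have hZe : X ∩ Om = ({x, y} : Finset V) := Finset.eq_of_subset_of_card_le hZsub (by
        rw [h2]; exact Finset.card_le_two)
      rcases (mOm c').1 hc' with h | h | h
      · exact hcX' (Finset.mem_inter.1 (show c' ∈ X ∩ Om by rw [hZe]; simp [h])).1
      · exact hcX' (Finset.mem_inter.1 (show c' ∈ X ∩ Om by rw [hZe]; simp [h])).1
      · rw [← hKe] at h
        exact hncn (hKB c c' h)
    by_cases h1 : x ∉ comp G (Om \ X) c ∧ y ∉ comp G (Om \ X) c
    · exact caseA c hc hcX c' hc' hcX' hncn h1.1 h1.2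
    by_cases h2 : x ∉ comp G (Om \ X) c' ∧ y ∉ comp G (Om \ X) c'
    · exact caseA c' hc' hcX' c hc hcX (fun h => hncn h.symm) h2.1 h2.2
    have h3 : x ∉ X ∧ y ∉ X ∧ ¬ Cn G (Bg \ X) x y := by
      by_cases hxc : x ∈ comp G (Om \ X) c
      · have hxc' : x ∉ comp G (Om \ X) c' := fun h => hncn ((hKB _ _ hxc).trans (hKB _ _ h).symm)
        have hyc' : y ∈ comp G (Om \ X) c' := by
          by_contra h
          exact h2 ⟨hxc', h⟩
        exact ⟨hKX _ _ hxc, hKX _ _ hyc', fun h =>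
          hncn (((hKB _ _ hxc).trans h).trans (hKB _ _ hyc').symm)⟩
      · have hyc : y ∈ comp G (Om \ X) c := by
          by_contra h
          exact h1 ⟨hxc, h⟩
        have hyc' : y ∉ comp G (Om \ X) c' := fun h => hncn ((hKB _ _ hyc).trans (hKB _ _ h).symm)
        have hxc' : x ∈ comp G (Om \ X) c' := by
          by_contra h
          exact h2 ⟨h, hyc'⟩
        exact ⟨hKX _ _ hxc', hKX _ _ hyc, fun h =>
          hncn (((hKB _ _ hyc).trans h.symm).trans (hKB _ _ hxc').symm)⟩
    obtain ⟨hxX, hyX, hnxy⟩ := h3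
    have hZ1 : (X ∩ Om).card ≤ 1 := by
      have : ∃ e ∈ X, e ∉ Om := by
        by_contra hno
        push Not at hno
        apply hnxy
        apply hlink.mono
        intro w hw
        rw [Finset.mem_sdiff] at hw ⊢
        refine ⟨hw.1, fun hwX => ?_⟩
        rcases (mOm w).1 (hno w hwX) with h | h | h
        · exact hxX (h ▸ hwX)
        · exact hyX (h ▸ hwX)
        · exact hw.2 h
      obtain ⟨e, he, heO⟩ := this
      have : X ∩ Om ⊆ X.erase e := by
        intro w hw
        rw [Finset.mem_inter] at hw
        refine Finset.mem_erase.2 ⟨?_, hw.1⟩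
        rintro rfl
        exact heO hw.2
      have h5 := Finset.card_le_card this
      have h6 := Finset.card_erase_add_one he
      omega
    have hZY : X ∩ Om ⊆ Y := by
      intro w hw
      rw [Finset.mem_inter] at hw
      rcases (mOm w).1 hw.2 with h | h | h
      · exact absurd (h ▸ hw.1) hxX
      · exact absurd (h ▸ hw.1) hyX
      · exact h
    obtain ⟨v, hvY, hvX⟩ : ∃ v ∈ Y, v ∉ X := by
      by_contra hno
      push Not at hno
      have : Y ⊆ X ∩ Om := fun v hv => Finset.mem_inter.2 ⟨hno v hv, (mOm v).2 (Or.inr (Or.inr hv))⟩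
      have := Finset.card_le_card this
      omega
    have hvO := (mOm v).2 (Or.inr (Or.inr hvY))
    have caseB : ∀ e e', e ∉ Y → (∀ w, w ∈ Om ↔ w = e ∨ w = e' ∨ w ∈ Y) →
        e ∈ comp G (Om \ X) v → e' ∉ comp G (Om \ X) v → HasCore G Bg := by
      intro e e' heY hm he he'
      have hAY : (comp G (Om \ X) v).erase e ⊆ Y := by
        intro w hw
        rw [Finset.mem_erase] at hw
        rcases (hm w).1 (hKsub v hw.2) with h | h | h
        · exact absurd h hw.1
        · exact absurd (h ▸ hw.2) he'
        · exact h
      refine handle ((comp G (Om \ X) v).erase e) (insert e (X ∩ Om)) hAY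
        ⟨v, Finset.mem_erase.2 ⟨fun h => heY (h ▸ hvY), hself v hvO hvX⟩⟩ ?_ ?_ ?_ ?_ ?_
      · intro w hw
        rcases Finset.mem_insert.1 hw with rfl | hw
        · exact (hm w).2 (Or.inl rfl)
        · exact (Finset.mem_inter.1 hw).2
      · intro z hz hz'
        rw [Finset.mem_erase] at hz'
        rcases Finset.mem_insert.1 hz with h | hz
        · exact hz'.1 h
        · exact hKX v z hz'.2 (Finset.mem_inter.1 hz).1
      · have := Finset.card_insert_le e (X ∩ Om)
        omega
      · intro hc2 hAe
        have := Finset.card_insert_le e (X ∩ Om)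
        obtain ⟨a, ha⟩ := Finset.card_pos.1 (show 0 < (X ∩ Om).card by omega)
        have haY := hZY ha
        rw [← hAe, Finset.mem_erase] at haY
        exact hKX v a haY.2 (Finset.mem_inter.1 ha).1
      · intro u hu w hw huw
        rw [Finset.mem_erase] at hu
        rw [Finset.mem_erase, Finset.mem_insert]
        by_cases hwe : w = e
        · exact Or.inr (Or.inl hwe)
        · rcases hKN v u hu.2 w hw huw with h | h
          · exact Or.inl ⟨hwe, h⟩
          · exact Or.inr (Or.inr h)
    by_cases hxv : x ∈ comp G (Om \ X) v
    · exact caseB x y hxY mOm hxv (fun h => hnxy ((hKB _ _ hxv).symm.trans (hKB _ _ h)))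
    by_cases hyv : y ∈ comp G (Om \ X) v
    · exact caseB y x hyY (fun w => (mOm w).trans or_left_comm) hyv hxv
    have hKY : comp G (Om \ X) v ⊆ Y := by
      intro w hw
      rcases (mOm w).1 (hKsub v hw) with rfl | rfl | h
      · exact absurd hw hxv
      · exact absurd hw hyv
      · exact h
    exact handle (comp G (Om \ X) v) (X ∩ Om) hKY ⟨v, hself v hvO hvX⟩ Finset.inter_subset_right
        (fun z hz hz' => hKX v z hz' (Finset.mem_inter.1 hz).1)
        (by omega) (by omega) (hKN v)

theorem exists_core (G : SimpleGraph V) (B : Finset V) (hne : B.Nonempty)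
    (h : ∀ v ∈ B, 3 ≤ (nb G B v).card) : HasCore G B := by
  obtain ⟨x, hx⟩ := hne
  have h1 := h x hx
  obtain ⟨y, hy⟩ := Finset.card_pos.1 (show 0 < (nb G B x).card by omega)
  rw [mem_nb] at hy
  have hyx : y ∈ B.erase x := Finset.mem_erase.2 ⟨hy.2.ne.symm, hy.1⟩
  have hins : insert x (insert y ((B.erase x).erase y)) = B := by
    rw [Finset.insert_erase hyx, Finset.insert_erase hx]
  have hsub : (B.erase x).erase y ⊆ B :=
    (Finset.erase_subset _ _).trans (Finset.erase_subset _ _)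
  have hc := Finset.card_erase_add_one hx
  have hc2 := Finset.card_erase_add_one hyx
  have h2 := nb_notself (G := G) hx
  refine claimI G B _ ((B.erase x).erase y) x y le_rfl hsub (Finset.card_pos.1 (by omega))
    hy.2.ne hx hy.1 (by simp) (by simp) ?_ ?_
  · apply Cn.adj hy.2
    · simp [hx]
    · simp [hy.1]
  · rw [hins]
    exact fun v hv => h v (hsub hv)
end claimI


section core2
variable {V : Type*} [DecidableEq V] {G : SimpleGraph V}

lemma Cn.hit {Y P : Finset V} {a b : V} (h : Cn G Y a b) (hb : b ∈ P) :
    ∃ z ∈ P, Cn G (insert z (Y \ P)) a z := by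
  obtain ⟨w, hw⟩ := h
  induction w with
  | nil => exact ⟨_, hb, Cn.refl (by simp)⟩
  | cons hadj p ih =>
    rename_i u v w'
    by_cases hu : u ∈ P
    · exact ⟨u, hu, Cn.refl (by simp)⟩
    · obtain ⟨z, hz, hc⟩ := ih hb (fun x hx => hw x (by simp [hx]))
      have huY : u ∈ Y := hw u (by simp)
      exact ⟨z, hz, (Cn.adj hadj (by simp [hu, huY]) hc.left).trans hc⟩

lemma Cn.exit {Y : Finset V} {s c : V} (h : Cn G (insert c Y) s c) (hs : s ∈ Y) (hc : c ∉ Y) :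
    ∃ y ∈ Y, G.Adj y c ∧ Cn G Y s y := by
  have := Cn.prop (I := fun v => Cn G Y s v ∨ ∃ y ∈ Y, G.Adj y c ∧ Cn G Y s y) h
    (Or.inl (Cn.refl hs)) (by
      intro u v hu hv huv hI
      rcases hI with hI | hI
      · rcases Finset.mem_insert.1 hv with rfl | hv
        · exact Or.inr ⟨u, hI.right, huv, hI⟩
        · exact Or.inl (hI.trans (Cn.adj huv hI.right hv))
      · exact Or.inr hI)
  rcases this with h | h
  · exact absurd h.right hc
  · exact h

lemma legs {c1 c2 c3 z : V} {Y M1 M2 M3 : Finset V} (h12 : Disjoint M1 M2) (h13 : Disjoint M1 M3)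
    (h23 : Disjoint M2 M3) (hz1 : z ∉ M1) (hz2 : z ∉ M2) (hz3 : z ∉ M3) (hzY : z ∈ Y)
    (s1 : M1 ⊆ insert c1 Y) (s2 : M2 ⊆ insert c2 Y) (s3 : M3 ⊆ insert c3 Y)
    (k1 : Cn G (insert z M1) z c1) (k2 : Cn G (insert z M2) z c2) (k3 : Cn G (insert z M3) z c3)
    (X : Finset V) (hX : X.card ≤ 2) (hzX : z ∉ X) :
    ∃ c, (c = c1 ∨ c = c2 ∨ c = c3) ∧ Cn G (insert c Y \ X) z c := by
  by_contra hno
  push Not at hno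
  have key : ∀ (M : Finset V) (c : V), (c = c1 ∨ c = c2 ∨ c = c3) → M ⊆ insert c Y →
      Cn G (insert z M) z c → ∃ x ∈ M, x ∈ X := by
    intro M c hc hM hk
    by_contra hn
    push Not at hn
    refine hno c hc (hk.mono ?_)
    intro w hw
    rw [Finset.mem_sdiff]
    rcases Finset.mem_insert.1 hw with rfl | hw
    · exact ⟨Finset.mem_insert_of_mem hzY, hzX⟩
    · exact ⟨hM hw, hn w hw⟩
  obtain ⟨x1, a1, b1⟩ := key M1 c1 (by simp) s1 k1
  obtain ⟨x2, a2, b2⟩ := key M2 c2 (by simp) s2 k2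
  obtain ⟨x3, a3, b3⟩ := key M3 c3 (by simp) s3 k3
  rw [Finset.disjoint_left] at h12 h13 h23
  have : ({x1, x2, x3} : Finset V) ⊆ X := by
    intro w hw
    simp only [Finset.mem_insert, Finset.mem_singleton] at hw
    rcases hw with rfl | rfl | rfl <;> assumption
  have h5 := Finset.card_le_card this
  rw [Finset.card_eq_three.2 ⟨x1, x2, x3, fun e => h12 a1 (e ▸ a2), fun e => h13 a1 (e ▸ a3),
    fun e => h23 a2 (e ▸ a3), rfl⟩] at h5
  omega

lemma tripod {c1 c2 c3 s : V} {Y : Finset V} (h12 : c1 ≠ c2) (h13 : c1 ≠ c3) (h23 : c2 ≠ c3)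
    (n1 : c1 ∉ Y) (n2 : c2 ∉ Y) (n3 : c3 ∉ Y) (hs : s ∈ Y) (k1 : Cn G (insert c1 Y) s c1)
    (k2 : Cn G (insert c2 Y) s c2) (k3 : Cn G (insert c3 Y) s c3) :
    ∃ z ∈ Y, ∀ X : Finset V, X.card ≤ 2 → z ∉ X →
      ∃ c, (c = c1 ∨ c = c2 ∨ c = c3) ∧ Cn G (insert c Y \ X) z c := by
  obtain ⟨y1, hy1, a1, e1⟩ := k1.exit hs n1
  obtain ⟨y2, hy2, a2, e2⟩ := k2.exit hs n2
  obtain ⟨y3, hy3, a3, e3⟩ := k3.exit hs n3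
  obtain ⟨w, hw⟩ := e1.symm.trans e2
  set p := w.bypass with hp
  have hpp : p.IsPath := w.bypass_isPath
  have hpY : ∀ v ∈ p.support, v ∈ Y := fun v hv => hw v (w.support_bypass_subset_support hv)
  set P := p.support.toFinset with hP
  have mP : ∀ v, v ∈ P ↔ v ∈ p.support := fun v => by simp [hP]
  obtain ⟨z, hzP, hz⟩ := (e3.symm.trans e1).hit (P := P) ((mP y1).2 p.start_mem_support)
  have hzp := (mP z).1 hzP
  have hzY := hpY z hzp
  have htd : ∀ v, v ∈ (p.takeUntil z hzp).support → v ∈ (p.dropUntil z hzp).support → v = z := by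
    intro v hv hv'
    have h1 : p.support.Nodup := hpp.support_nodup
    rw [← p.take_spec hzp, SimpleGraph.Walk.support_append] at h1
    rw [← SimpleGraph.Walk.cons_tail_support] at hv'
    rcases List.mem_cons.1 hv' with h | h
    · exact h
    · exact absurd h (List.disjoint_of_nodup_append h1 hv)
  have ht : ∀ v, v ∈ (p.takeUntil z hzp).support → v ∈ p.support := fun v hv =>
    p.support_takeUntil_subset_support hzp hv
  have hd : ∀ v, v ∈ (p.dropUntil z hzp).support → v ∈ p.support := fun v hv =>
    p.support_dropUntil_subset_support hzp hv
  set M1 := insert c1 ((p.takeUntil z hzp).support.toFinset.erase z) with hM1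
  set M2 := insert c2 ((p.dropUntil z hzp).support.toFinset.erase z) with hM2
  set M3 := insert c3 (Y \ P) with hM3
  have m1 : ∀ v, v ∈ M1 ↔ v = c1 ∨ (v ≠ z ∧ v ∈ (p.takeUntil z hzp).support) := fun v => by
    simp [hM1]
  have m2 : ∀ v, v ∈ M2 ↔ v = c2 ∨ (v ≠ z ∧ v ∈ (p.dropUntil z hzp).support) := fun v => by
    simp [hM2]
  have m3 : ∀ v, v ∈ M3 ↔ v = c3 ∨ (v ∈ Y ∧ v ∉ p.support) := fun v => by
    rw [hM3, Finset.mem_insert, Finset.mem_sdiff, mP]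
  refine ⟨z, hzY, fun X hX hzX => legs (M1 := M1) (M2 := M2) (M3 := M3) ?_ ?_ ?_ ?_ ?_ ?_ hzY ?_ ?_ ?_ ?_ ?_ ?_ X hX hzX⟩
  · rw [Finset.disjoint_left]
    intro v h1 h2
    rcases (m1 v).1 h1 with rfl | h1 <;> rcases (m2 v).1 h2 with h2 | h2
    · exact h12 h2
    · exact n1 (hpY _ (hd _ h2.2))
    · subst h2; exact n2 (hpY _ (ht _ h1.2))
    · exact h1.1 (htd v h1.2 h2.2)
  · rw [Finset.disjoint_left]
    intro v h1 h2
    rcases (m1 v).1 h1 with rfl | h1 <;> rcases (m3 v).1 h2 with h2 | h2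
    · exact h13 h2
    · exact n1 h2.1
    · subst h2; exact n3 (hpY _ (ht _ h1.2))
    · exact h2.2 (ht _ h1.2)
  · rw [Finset.disjoint_left]
    intro v h1 h2
    rcases (m2 v).1 h1 with rfl | h1 <;> rcases (m3 v).1 h2 with h2 | h2
    · exact h23 h2
    · exact n2 h2.1
    · subst h2; exact n3 (hpY _ (hd _ h1.2))
    · exact h2.2 (hd _ h1.2)
  · intro h
    rcases (m1 z).1 h with h | h
    · exact n1 (h ▸ hzY)
    · exact h.1 rfl
  · intro h
    rcases (m2 z).1 h with h | h
    · exact n2 (h ▸ hzY)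
    · exact h.1 rfl
  · intro h
    rcases (m3 z).1 h with h | h
    · exact n3 (h ▸ hzY)
    · exact h.2 hzp
  · intro v hv
    rw [Finset.mem_insert]
    exact ((m1 v).1 hv).imp_right (fun h => hpY _ (ht _ h.2))
  · intro v hv
    rw [Finset.mem_insert]
    exact ((m2 v).1 hv).imp_right (fun h => hpY _ (hd _ h.2))
  · intro v hv
    rw [Finset.mem_insert]
    exact ((m3 v).1 hv).imp_right (fun h => h.1)
  · have h1 : Cn G (insert z M1) y1 z := ⟨p.takeUntil z hzp, fun v hv => by
      rw [Finset.mem_insert, m1]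
      by_cases h : v = z
      · exact Or.inl h
      · exact Or.inr (Or.inr ⟨h, hv⟩)⟩
    exact h1.symm.trans (Cn.adj a1 h1.left (Finset.mem_insert_of_mem ((m1 c1).2 (Or.inl rfl))))
  · have h1 : Cn G (insert z M2) z y2 := ⟨p.dropUntil z hzp, fun v hv => by
      rw [Finset.mem_insert, m2]
      by_cases h : v = z
      · exact Or.inl h
      · exact Or.inr (Or.inr ⟨h, hv⟩)⟩
    exact h1.trans (Cn.adj a2 h1.right (Finset.mem_insert_of_mem ((m2 c2).2 (Or.inl rfl))))
  · have h1 : Cn G (insert z M3) y3 z := hz.mono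
      (Finset.insert_subset_insert _ (Finset.subset_insert _ _))
    exact h1.symm.trans (Cn.adj a3 h1.left (Finset.mem_insert_of_mem ((m3 c3).2 (Or.inl rfl))))

lemma Insep.mono {B B' C : Finset V} (h : Insep G B C) (hB : B ⊆ B') : Insep G B' C :=
  fun X hX c hc hcX c' hc' hcX' =>
    (h X hX c hc hcX c' hc' hcX').mono (Finset.sdiff_subset_sdiff hB (Finset.Subset.refl _))

lemma Insep.grow {B C : Finset V} (h : Insep G B C) {z : V} (hz : z ∈ B)
    (hk : ∀ X : Finset V, X.card ≤ 2 → z ∉ X → ∃ c ∈ C, Cn G (B \ X) z c) :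
    Insep G B (insert z C) := by
  intro X hX c hc hcX c' hc' hcX'
  have key : ∀ d ∈ insert z C, d ∉ X → ∃ e ∈ C, e ∉ X ∧ Cn G (B \ X) d e := by
    intro d hd hdX
    rcases Finset.mem_insert.1 hd with rfl | hd
    · obtain ⟨e, he, hc⟩ := hk X hX hdX
      exact ⟨e, he, (Finset.mem_sdiff.1 hc.right).2, hc⟩
    · exact ⟨d, hd, hdX, (h X hX d hd hdX d hd hdX)⟩
  obtain ⟨e, he, heX, hce⟩ := key c hc hcX
  obtain ⟨e', he', heX', hce'⟩ := key c' hc' hcX'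
  exact (hce.trans (h X hX e he heX e' he' heX')).trans hce'.symm

lemma shortcut {B1 B2 Z : Finset V} {x y a c : V} (h1 : ∀ w ∈ B1, w ∉ Z → w ∈ B2)
    (hZ : ∀ z ∈ Z, ∀ w ∈ B1, G.Adj z w → w ∈ Z ∨ w = x ∨ w = y)
    (hl : x ∈ B1 → y ∈ B1 → Cn G B2 x y) (hx : x ∉ Z) (hy : y ∉ Z)
    (h : Cn G B1 a c) (hc : c ∉ Z) (ha : a ∉ Z) : Cn G B2 a c := by
  obtain ⟨w, hw⟩ := h
  have key : (a ∉ Z → Cn G B2 a c) ∧ (a ∈ Z → ∀ e ∈ B1, e = x ∨ e = y → Cn G B2 e c) := by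
    clear ha
    induction w with
    | nil => exact ⟨fun h => Cn.refl (h1 _ (hw _ (by simp)) h), fun h => absurd h hc⟩
    | cons hadj p ih =>
      rename_i u v w'
      obtain ⟨ih1, ih2⟩ := ih hc (fun x hx => hw x (by simp [hx]))
      have huB : u ∈ B1 := hw u (by simp)
      have hvB : v ∈ B1 := hw v (by simp)
      refine ⟨fun hu => ?_, fun hu e heB he => ?_⟩
      · by_cases hv : v ∈ Z
        · rcases hZ v hv u huB hadj.symm with h | h
          · exact absurd h hu
          · exact ih2 hv u huB h
        · exact (Cn.adj hadj (h1 u huB hu) (h1 v hvB hv)).trans (ih1 hv)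
      · by_cases hv : v ∈ Z
        · exact ih2 hv e heB he
        · refine Cn.trans ?_ (ih1 hv)
          rcases (hZ u hu v hvB hadj).resolve_left hv with h | h <;> rcases he with he | he <;> subst h he
          · exact Cn.refl (h1 _ hvB hv)
          · exact (hl hvB heB).symm
          · exact hl heB hvB
          · exact Cn.refl (h1 _ hvB hv)
  exact key.1 ha

lemma Insep.del {B C Z : Finset V} {x : V} (h : Insep G B C) (hZC : ∀ z ∈ Z, z ∉ C)
    (hx : x ∉ Z) (hZ : ∀ z ∈ Z, ∀ w ∈ B, G.Adj z w → w ∈ Z ∨ w = x) : Insep G (B \ Z) C := by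
  intro X hX c hc hcX c' hc' hcX'
  have hsub : ∀ w ∈ B \ X, w ∉ Z → w ∈ (B \ Z) \ X := by
    intro w hw hwZ
    simp only [Finset.mem_sdiff] at *
    exact ⟨⟨hw.1, hwZ⟩, hw.2⟩
  refine shortcut (x := x) (y := x) hsub
    (fun z hz w hw hzw => (hZ z hz w (Finset.mem_sdiff.1 hw).1 hzw).imp_right Or.inl) ?_ hx hx
    (h X hX c hc hcX c' hc' hcX') (fun h => hZC _ h hc') (fun h => hZC _ h hc)
  exact fun hxB _ => Cn.refl (hsub x hxB hx)

lemma Insep.replace {B C Z Z' : Finset V} {x y : V} (h : Insep G B C) (hC : 4 ≤ C.card)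
    (hZC : ∀ z ∈ Z, z ∉ C) (hxC : x ∈ C) (hyC : y ∈ C) (hxy : x ≠ y)
    (hxB : x ∈ B) (hyB : y ∈ B)
    (hZ : ∀ z ∈ Z, ∀ w ∈ B, G.Adj z w → w ∈ Z ∨ w = x ∨ w = y)
    (hZ' : ∀ z ∈ Z', z ∈ B → z ∈ Z) (hl : Cn G (insert x (insert y Z')) x y) :
    Insep G ((B \ Z) ∪ Z') C := by
  have hx : x ∉ Z := fun h => hZC _ h hxC
  have hy : y ∉ Z := fun h => hZC _ h hyC
  intro X hX
  have gen : ∀ X0 : Finset V, X0.card ≤ 2 → (∀ w ∈ B \ X0, w ∉ Z → w ∉ X) →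
      ((x ∈ B \ X0) → (y ∈ B \ X0) → Cn G (((B \ Z) ∪ Z') \ X) x y) →
      ∀ c ∈ C, c ∉ X0 → ∀ c' ∈ C, c' ∉ X0 → Cn G (((B \ Z) ∪ Z') \ X) c c' := by
    intro X0 hX0 hXX hl' c hc hcX c' hc' hcX'
    refine shortcut (x := x) (y := y) ?_
      (fun z hz w hw hzw => hZ z hz w (Finset.mem_sdiff.1 hw).1 hzw) hl' hx hy
      (h X0 hX0 c hc hcX c' hc' hcX') (fun h => hZC _ h hc') (fun h => hZC _ h hc)
    intro w hw hwZ
    have := hXX w hw hwZ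
    simp only [Finset.mem_sdiff, Finset.mem_union] at *
    exact ⟨Or.inl ⟨hw.1, hwZ⟩, this⟩
  by_cases hxX : x ∈ X
  · exact gen X hX (fun w hw _ => (Finset.mem_sdiff.1 hw).2)
      (fun h _ => absurd hxX (Finset.mem_sdiff.1 h).2)
  by_cases hyX : y ∈ X
  · exact gen X hX (fun w hw _ => (Finset.mem_sdiff.1 hw).2)
      (fun _ h => absurd hyX (Finset.mem_sdiff.1 h).2)
  by_cases he : ∃ e ∈ X, e ∈ Z'
  · obtain ⟨e, heX, heZ⟩ := he
    have hec := Finset.card_erase_add_one heX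
    have hXX : ∀ v, ∀ w ∈ B \ insert v (X.erase e), w ∉ Z → w ∉ X := by
      intro v w hw hwZ hwX
      simp only [Finset.mem_sdiff, Finset.mem_insert, Finset.mem_erase, not_or, not_and] at hw
      by_cases hwe : w = e
      · subst hwe
        exact hwZ (hZ' w heZ hw.1)
      · exact hw.2.2 hwe hwX
    have gx := gen (insert x (X.erase e)) (by
      have := Finset.card_insert_le x (X.erase e); omega) (hXX x) (fun h => by simp at h)
    have gy := gen (insert y (X.erase e)) (by
      have := Finset.card_insert_le y (X.erase e); omega) (hXX y) (fun _ h => by simp at h)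
    obtain ⟨c3, hc3, hc3n⟩ : ∃ c ∈ C, c ∉ insert x (insert y (X.erase e)) := by
      by_contra hno
      push Not at hno
      have h1 := Finset.card_le_card (show C ⊆ insert x (insert y (X.erase e)) from hno)
      have h2 := Finset.card_insert_le x (insert y (X.erase e))
      have h3 := Finset.card_insert_le y (X.erase e)
      omega
    simp only [Finset.mem_insert, not_or] at hc3n
    have toc3 : ∀ c ∈ C, c ∉ X → Cn G (((B \ Z) ∪ Z') \ X) c c3 := by
      intro c hc hcX
      by_cases hcx : c = x
      · refine gy c hc ?_ c3 hc3 ?_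
        · simp only [Finset.mem_insert, not_or]
          exact ⟨fun h => hxy (hcx ▸ h), fun h => hcX (Finset.mem_of_mem_erase h)⟩
        · simp only [Finset.mem_insert, not_or]
          exact ⟨hc3n.2.1, hc3n.2.2⟩
      · refine gx c hc ?_ c3 hc3 ?_
        · simp only [Finset.mem_insert, not_or]
          exact ⟨hcx, fun h => hcX (Finset.mem_of_mem_erase h)⟩
        · simp only [Finset.mem_insert, not_or]
          exact ⟨hc3n.1, hc3n.2.2⟩
    exact fun c hc hcX c' hc' hcX' => (toc3 c hc hcX).trans (toc3 c' hc' hcX').symm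
  · push Not at he
    refine gen X hX (fun w hw _ => (Finset.mem_sdiff.1 hw).2) (fun _ _ => hl.mono ?_)
    intro w hw
    simp only [Finset.mem_sdiff, Finset.mem_union]
    rcases Finset.mem_insert.1 hw with rfl | hw
    · exact ⟨Or.inl ⟨hxB, hx⟩, hxX⟩
    · rcases Finset.mem_insert.1 hw with rfl | hw
      · exact ⟨Or.inl ⟨hyB, hy⟩, hyX⟩
      · exact ⟨Or.inr hw, fun h => he w h hw⟩
end core2


section core3
variable {V : Type*} [DecidableEq V] {G : SimpleGraph V} {E : Finset V → Prop}

structure Feas (G : SimpleGraph V) (E : Finset V → Prop) (B C : Finset V) : Prop where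
  sub : C ⊆ B
  four : 4 ≤ C.card
  ins : Insep G B C
  emb : E B

structure Opt (G : SimpleGraph V) (E : Finset V → Prop) (B C : Finset V) : Prop where
  feas : Feas G E B C
  mx : ∀ B' C', Feas G E B' C' → C'.card ≤ C.card
  mn : ∀ B' C', Feas G E B' C' → C'.card = C.card → B.card ≤ B'.card

noncomputable def gm (G : SimpleGraph V) (B C : Finset V) (b : V) : Finset V := by
  classical exact C.filter (fun c => Cn G (insert c (B \ C)) b c)

lemma mem_gm {B C : Finset V} {b c : V} :
    c ∈ gm G B C b ↔ c ∈ C ∧ Cn G (insert c (B \ C)) b c := by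
  classical
  simp [gm]

lemma gm_self {B C : Finset V} {b : V} (hb : b ∈ C) : gm G B C b = {b} := by
  ext c
  rw [mem_gm, Finset.mem_singleton]
  constructor
  · rintro ⟨h1, h2⟩
    have := h2.left
    rw [Finset.mem_insert, Finset.mem_sdiff] at this
    rcases this with h | h
    · exact h.symm
    · exact absurd hb h.2
  · rintro rfl
    exact ⟨hb, Cn.refl (by simp)⟩

lemma gm_adj {B C : Finset V} {b w : V} (hb : b ∈ B) (hbC : b ∉ C) (h : G.Adj b w) :
    gm G B C w ⊆ gm G B C b := by
  intro c hc
  rw [mem_gm] at hc ⊢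
  refine ⟨hc.1, (Cn.adj h ?_ hc.2.left).trans hc.2⟩
  simp [hb, hbC]

lemma gm_cn {B C : Finset V} {b w : V} (h : Cn G (B \ C) b w) : gm G B C w = gm G B C b := by
  refine h.prop (I := fun w => gm G B C w = gm G B C b) rfl ?_
  intro u v hu hv huv hI
  rw [Finset.mem_sdiff] at hu hv
  rw [← hI]
  exact Finset.Subset.antisymm (gm_adj hu.1 hu.2 huv) (gm_adj hv.1 hv.2 huv.symm)

lemma gm_le_two {B C : Finset V} (mx : ∀ B' C', Feas G E B' C' → C'.card ≤ C.card)
    (hF : Feas G E B C) {s : V} (hs : s ∈ B) (hsC : s ∉ C) : (gm G B C s).card ≤ 2 := by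
  by_contra hno
  push Not at hno
  obtain ⟨c1, h1, c2, h2, c3, h3, h12, h13, h23⟩ := Finset.two_lt_card.1 hno
  rw [mem_gm] at h1 h2 h3
  obtain ⟨z, hz, hk⟩ := tripod (Y := B \ C) h12 h13 h23 (by simp [h1.1]) (by simp [h2.1])
    (by simp [h3.1]) (by simp [hs, hsC]) h1.2 h2.2 h3.2
  rw [Finset.mem_sdiff] at hz
  have hin : Insep G B (insert z C) := by
    refine hF.ins.grow hz.1 ?_
    intro X hX hzX
    obtain ⟨c, hc, hcn⟩ := hk X hX hzX
    have hcC : c ∈ C := by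
      rcases hc with rfl | rfl | rfl
      · exact h1.1
      · exact h2.1
      · exact h3.1
    refine ⟨c, hcC, hcn.mono ?_⟩
    apply Finset.sdiff_subset_sdiff _ (Finset.Subset.refl _)
    intro w hw
    rcases Finset.mem_insert.1 hw with rfl | hw
    · exact hF.sub hcC
    · exact (Finset.mem_sdiff.1 hw).1
  have h5 := mx B (insert z C) ⟨Finset.insert_subset hz.1 hF.sub, by
    rw [Finset.card_insert_of_notMem hz.2]; have := hF.four; omega, hin, hF.emb⟩
  rw [Finset.card_insert_of_notMem hz.2] at h5
  omega

lemma Opt.gm_two (mono : ∀ B B', B ⊆ B' → E B' → E B) {B C : Finset V} (hO : Opt G E B C) {z : V}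
    (hz : z ∈ B) (hzC : z ∉ C) : (gm G B C z).card = 2 := by
  have h1 := gm_le_two hO.mx hO.feas hz hzC
  by_contra hne
  have h2 : (gm G B C z).card ≤ 1 := by omega
  have hCne : C.Nonempty := Finset.card_pos.1 (by have := hO.feas.four; omega)
  have hx : ∃ x ∈ C, gm G B C z ⊆ {x} := by
    rcases Finset.eq_empty_or_nonempty (gm G B C z) with h | ⟨x, hx⟩
    · obtain ⟨x, hx⟩ := hCne
      exact ⟨x, hx, by simp [h]⟩
    · refine ⟨x, (mem_gm.1 hx).1, ?_⟩
      intro y hy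
      rw [Finset.mem_singleton]
      exact Finset.card_le_one.1 h2 y hy x hx
  obtain ⟨x, hxC, hx⟩ := hx
  set Z := comp G (B \ C) z with hZ
  have hZs : ∀ w ∈ Z, w ∈ B ∧ w ∉ C := fun w hw => Finset.mem_sdiff.1 (comp_sub hw)
  have hins : Insep G (B \ Z) C := by
    refine hO.feas.ins.del (x := x) (fun w hw => (hZs w hw).2) (fun h => (hZs x h).2 hxC) ?_
    intro u hu w hw huw
    by_cases hwC : w ∈ C
    · right
      have : w ∈ gm G B C u := by
        apply gm_adj (hZs u hu).1 (hZs u hu).2 huw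
        rw [gm_self hwC]; simp
      rw [gm_cn (mem_comp.1 hu)] at this
      simpa using hx this
    · left
      exact comp_step hu (by simp [hw, hwC]) huw
  have hzZ : z ∈ Z := mem_comp.2 (Cn.refl (by simp [hz, hzC]))
  have h5 := hO.mn (B \ Z) C ⟨fun c hc => Finset.mem_sdiff.2 ⟨hO.feas.sub hc, fun h => (hZs c h).2 hc⟩,
    hO.feas.four, hins, mono _ _ Finset.sdiff_subset hO.feas.emb⟩ rfl
  have : (B \ Z).card < B.card := by
    apply Finset.card_lt_card
    refine ⟨Finset.sdiff_subset, fun h => ?_⟩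
    exact (Finset.mem_sdiff.1 (h hz)).2 hzZ
  omega

lemma Opt.gm_ne (mono : ∀ B B', B ⊆ B' → E B' → E B) {B C : Finset V} (hO : Opt G E B C) {z : V}
    (hz : z ∈ B) : (gm G B C z).Nonempty := by
  by_cases h : z ∈ C
  · rw [gm_self h]; simp
  · apply Finset.card_pos.1
    rw [hO.gm_two mono hz h]; omega

noncomputable def Gam (G : SimpleGraph V) (B C S : Finset V) : Finset V :=
  S.biUnion fun s => (nb G B s).biUnion (gm G B C)

lemma mem_Gam {B C S : Finset V} {c : V} :
    c ∈ Gam G B C S ↔ ∃ s ∈ S, ∃ b ∈ B, G.Adj s b ∧ c ∈ gm G B C b := by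
  simp only [Gam, Finset.mem_biUnion, mem_nb, and_assoc]

lemma Gam_mono {B C S S' : Finset V} (h : S ⊆ S') : Gam G B C S ⊆ Gam G B C S' := by
  intro c hc
  rw [mem_Gam] at *
  obtain ⟨s, hs, r⟩ := hc
  exact ⟨s, h hs, r⟩

lemma Gam_subC {B C S : Finset V} : Gam G B C S ⊆ C := by
  intro c hc
  rw [mem_Gam] at hc
  obtain ⟨s, hs, b, hb, h, hc⟩ := hc
  exact (mem_gm.1 hc).1

lemma Opt.aug {B C S : Finset V} (hO : Opt G E B C) (hS : ∀ s ∈ S, s ∉ B) (hne : S.Nonempty)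
    (hcn : ∀ s ∈ S, ∀ s' ∈ S, Cn G S s s') (hE : E (B ∪ S)) : (Gam G B C S).card ≤ 2 := by
  obtain ⟨s0, hs0⟩ := hne
  have hSC : ∀ s ∈ S, s ∉ C := fun s hs h => hS s hs (hO.feas.sub h)
  have hF : Feas G E (B ∪ S) C := ⟨hO.feas.sub.trans Finset.subset_union_left, hO.feas.four,
    hO.feas.ins.mono Finset.subset_union_left, hE⟩
  refine (Finset.card_le_card ?_).trans (gm_le_two hO.mx hF (s := s0) (by simp [hs0]) (hSC _ hs0))
  intro c hc
  obtain ⟨s, hs, b, hb, hsb, hcb⟩ := mem_Gam.1 hc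
  rw [mem_gm] at hcb ⊢
  have k3 : Cn G (insert c ((B ∪ S) \ C)) b c := hcb.2.mono (by
    apply Finset.insert_subset_insert
    apply Finset.sdiff_subset_sdiff Finset.subset_union_left (Finset.Subset.refl _))
  have k1 : Cn G (insert c ((B ∪ S) \ C)) s0 s := (hcn s0 hs0 s hs).mono (by
    intro w hw
    simp [hw, hSC w hw])
  exact ⟨hcb.1, k1.trans ((Cn.adj hsb k1.right k3.left).trans k3)⟩

lemma Opt.nb_le (mono : ∀ B B', B ⊆ B' → E B' → E B) {B C : Finset V} (hO : Opt G E B C) {v : V}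
    (h : (nb G B v).card ≤ 2) : (nb G B v).card ≤ (Gam G B C {v}).card := by
  by_cases hb : ∃ b ∈ nb G B v, b ∉ C
  · obtain ⟨b, hb, hbC⟩ := hb
    rw [mem_nb] at hb
    refine h.trans ?_
    rw [← hO.gm_two mono hb.1 hbC]
    apply Finset.card_le_card
    intro c hc
    exact mem_Gam.2 ⟨v, by simp, b, hb.1, hb.2, hc⟩
  · push Not at hb
    apply Finset.card_le_card
    intro b hb'
    have := hb b hb'
    rw [mem_nb] at hb'
    exact mem_Gam.2 ⟨v, by simp, b, hb'.1, hb'.2, by rw [gm_self this]; simp⟩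

end core3


section core4
variable {V : Type*} [DecidableEq V] {G : SimpleGraph V} {E : Finset V → Prop}

noncomputable def Zs (G : SimpleGraph V) (B C : Finset V) (x y : V) : Finset V :=
  (B \ C).filter (fun z => gm G B C z = {x, y})

lemma mem_Zs {B C : Finset V} {x y z : V} :
    z ∈ Zs G B C x y ↔ (z ∈ B ∧ z ∉ C) ∧ gm G B C z = {x, y} := by
  simp [Zs]

lemma Zs_bd {B C : Finset V} {x y : V} : ∀ z ∈ Zs G B C x y, ∀ w ∈ B, G.Adj z w →
    w ∈ Zs G B C x y ∨ w = x ∨ w = y := by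
  intro z hz w hw hzw
  rw [mem_Zs] at hz ⊢
  by_cases hwC : w ∈ C
  · right
    have : w ∈ gm G B C z := by
      apply gm_adj hz.1.1 hz.1.2 hzw
      rw [gm_self hwC]; simp
    rw [hz.2] at this
    simpa using this
  · left
    refine ⟨⟨hw, hwC⟩, ?_⟩
    rw [← hz.2]
    exact gm_cn (Cn.adj hzw (by simp [hz.1.1, hz.1.2]) (by simp [hw, hwC]))

lemma Opt.replace (mono : ∀ B B', B ⊆ B' → E B' → E B) {B C : Finset V} (hO : Opt G E B C)
    {x y : V} (hx : x ∈ C) (hy : y ∈ C) (hxy : x ≠ y) {Z' : Finset V}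
    (hZ' : ∀ z ∈ Z', z ∈ B → z ∈ Zs G B C x y) (hl : Cn G (insert x (insert y Z')) x y)
    (hE : E (B ∪ Z')) : Feas G E ((B \ Zs G B C x y) ∪ Z') C := by
  have hs := hO.feas.sub
  refine ⟨?_, hO.feas.four, ?_, mono _ _ (Finset.union_subset_union_left Finset.sdiff_subset) hE⟩
  · intro c hc
    have : c ∉ Zs G B C x y := fun h => (mem_Zs.1 h).1.2 hc
    simp [hs hc, this]
  · exact hO.feas.ins.replace hO.feas.four (fun z hz => (mem_Zs.1 hz).1.2) hx hy hxy (hs hx) (hs hy)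
      Zs_bd hZ' hl

lemma Opt.walk_len (mono : ∀ B B', B ⊆ B' → E B' → E B) {B C : Finset V} (hO : Opt G E B C)
    {x y : V} (hx : x ∈ C) (hy : y ∈ C) (hxy : x ≠ y) (q : G.Walk x y)
    (hq : ∀ z ∈ q.support, z ∈ B → z = x ∨ z = y ∨ z ∈ Zs G B C x y)
    (hE : E (B ∪ q.support.toFinset)) : (Zs G B C x y).card + 1 ≤ q.length := by
  set Z' := (q.support.toFinset.erase x).erase y with hZ'
  have m : ∀ z, z ∈ Z' ↔ z ≠ y ∧ z ≠ x ∧ z ∈ q.support := fun z => by simp [hZ']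
  have hF := hO.replace mono hx hy hxy (Z' := Z') (by
    intro z hz hzB
    rw [m] at hz
    rcases hq z hz.2.2 hzB with h | h | h
    · exact absurd h hz.2.1
    · exact absurd h hz.1
    · exact h) ⟨q, fun v hv => by
      rw [Finset.mem_insert, Finset.mem_insert, m]
      by_cases h1 : v = x
      · exact Or.inl h1
      by_cases h2 : v = y
      · exact Or.inr (Or.inl h2)
      exact Or.inr (Or.inr ⟨h2, h1, hv⟩)⟩ (mono _ _ (Finset.union_subset_union_right (by
        intro z hz
        rw [m] at hz
        simp [hz.2.2])) hE)
  have h1 := hO.mn _ _ hF rfl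
  have h2 := Finset.card_union_le (B \ Zs G B C x y) Z'
  have hsub : Zs G B C x y ⊆ B := fun z hz => (mem_Zs.1 hz).1.1
  have h3 := Finset.card_sdiff_add_card_eq_card hsub
  have h4 : Z'.card + 1 + 1 = q.support.toFinset.card := by
    rw [hZ', Finset.card_erase_add_one, Finset.card_erase_add_one]
    · simp
    · simp [hxy.symm]
  have h5 : q.support.toFinset.card ≤ q.support.length := List.toFinset_card_le _
  rw [SimpleGraph.Walk.length_support] at h5
  omega

lemma Opt.pathstr (mono : ∀ B B', B ⊆ B' → E B' → E B) {B C : Finset V} (hO : Opt G E B C)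
    {x y z0 : V} (hxy : x ≠ y) (hz0 : z0 ∈ B) (hz0C : z0 ∉ C) (hg : gm G B C z0 = {x, y}) :
    ∃ (n : ℕ) (g : ℕ → V), g 0 = x ∧ g n = y ∧ (∀ i j, i ≤ n → j ≤ n → g i = g j → i = j) ∧
      (∀ i, i < n → G.Adj (g i) (g (i+1))) ∧
      (∀ v, (v = x ∨ v = y ∨ v ∈ Zs G B C x y) ↔ ∃ i, i ≤ n ∧ g i = v) ∧
      (∀ i k, i < k → k ≤ n → G.Adj (g i) (g k) → k ≤ i + 1) ∧
      (∀ u, u ∉ B → E (insert u B) → ∀ i k, i < k → k ≤ n → G.Adj u (g i) → G.Adj u (g k) →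
        k ≤ i + 2) := by
  have hxg : x ∈ gm G B C z0 := by rw [hg]; simp
  have hyg : y ∈ gm G B C z0 := by rw [hg]; simp
  rw [mem_gm] at hxg hyg
  have hx := hxg.1
  have hy := hyg.1
  have hcnZ : ∀ c ∈ C, Cn G (insert c (B \ C)) z0 c → Cn G (insert c (Zs G B C x y)) z0 c := by
    intro c hc h
    obtain ⟨y1, hy1, a1, e1⟩ := h.exit (by simp [hz0, hz0C]) (by simp [hc])
    have e2 : Cn G (Zs G B C x y) z0 y1 := by
      refine e1.restrict (mem_Zs.2 ⟨⟨hz0, hz0C⟩, hg⟩) ?_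
      intro u v hu hv huv hI
      have hv' := Finset.mem_sdiff.1 hv
      rcases Zs_bd u hI v hv'.1 huv with h | h | h
      · exact h
      · exact absurd (h ▸ hx) hv'.2
      · exact absurd (h ▸ hy) hv'.2
    have e3 := e2.mono (Finset.subset_insert c _)
    exact e3.trans (Cn.adj a1 e3.right (by simp))
  have hc : Cn G (insert x (insert y (Zs G B C x y))) x y :=
    ((hcnZ x hx hxg.2).mono (Finset.insert_subset_insert _ (Finset.subset_insert _ _))).symm.trans
    ((hcnZ y hy hyg.2).mono (Finset.subset_insert _ _))
  obtain ⟨w, hw⟩ := hc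
  set p := w.bypass with hp
  have hpp : p.IsPath := w.bypass_isPath
  have hps : ∀ v ∈ p.support, v = x ∨ v = y ∨ v ∈ Zs G B C x y := fun v hv => by
    simpa using hw v (w.support_bypass_subset_support hv)
  have hpB : ∀ v ∈ p.support, v ∈ B := by
    intro v hv
    rcases hps v hv with rfl | rfl | h
    · exact hO.feas.sub hx
    · exact hO.feas.sub hy
    · exact (mem_Zs.1 h).1.1
  have hlen : ∀ q : G.Walk x y, (∀ v ∈ q.support, v ∈ B → v ∈ p.support) →
      E (B ∪ q.support.toFinset) → (Zs G B C x y).card + 1 ≤ q.length := fun q h1 h2 =>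
    hO.walk_len mono hx hy hxy q (fun z hz hzB => hps z (h1 z hz hzB)) h2
  have hpE : E (B ∪ p.support.toFinset) := by
    have : B ∪ p.support.toFinset = B := by
      rw [Finset.union_eq_left]
      intro v hv
      exact hpB v (by simpa using hv)
    rw [this]; exact hO.feas.emb
  have hl1 := hlen p (fun v hv _ => hv) hpE
  have hcard : p.support.toFinset.card = p.length + 1 := by
    rw [List.toFinset_card_of_nodup hpp.support_nodup, SimpleGraph.Walk.length_support]
  have hsub : p.support.toFinset ⊆ insert x (insert y (Zs G B C x y)) := by
    intro v hv
    simpa using hps v (by simpa using hv)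
  have hc2 : (insert x (insert y (Zs G B C x y))).card ≤ (Zs G B C x y).card + 2 :=
    (Finset.card_insert_le _ _).trans (Nat.succ_le_succ (Finset.card_insert_le _ _))
  have heq : p.support.toFinset = insert x (insert y (Zs G B C x y)) :=
    Finset.eq_of_subset_of_card_le hsub (by omega)
  have hpl : p.length = (Zs G B C x y).card + 1 := by
    have := Finset.card_le_card hsub
    omega
  have sT : ∀ i v, v ∈ (p.take i).support → v ∈ p.support := fun i v hv => by
    rw [SimpleGraph.Walk.support_take] at hv
    exact List.mem_of_mem_take hv
  have sD : ∀ i v, v ∈ (p.drop i).support → v ∈ p.support := fun i v hv => by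
    rw [SimpleGraph.Walk.drop_support_eq_support_drop_min] at hv
    exact List.mem_of_mem_drop hv
  refine ⟨p.length, p.getVert, p.getVert_zero, p.getVert_length, ?_, ?_, ?_, ?_, ?_⟩
  · intro i j hi hj hij
    exact hpp.getVert_injOn hi hj hij
  · intro i hi
    exact p.adj_getVert_succ hi
  · intro v
    have : v ∈ p.support ↔ v = x ∨ v = y ∨ v ∈ Zs G B C x y := by
      rw [← List.mem_toFinset, heq]; simp
    rw [← this, SimpleGraph.Walk.mem_support_iff_exists_getVert]
    exact ⟨fun ⟨i, a, b⟩ => ⟨i, b, a⟩, fun ⟨i, a, b⟩ => ⟨i, b, a⟩⟩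
  · intro i k hik hk hadj
    set q := (p.take i).append (SimpleGraph.Walk.cons hadj (p.drop k)) with hq
    have hqs : ∀ v ∈ q.support, v ∈ p.support := by
      intro v hv
      rw [hq, SimpleGraph.Walk.mem_support_append_iff, SimpleGraph.Walk.support_cons,
        List.mem_cons] at hv
      rcases hv with h | h | h
      · exact sT i v h
      · rw [h]; exact p.getVert_mem_support _
      · exact sD k v h
    have := hlen q (fun v hv _ => hqs v hv) (mono _ _ (by
      intro v hv
      simp only [Finset.mem_union, List.mem_toFinset] at hv ⊢
      exact hv.imp_right (hqs v)) hpE)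
    have hql : q.length = i + 1 + (p.length - k) := by
      rw [hq, SimpleGraph.Walk.length_append, SimpleGraph.Walk.length_cons, SimpleGraph.Walk.take_length,
        SimpleGraph.Walk.drop_length, min_eq_left (by omega)]
      omega
    omega
  · intro u hu hEu i k hik hk hai hak
    set q := (p.take i).append (SimpleGraph.Walk.cons hai.symm (SimpleGraph.Walk.cons hak (p.drop k))) with hq
    have hqs : ∀ v ∈ q.support, v = u ∨ v ∈ p.support := by
      intro v hv
      rw [hq, SimpleGraph.Walk.mem_support_append_iff, SimpleGraph.Walk.support_cons,
        List.mem_cons, SimpleGraph.Walk.support_cons, List.mem_cons] at hv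
      rcases hv with h | h | h | h
      · exact Or.inr (sT i v h)
      · right; rw [h]; exact p.getVert_mem_support _
      · exact Or.inl h
      · exact Or.inr (sD k v h)
    have := hlen q (fun v hv hvB => (hqs v hv).elim (fun h => absurd (h ▸ hvB) hu) id) (mono _ _ (by
      intro v hv
      simp only [Finset.mem_union, List.mem_toFinset] at hv
      rw [Finset.mem_insert]
      rcases hv with h | h
      · exact Or.inr h
      · exact (hqs v h).imp_right (hpB v)) hEu)
    have hql : q.length = i + 2 + (p.length - k) := by
      rw [hq, SimpleGraph.Walk.length_append, SimpleGraph.Walk.length_cons, SimpleGraph.Walk.length_cons, SimpleGraph.Walk.take_length,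
        SimpleGraph.Walk.drop_length, min_eq_left (by omega)]
      omega
    omega

lemma Opt.deg_le (mono : ∀ B B', B ⊆ B' → E B' → E B) {B C : Finset V} (hO : Opt G E B C)
    {z : V} (hz : z ∈ B) (hzC : z ∉ C) : (nb G B z).card ≤ 2 := by
  obtain ⟨x, y, hxy, hg⟩ := Finset.card_eq_two.1 (hO.gm_two mono hz hzC)
  obtain ⟨n, g, g0, gn, ginj, gadj, gs, gsh, gu⟩ := hO.pathstr mono hxy hz hzC hg
  have hzZ : z ∈ Zs G B C x y := mem_Zs.2 ⟨⟨hz, hzC⟩, hg⟩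
  obtain ⟨j, hj, rfl⟩ := (gs z).1 (Or.inr (Or.inr hzZ))
  have : nb G B (g j) ⊆ {g (j-1), g (j+1)} := by
    intro w hw
    rw [mem_nb] at hw
    have h1 : w = x ∨ w = y ∨ w ∈ Zs G B C x y := by
      rcases Zs_bd _ hzZ w hw.1 hw.2 with h | h | h
      · exact Or.inr (Or.inr h)
      · exact Or.inl h
      · exact Or.inr (Or.inl h)
    obtain ⟨k, hk, rfl⟩ := (gs w).1 h1
    rw [Finset.mem_insert, Finset.mem_singleton]
    rcases lt_trichotomy k j with h | h | h
    · have := gsh k j h hj hw.2.symm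
      left; congr 1; omega
    · subst h; exact absurd hw.2 (G.irrefl)
    · have := gsh j k h hk hw.2
      right; congr 1; omega
  exact (Finset.card_le_card this).trans Finset.card_le_two
end core4


section core5
variable {V : Type*} [DecidableEq V] {G : SimpleGraph V} {E : Finset V → Prop}

lemma Opt.swap (mono : ∀ B B', B ⊆ B' → E B' → E B) {B C : Finset V} (hO : Opt G E B C)
    {u : V} (hu : u ∉ B) (hE : E (insert u B)) (h3 : 3 ≤ (nb G B u).card) :
    (nb G B u).card = 3 ∧ (Gam G B C {u}).card = 2 ∧ ∃ B', Opt G E B' C ∧ u ∈ B' ∧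
      B' ⊆ insert u B ∧ Gam G B C {u} ⊆ gm G B' C u ∧
      (∀ b ∈ B, ∀ c ∈ gm G B C b, c ∉ Gam G B C {u} → b ∈ B' ∧ c ∈ gm G B' C b) := by
  have hG2 : (Gam G B C {u}).card ≤ 2 := by
    refine hO.aug (by simpa using hu) (by simp) ?_ ?_
    · intro s hs s' hs'
      rw [Finset.mem_singleton] at hs hs'
      subst hs; subst hs'
      exact Cn.refl (by simp)
    · rw [Finset.union_comm]; exact hE
  have hbG : ∀ b ∈ nb G B u, gm G B C b ⊆ Gam G B C {u} := by
    intro b hb c hc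
    rw [mem_nb] at hb
    exact mem_Gam.2 ⟨u, by simp, b, hb.1, hb.2, hc⟩
  have hex : ∃ b ∈ nb G B u, b ∉ C := by
    by_contra hno
    push Not at hno
    have : nb G B u ⊆ Gam G B C {u} := by
      intro b hb
      apply hbG b hb
      rw [gm_self (hno b hb)]; simp
    have := Finset.card_le_card this
    omega
  obtain ⟨b0, hb0, hb0C⟩ := hex
  have hb0' := mem_nb.1 hb0
  obtain ⟨x, y, hxy, hg⟩ := Finset.card_eq_two.1 (hO.gm_two mono hb0'.1 hb0C)
  have hGam : Gam G B C {u} = {x, y} := by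
    symm
    apply Finset.eq_of_subset_of_card_le
    · rw [← hg]; exact hbG b0 hb0
    · rw [Finset.card_pair hxy]; exact hG2
  obtain ⟨n, g, g0, gn, ginj, gadj, gs, gsh, gu⟩ := hO.pathstr mono hxy hb0'.1 hb0C hg
  have hx : x ∈ C := (mem_gm.1 (by rw [hg]; simp : x ∈ gm G B C b0)).1
  have hy : y ∈ C := (mem_gm.1 (by rw [hg]; simp : y ∈ gm G B C b0)).1
  have hnbs : ∀ b ∈ nb G B u, ∃ i, i ≤ n ∧ g i = b := by
    intro b hb
    rw [← gs]
    have h1 := hbG b hb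
    rw [hGam] at h1
    have hb' := mem_nb.1 hb
    by_cases hbC : b ∈ C
    · rw [gm_self hbC] at h1
      have := h1 (Finset.mem_singleton_self b)
      simp only [Finset.mem_insert, Finset.mem_singleton] at this
      rcases this with h | h
      · exact Or.inl h
      · exact Or.inr (Or.inl h)
    · right; right
      rw [mem_Zs]
      refine ⟨⟨hb'.1, hbC⟩, Finset.eq_of_subset_of_card_le h1 ?_⟩
      rw [Finset.card_pair hxy, hO.gm_two mono hb'.1 hbC]
  classical
  set I := (Finset.range (n+1)).filter (fun i => G.Adj u (g i)) with hI
  have mI : ∀ i, i ∈ I ↔ i ≤ n ∧ G.Adj u (g i) := fun i => by simp [hI]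
  have hgB : ∀ i, i ≤ n → g i ∈ B := by
    intro i hi
    rcases (gs (g i)).2 ⟨i, hi, rfl⟩ with h | h | h
    · rw [h]; exact hO.feas.sub hx
    · rw [h]; exact hO.feas.sub hy
    · exact (mem_Zs.1 h).1.1
  have hgZ : ∀ i, 0 < i → i < n → g i ∈ Zs G B C x y := by
    intro i hi hin
    rcases (gs (g i)).2 ⟨i, hin.le, rfl⟩ with h | h | h
    · have := ginj i 0 hin.le (by omega) (by rw [h, g0]); omega
    · have := ginj i n hin.le le_rfl (by rw [h, gn]); omega
    · exact h
  have hIc : (nb G B u).card = I.card := by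
    have : nb G B u = I.image g := by
      ext b
      rw [Finset.mem_image]
      constructor
      · intro hb
        obtain ⟨i, hi, rfl⟩ := hnbs b hb
        exact ⟨i, (mI i).2 ⟨hi, (mem_nb.1 hb).2⟩, rfl⟩
      · rintro ⟨i, hi, rfl⟩
        rw [mI] at hi
        exact mem_nb.2 ⟨hgB i hi.1, hi.2⟩
    rw [this, Finset.card_image_of_injOn]
    intro i hi j hj hij
    exact ginj i j ((mI i).1 hi).1 ((mI j).1 hj).1 hij
  have hIne : I.Nonempty := Finset.card_pos.1 (by omega)
  set i := I.min' hIne with hi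
  have hiI : i ∈ I := I.min'_mem hIne
  have hIs : I ⊆ {i, i+1, i+2} := by
    intro k hk
    have h1 : i ≤ k := I.min'_le k hk
    have hiI' := (mI i).1 hiI
    have hk' := (mI k).1 hk
    have h2 : k ≤ i + 2 := by
      rcases Nat.eq_or_lt_of_le h1 with h | h
      · omega
      · exact gu u hu hE i k h hk'.1 hiI'.2 hk'.2
    simp only [Finset.mem_insert, Finset.mem_singleton]
    omega
  have h3c : ({i, i+1, i+2} : Finset ℕ).card ≤ 3 := Finset.card_le_three
  have hIe : I = {i, i+1, i+2} := Finset.eq_of_subset_of_card_le hIs (by omega)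
  have hi2 : i + 2 ∈ I := by rw [hIe]; simp
  have hi1 : i + 1 ∈ I := by rw [hIe]; simp
  rw [mI] at hiI hi1 hi2
  have hle := Finset.card_le_card hIs
  refine ⟨by omega, by rw [hGam, Finset.card_pair hxy], ?_⟩
  set mid := g (i+1) with hmid
  have hmidZ : mid ∈ Zs G B C x y := hgZ (i+1) (by omega) (by omega)
  have hmB : mid ∈ B := (mem_Zs.1 hmidZ).1.1
  have hmC : mid ∉ C := (mem_Zs.1 hmidZ).1.2
  have huC : u ∉ C := fun h => hu (hO.feas.sub h)
  set B' := insert u (B.erase mid) with hB'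
  have mB' : ∀ v, v ∈ B' ↔ v = u ∨ (v ≠ mid ∧ v ∈ B) := fun v => by simp [hB']
  set Z' := insert u ((Zs G B C x y).erase mid) with hZ'
  have mZ' : ∀ v, v ∈ Z' ↔ v = u ∨ (v ≠ mid ∧ v ∈ Zs G B C x y) := fun v => by simp [hZ']
  have hgm : ∀ j, j ≤ n → j ≠ i + 1 → g j ≠ mid := by
    intro j hj hne h
    exact hne (ginj j (i+1) hj hi1.1 h)
  have low : ∀ A : Finset V, (∀ j, j ≤ i → g j ∈ A) → ∀ j, j ≤ i → Cn G A x (g j) := by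
    intro A hA j
    induction j with
    | zero => intro _; rw [← g0]; exact Cn.refl (hA 0 (by omega))
    | succ j ih =>
      intro hj
      exact (ih (by omega)).trans (Cn.adj (gadj j (by omega)) (hA _ (by omega)) (hA _ hj))
  have high : ∀ A : Finset V, (∀ j, i + 2 ≤ j → j ≤ n → g j ∈ A) → ∀ j, j + (i + 2) ≤ n →
      Cn G A (g (i+2)) (g (i + 2 + j)) := by
    intro A hA j
    induction j with
    | zero => intro _; exact Cn.refl (hA _ (by omega) (by omega))
    | succ j ih =>
      intro hj
      exact (ih (by omega)).trans (Cn.adj (gadj _ (by omega)) (hA _ (by omega) (by omega))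
        (hA _ (by omega) (by omega)))
  have highy : ∀ A : Finset V, (∀ j, i + 2 ≤ j → j ≤ n → g j ∈ A) → Cn G A (g (i+2)) y := by
    intro A hA
    have := high A hA (n - (i+2)) (by omega)
    rw [show i + 2 + (n - (i+2)) = n by omega, gn] at this
    exact this
  have hl : Cn G (insert x (insert y Z')) x y := by
    have hA : ∀ j, j ≤ n → j ≠ i + 1 → g j ∈ insert x (insert y Z') := by
      intro j hj hne
      rw [Finset.mem_insert, Finset.mem_insert, mZ']
      rcases (gs (g j)).2 ⟨j, hj, rfl⟩ with h | h | h
      · exact Or.inl h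
      · exact Or.inr (Or.inl h)
      · exact Or.inr (Or.inr (Or.inr ⟨hgm j hj hne, h⟩))
    have huA : u ∈ insert x (insert y Z') := by
      rw [Finset.mem_insert, Finset.mem_insert, mZ']
      exact Or.inr (Or.inr (Or.inl rfl))
    have k1 := low _ (fun j hj => hA j (by omega) (by omega)) i le_rfl
    have k2 := highy _ (fun j hj hjn => hA j (by omega) (by omega))
    exact k1.trans ((Cn.adj hiI.2.symm k1.right huA).trans ((Cn.adj hi2.2 huA k2.left).trans k2))
  have hF := hO.replace mono hx hy hxy (Z' := Z') (by
    intro z hz hzB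
    rcases (mZ' z).1 hz with h | h
    · exact absurd (h ▸ hzB) hu
    · exact h.2) hl (mono _ _ (by
      intro v hv
      rw [Finset.mem_insert]
      rcases Finset.mem_union.1 hv with h | h
      · exact Or.inr h
      · rcases (mZ' v).1 h with h | h
        · exact Or.inl h
        · exact Or.inr (mem_Zs.1 h.2).1.1) hE)
  have hBB : (B \ Zs G B C x y) ∪ Z' = B' := by
    ext v
    rw [Finset.mem_union, Finset.mem_sdiff, mZ', mB']
    constructor
    · rintro (h | h | h)
      · exact Or.inr ⟨fun e => h.2 (e ▸ hmidZ), h.1⟩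
      · exact Or.inl h
      · exact Or.inr ⟨h.1, (mem_Zs.1 h.2).1.1⟩
    · rintro (h | h)
      · exact Or.inr (Or.inl h)
      · by_cases hv : v ∈ Zs G B C x y
        · exact Or.inr (Or.inr ⟨h.1, hv⟩)
        · exact Or.inl ⟨h.2, hv⟩
  rw [hBB] at hF
  have hcB : B'.card = B.card := by
    rw [hB', Finset.card_insert_of_notMem (fun h => hu (Finset.mem_of_mem_erase h)),
      Finset.card_erase_add_one hmB]
  have hmidg : gm G B C mid = {x, y} := (mem_Zs.1 hmidZ).2
  refine ⟨B', ⟨hF, hO.mx, fun B1 C1 h1 h2 => by rw [hcB]; exact hO.mn B1 C1 h1 h2⟩, ?_, ?_, ?_, ?_⟩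
  · rw [mB']; exact Or.inl rfl
  · intro v hv
    rw [Finset.mem_insert]
    exact ((mB' v).1 hv).imp_right (fun h => h.2)
  · rw [hGam]
    have hin : ∀ c j, 0 < j → j < n → j ≠ i + 1 → g j ∈ insert c (B' \ C) := by
      intro c j h0 hjn hne
      rw [Finset.mem_insert, Finset.mem_sdiff, mB']
      exact Or.inr ⟨Or.inr ⟨hgm j hjn.le hne, hgB j hjn.le⟩, (mem_Zs.1 (hgZ j h0 hjn)).1.2⟩
    have huin : ∀ c, u ∈ insert c (B' \ C) := by
      intro c
      rw [Finset.mem_insert, Finset.mem_sdiff, mB']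
      exact Or.inr ⟨Or.inl rfl, huC⟩
    intro c hc
    simp only [Finset.mem_insert, Finset.mem_singleton] at hc
    rw [mem_gm]
    rcases hc with rfl | rfl
    · refine ⟨hx, ?_⟩
      have k1 := low (insert c (B' \ C)) (by
        intro j hj
        rcases Nat.eq_zero_or_pos j with h | h
        · rw [h, g0]; simp
        · exact hin _ j h (by omega) (by omega)) i le_rfl
      exact (Cn.adj hiI.2 (huin _) k1.right).trans k1.symm
    · refine ⟨hy, ?_⟩
      have k1 := highy (insert c (B' \ C)) (by
        intro j hj hjn
        rcases Nat.eq_or_lt_of_le hjn with h | h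
        · rw [h, gn]; simp
        · exact hin _ j (by omega) h (by omega))
      exact (Cn.adj hi2.2 (huin _) k1.left).trans k1
  · intro b hb c hc hcG
    rw [hGam] at hcG
    rw [mem_gm] at hc
    have hne : ∀ v, Cn G (insert c (B \ C)) c v → v ≠ mid := by
      rintro v hv rfl
      apply hcG
      rw [← hmidg, mem_gm]
      exact ⟨hc.1, hv.symm⟩
    refine ⟨(mB' b).2 (Or.inr ⟨hne b hc.2.symm, hb⟩), mem_gm.2 ⟨hc.1, ?_⟩⟩
    have := hc.2.symm.prop (I := fun v => Cn G (insert c (B \ C)) c v ∧ Cn G (insert c (B' \ C)) c v)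
      ⟨Cn.refl (by simp), Cn.refl (by simp)⟩ (by
      intro v w hv hw hvw hI
      have k := hI.1.trans (Cn.adj hvw hv hw)
      refine ⟨k, hI.2.trans (Cn.adj hvw hI.2.right ?_)⟩
      rw [Finset.mem_insert, Finset.mem_sdiff] at hw ⊢
      rcases hw with h | h
      · exact Or.inl h
      · exact Or.inr ⟨(mB' w).2 (Or.inr ⟨hne w k, h.1⟩), h.2⟩)
    exact this.2.symm
end core5


section core6
variable {V : Type*} [DecidableEq V] {G : SimpleGraph V} {E : Finset V → Prop}

def Conn (G : SimpleGraph V) (S : Finset V) : Prop := ∀ s ∈ S, ∀ s' ∈ S, Cn G S s s'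

lemma conn_root {K : Finset V} {r : V} (h : ∀ s ∈ K, Cn G K s r) : Conn G K :=
  fun s hs s' hs' => (h s hs).trans (h s' hs').symm

lemma conn_comp (A : Finset V) (a : V) : Conn G (comp G A a) := by
  refine conn_root (r := a) ?_
  intro s hs
  have h := mem_comp.1 hs
  refine Cn.symm (h.restrict (mem_comp.2 (Cn.refl h.left)) ?_)
  intro u v hu hv huv hI
  exact comp_step hI hv huv

lemma conn_insert {K : Finset V} {v z : V} (h : Conn G K) (hz : z ∈ K) (hv : G.Adj v z) :
    Conn G (insert v K) := by
  refine conn_root (r := z) ?_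
  intro s hs
  rcases Finset.mem_insert.1 hs with rfl | hs
  · exact Cn.adj hv (by simp) (by simp [hz])
  · exact (h s hs z hz).mono (Finset.subset_insert _ _)

lemma geo {S : Finset V} {v t : V} (h : Conn G S) (hj : (nb G S v).Nonempty) (ht : t ∈ S) :
    ∃ K z, K ⊆ S ∧ Conn G K ∧ t ∈ K ∧ z ∈ K ∧ G.Adj v z ∧ K ⊆ insert z (S \ nb G S v) := by
  obtain ⟨w, hw⟩ := hj
  obtain ⟨z, hz, hc⟩ := (h t ht w (mem_nb.1 hw).1).hit hw
  have hz' := mem_nb.1 hz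
  refine ⟨comp G (insert z (S \ nb G S v)) t, z, ?_, conn_comp _ _, mem_comp.2 (Cn.refl hc.left),
    mem_comp.2 hc, hz'.2, comp_sub⟩
  refine comp_sub.trans ?_
  exact Finset.insert_subset hz'.1 Finset.sdiff_subset

lemma bound {B C S : Finset V} {v : V} (h : Conn G S) (hj : (nb G S v).Nonempty)
    (h3 : 3 ≤ (Gam G B C (insert v S)).card) (h2 : (Gam G B C {v}).card ≤ 3) :
    ∃ K, K ⊆ insert v S ∧ v ∈ K ∧ Conn G K ∧ 3 ≤ (Gam G B C K).card ∧
      K.card + (nb G S v).card + (Gam G B C {v}).card ≤ S.card + 4 := by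
  classical
  have hsubG : Gam G B C {v} ⊆ Gam G B C (insert v S) := Gam_mono (by simp)
  have hd : 3 - (Gam G B C {v}).card ≤ (Gam G B C (insert v S) \ Gam G B C {v}).card := by
    have := Finset.card_sdiff_add_card_eq_card hsubG
    omega
  obtain ⟨D, hD, hDc⟩ := Finset.exists_subset_card_eq hd
  have hch : ∀ c, ∃ (K : Finset V) (z : V), c ∈ D → (K ⊆ S ∧ Conn G K ∧ z ∈ K ∧ G.Adj v z ∧
      K ⊆ insert z (S \ nb G S v) ∧ c ∈ Gam G B C K) := by
    intro c
    by_cases hc : c ∈ D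
    · have h1 := Finset.mem_sdiff.1 (hD hc)
      obtain ⟨t, ht, b, hb, htb, hcb⟩ := mem_Gam.1 h1.1
      have htS : t ∈ S := by
        rcases Finset.mem_insert.1 ht with rfl | h
        · exact absurd (mem_Gam.2 ⟨t, by simp, b, hb, htb, hcb⟩) h1.2
        · exact h
      obtain ⟨K, z, k1, k2, k3, k4, k5, k6⟩ := geo h hj htS
      exact ⟨K, z, fun _ => ⟨k1, k2, k4, k5, k6, mem_Gam.2 ⟨t, k3, b, hb, htb, hcb⟩⟩⟩
    · exact ⟨∅, v, fun h => absurd h hc⟩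
  choose K z hK using hch
  set U := insert v (D.biUnion K) with hU
  have hKU : ∀ c ∈ D, K c ⊆ U := by
    intro c hc
    exact (Finset.subset_biUnion_of_mem K hc).trans (Finset.subset_insert _ _)
  have hvU : v ∈ U := by simp [hU]
  refine ⟨U, ?_, hvU, ?_, ?_, ?_⟩
  · apply Finset.insert_subset_insert
    exact Finset.biUnion_subset.2 (fun c hc => (hK c hc).1)
  · refine conn_root (r := v) ?_
    intro s hs
    rcases Finset.mem_insert.1 hs with rfl | hs
    · exact Cn.refl hvU
    · obtain ⟨c, hc, hsc⟩ := Finset.mem_biUnion.1 hs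
      obtain ⟨k1, k2, k3, k4, k5, k6⟩ := hK c hc
      exact ((k2 s hsc _ k3).mono (hKU c hc)).trans (Cn.adj k4.symm (hKU c hc k3) hvU)
  · have : Gam G B C {v} ∪ D ⊆ Gam G B C U := by
      apply Finset.union_subset
      · exact Gam_mono (by simp [hvU])
      · intro c hc
        exact Gam_mono (hKU c hc) (hK c hc).2.2.2.2.2
    refine le_trans ?_ (Finset.card_le_card this)
    rw [Finset.card_union_of_disjoint]
    · omega
    · rw [Finset.disjoint_left]
      intro c hc hcD
      exact (Finset.mem_sdiff.1 (hD hcD)).2 hc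
  · have h5 : U ⊆ insert v (D.image z ∪ (S \ nb G S v)) := by
      apply Finset.insert_subset_insert
      apply Finset.biUnion_subset.2
      intro c hc w hw
      have := (hK c hc).2.2.2.2.1 hw
      rw [Finset.mem_union]
      rcases Finset.mem_insert.1 this with h | h
      · left; rw [h]; exact Finset.mem_image_of_mem z hc
      · exact Or.inr h
    have h6 := Finset.card_le_card h5
    have h7 := Finset.card_insert_le v (D.image z ∪ (S \ nb G S v))
    have h8 := Finset.card_union_le (D.image z) (S \ nb G S v)
    have h9 : (D.image z).card ≤ D.card := Finset.card_image_le
    have hs : nb G S v ⊆ S := fun w hw => (mem_nb.1 hw).1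
    have h10 := Finset.card_sdiff_add_card_eq_card hs
    omega

lemma noncut {S : Finset V} (h : Conn G S) (h2 : 2 ≤ S.card) :
    ∃ v ∈ S, Conn G (S.erase v) ∧ (S.erase v).Nonempty := by
  classical
  set F := S.powerset.filter (fun A => Conn G A ∧ A.Nonempty ∧ A ≠ S) with hF
  have mF : ∀ A, A ∈ F ↔ A ⊆ S ∧ Conn G A ∧ A.Nonempty ∧ A ≠ S := fun A => by simp [hF]
  obtain ⟨s, hs⟩ : S.Nonempty := Finset.card_pos.1 (by omega)
  have hFne : F.Nonempty := by
    refine ⟨{s}, (mF _).2 ⟨by simpa using hs, ?_, by simp, ?_⟩⟩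
    · refine conn_root (r := s) ?_
      intro t ht
      rw [Finset.mem_singleton] at ht
      subst ht
      exact Cn.refl (by simp)
    · intro h
      rw [← h] at h2
      simp at h2
  obtain ⟨A, hA, hmax⟩ := F.exists_max_image Finset.card hFne
  rw [mF] at hA
  obtain ⟨hAS, hAc, ⟨a, ha⟩, hAne⟩ := hA
  obtain ⟨b, hb, hbA⟩ : ∃ b ∈ S, b ∉ A := by
    by_contra hno
    push Not at hno
    exact hAne (Finset.Subset.antisymm hAS hno)
  have hedge : ∃ u ∈ A, ∃ w ∈ S, w ∉ A ∧ G.Adj u w := by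
    by_contra hno
    push Not at hno
    exact hbA ((h a (hAS ha) b hb).prop (I := fun v => v ∈ A) ha (by
      intro u v hu hv huv hI
      by_contra hvA
      exact hno u hI v hv hvA huv))
  obtain ⟨u, hu, w, hw, hwA, huw⟩ := hedge
  have hins := conn_insert hAc hu huw.symm
  have heq : insert w A = S := by
    by_contra hne
    have := hmax (insert w A) ((mF _).2 ⟨Finset.insert_subset hw hAS, hins, by simp, hne⟩)
    rw [Finset.card_insert_of_notMem hwA] at this
    omega
  refine ⟨w, hw, ?_⟩
  have : S.erase w = A := by rw [← heq, Finset.erase_insert hwA]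
  rw [this]
  exact ⟨hAc, ⟨a, ha⟩⟩

end core6

section fin
variable {V : Type*} [Fintype V] [DecidableEq V] {G : SimpleGraph V}

lemma kc_cn (hG : KConnected G 3) {X : Finset V} (hX : X.card ≤ 2) {a b : V} (ha : a ∉ X)
    (hb : b ∉ X) : Cn G (Finset.univ \ X) a b := by
  have h := (hG.2 X (by omega)).preconnected ⟨a, by simpa using ha⟩ ⟨b, by simpa using hb⟩
  have gen : ∀ (p q : ((X : Set V)ᶜ : Set V)), (G.induce ((X : Set V)ᶜ)).Walk p q →
      Cn G (Finset.univ \ X) p.1 q.1 := by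
    intro p q w
    induction w with
    | nil =>
      rename_i u
      have : (u : V) ∉ X := fun h => u.2 (by simpa using h)
      exact Cn.refl (by simpa using this)
    | cons hadj p ih =>
      rename_i u v w'
      have : (u : V) ∉ X := fun h => u.2 (by simpa using h)
      exact (Cn.adj (by simpa using hadj) (by simpa using this) ih.left).trans ih
  obtain ⟨w⟩ := h
  exact gen _ _ w

lemma insep_kc {B : Finset V} (h : Insep G B B) (h4 : 4 ≤ B.card) {S : Set V}
    (hS : S = (B : Set V)) : KConnected (G.induce S) 3 := by
  subst hS
  refine ⟨by simpa using h4, ?_⟩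
  intro X hX
  set X' := X.image Subtype.val with hX'
  have hc : X'.card ≤ 2 := by
    have : X'.card ≤ X.card := Finset.card_image_le
    omega
  have mX' : ∀ v (hv : v ∈ (B : Set V)), v ∈ X' ↔ (⟨v, hv⟩ : (B : Set V)) ∈ X := by
    intro v hv
    simp only [hX', Finset.mem_image, Subtype.exists, exists_and_right, exists_eq_right]
    exact ⟨fun ⟨_, h⟩ => h, fun h => ⟨hv, h⟩⟩
  have step : ∀ a b, Cn G (B \ X') a b → ∀ (h1 : a ∈ (B : Set V))
      (h2 : (⟨a, h1⟩ : (B : Set V)) ∈ ((X : Set (B : Set V))ᶜ)) (h3 : b ∈ (B : Set V))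
      (h4 : (⟨b, h3⟩ : (B : Set V)) ∈ ((X : Set (B : Set V))ᶜ)),
      ((G.induce (B : Set V)).induce ((X : Set (B : Set V))ᶜ)).Reachable
      ⟨⟨a, h1⟩, h2⟩ ⟨⟨b, h3⟩, h4⟩ := by
    intro a b hab h1 h2
    refine hab.prop (I := fun b => ∀ (h3 : b ∈ (B : Set V))
      (h4 : (⟨b, h3⟩ : (B : Set V)) ∈ ((X : Set (B : Set V))ᶜ)),
      ((G.induce (B : Set V)).induce ((X : Set (B : Set V))ᶜ)).Reachable
      ⟨⟨a, h1⟩, h2⟩ ⟨⟨b, h3⟩, h4⟩) (fun _ _ => SimpleGraph.Reachable.refl _) ?_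
    intro u v hu hv huv hr h3 h4
    rw [Finset.mem_sdiff] at hu
    have h5 : u ∈ (B : Set V) := by simpa using hu.1
    have h6 : (⟨u, h5⟩ : (B : Set V)) ∈ ((X : Set (B : Set V))ᶜ) := by
      have := hu.2
      rw [mX' u h5] at this
      simpa using this
    refine (hr h5 h6).trans (SimpleGraph.Adj.reachable ?_)
    simpa using huv
  have hne : ∃ c ∈ B, c ∉ X' := by
    by_contra hno
    push Not at hno
    have := Finset.card_le_card hno
    omega
  obtain ⟨c, hc1, hc2⟩ := hne
  have : Nonempty (((X : Set (B : Set V))ᶜ : Set (B : Set V))) := ⟨⟨⟨c, by simpa using hc1⟩, by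
    have := hc2; rw [mX' c (by simpa using hc1)] at this; simpa using this⟩⟩
  refine SimpleGraph.Connected.mk ?_
  rintro ⟨⟨a, ha⟩, ha'⟩ ⟨⟨b, hb⟩, hb'⟩
  have haX : a ∉ X' := by rw [mX' a ha]; simpa using ha'
  have hbX : b ∉ X' := by rw [mX' b hb]; simpa using hb'
  have ha2 : a ∈ B := by simpa using ha
  have hb2 : b ∈ B := by simpa using hb
  exact step a b (h X' hc a ha2 haX b hb2 hbX) ha ha' hb hb'

lemma exists_opt {E : Finset V → Prop} (h : ∃ B C, Feas G E B C) : ∃ B C, Opt G E B C := by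
  classical
  obtain ⟨B, C, h⟩ := h
  set F := (Finset.univ : Finset (Finset V × Finset V)).filter (fun p => Feas G E p.1 p.2) with hF
  have mF : ∀ p, p ∈ F ↔ Feas G E p.1 p.2 := fun p => by simp [hF]
  obtain ⟨p, hp, hpm⟩ := F.exists_max_image (fun p => p.2.card) ⟨(B, C), (mF _).2 h⟩
  set F' := F.filter (fun q => q.2.card = p.2.card) with hF'
  obtain ⟨q, hq, hqm⟩ := F'.exists_min_image (fun p => p.1.card) ⟨p, by simp [hF', hp]⟩
  rw [hF', Finset.mem_filter] at hq
  refine ⟨q.1, q.2, (mF q).1 hq.1, ?_, ?_⟩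
  · intro B' C' h'
    rw [hq.2]
    exact hpm (B', C') ((mF _).2 h')
  · intro B' C' h' hc
    refine hqm (B', C') ?_
    rw [hF', Finset.mem_filter]
    exact ⟨(mF _).2 h', by rw [← hq.2]; exact hc⟩

variable {W : Type*} [Fintype W] [DecidableEq W]

def Em (T : SimpleGraph W) (G : SimpleGraph V) (B : Finset V) : Prop :=
  ∃ f : W → V, TEmb T G f ∧ ∀ t, f t ∉ B

lemma Em.mono {T : SimpleGraph W} : ∀ B B' : Finset V, B ⊆ B' → Em T G B' → Em T G B :=
  fun B B' h ⟨f, h1, h2⟩ => ⟨f, h1, fun t ht => h2 t (h ht)⟩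

lemma nb_split (B : Finset V) (v : V) :
    (nb G Finset.univ v).card ≤ (nb G B v).card + (nb G Bᶜ v).card := by
  have := nb_card_union (G := G) B Bᶜ v
  rwa [Finset.union_compl] at this

lemma opt_low {T : SimpleGraph W} (hT : T.IsTree) (hm : 0 < Fintype.card W)
    (hdeg : ∀ v, Fintype.card W + 3 ≤ (nb G Finset.univ v).card) {B C : Finset V}
    (hO : Opt G (Em T G) B C) (hH : Fintype.card W + 1 ≤ (Bᶜ).card) :
    ∀ v, v ∉ B → (nb G B v).card ≤ 3 ∧ Em T G (insert v B) := by
  have hL : ∀ v, v ∉ B → (nb G B v).card ≤ 3 := by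
    by_contra hno
    push Not at hno
    obtain ⟨v0, hv0, hv04⟩ := hno
    set L := (Bᶜ).filter (fun v => 4 ≤ (nb G B v).card) with hL
    obtain ⟨f0, hf0, hf0B⟩ := hO.feas.emb
    obtain ⟨u, hu, f, hf, hfu⟩ := lemmaA hT (H := Bᶜ) (L := L) (Finset.filter_subset _ _)
      ⟨v0, by simp [hL, hv0]; omega⟩ hH (by
        intro v hv hvL
        have h1 : ¬ 4 ≤ (nb G B v).card := fun h => hvL (Finset.mem_filter.2 ⟨hv, h⟩)
        have h2 := nb_split (G := G) B v
        have h3 := hdeg v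
        omega) hf0 (fun t => by simpa using hf0B t)
    rw [hL, Finset.mem_filter, Finset.mem_compl] at hu
    have := (hO.swap Em.mono hu.1 ⟨f, hf, fun t => by
      have := hfu t
      simp only [Finset.mem_compl] at this
      rw [Finset.mem_insert]
      exact fun h => h.elim this.2 this.1⟩ (by omega)).1
    omega
  intro v hv
  refine ⟨hL v hv, ?_⟩
  have hvH : v ∈ Bᶜ := by simpa using hv
  obtain ⟨f, hf, hfR⟩ := greedy hT G ((Bᶜ).erase v) (Finset.card_pos.1 (by
      rw [Finset.card_erase_of_mem hvH]; omega)) (by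
    intro x hx
    have hxB : x ∉ B := by simpa using (Finset.mem_erase.1 hx).2
    have h1 := hL x hxB
    have h2 := nb_split (G := G) B x
    have h3 := hdeg x
    have h4 := nb_card_sdiff (G := G) Bᶜ {v} x
    rw [← Finset.erase_eq, Finset.card_singleton] at h4
    omega)
  refine ⟨f, hf, fun t => ?_⟩
  have := Finset.mem_erase.1 (hfR t)
  rw [Finset.mem_compl] at this
  rw [Finset.mem_insert]
  exact fun h => h.elim this.1 this.2

lemma conn_single (v : V) : Conn G {v} := by
  refine conn_root (r := v) ?_
  intro t ht
  rw [Finset.mem_singleton] at ht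
  subst ht
  exact Cn.refl (by simp)

structure Tri (G : SimpleGraph V) (E : Finset V → Prop) (B C S : Finset V) : Prop where
  opt : Opt G E B C
  dis : ∀ s ∈ S, s ∉ B
  ne : S.Nonempty
  con : Conn G S
  three : 3 ≤ (Gam G B C S).card

lemma exists_tri {E : Finset V → Prop} (mono : ∀ B B', B ⊆ B' → E B' → E B) (hG : KConnected G 3)
    {B C : Finset V} (hO : Opt G E B C)
    (hH : (Bᶜ).Nonempty) : ∃ S, Tri G E B C S := by
  by_contra hno
  obtain ⟨h, hh⟩ := hH
  have hco : ∀ v ∈ Bᶜ, (Gam G B C (comp G Bᶜ v)).card ≤ 2 := by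
    intro v hv
    by_contra h3
    push Not at h3
    exact hno ⟨_, hO, fun s hs => by simpa using comp_sub hs, ⟨v, mem_comp.2 (Cn.refl hv)⟩,
      conn_comp _ _, h3⟩
  set X := Gam G B C (comp G Bᶜ h) with hX
  have hXc : X.card ≤ 2 := hco h hh
  have hXC : X ⊆ C := Gam_subC
  have hXB := hXC.trans hO.feas.sub
  obtain ⟨c0, hc0, hc0X⟩ : ∃ c ∈ C, c ∉ X := by
    by_contra hn
    push Not at hn
    have := Finset.card_le_card hn
    have := hO.feas.four
    omega
  have hgC : ∀ v ∈ Bᶜ, ∀ w ∈ B, G.Adj v w → gm G B C w ⊆ Gam G B C (comp G Bᶜ v) := by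
    intro v hv w hw hvw c hc
    exact mem_Gam.2 ⟨v, mem_comp.2 (Cn.refl hv), w, hw, hvw, hc⟩
  have := (kc_cn hG hXc (a := h) (b := c0) (fun hx => (Finset.mem_compl.1 hh) (hXB hx)) hc0X).prop
    (I := fun v => (v ∈ Bᶜ ∧ Gam G B C (comp G Bᶜ v) ⊆ X) ∨ ((v ∈ B ∧ v ∉ C) ∧ gm G B C v ⊆ X))
    (Or.inl ⟨hh, Finset.Subset.refl _⟩) (by
    intro u w hu hw huw hI
    have hwX : w ∉ X := (Finset.mem_sdiff.1 hw).2
    rcases hI with ⟨huB, hI⟩ | ⟨huB, hI⟩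
    · by_cases hwB : w ∈ B
      · right
        have h1 := (hgC u huB w hwB huw).trans hI
        refine ⟨⟨hwB, fun hwC => hwX (h1 ?_)⟩, h1⟩
        rw [gm_self hwC]; simp
      · left
        have hwB' : w ∈ Bᶜ := by simpa using hwB
        refine ⟨hwB', Finset.Subset.trans (Gam_mono ?_) hI⟩
        intro s hs
        rw [mem_comp] at hs ⊢
        exact (Cn.adj huw huB hwB').trans hs
    · have h1 := gm_adj huB.1 huB.2 huw
      by_cases hwB : w ∈ B
      · right
        refine ⟨⟨hwB, fun hwC => hwX (hI (h1 ?_))⟩, h1.trans hI⟩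
        rw [gm_self hwC]; simp
      · left
        have hwB' : w ∈ Bᶜ := by simpa using hwB
        refine ⟨hwB', ?_⟩
        have h2 := hgC w hwB' u huB.1 huw.symm
        have h3 := hO.gm_two mono huB.1 huB.2
        have h4 : gm G B C u = Gam G B C (comp G Bᶜ w) :=
          Finset.eq_of_subset_of_card_le h2 (by rw [h3]; exact hco w hwB')
        rw [← h4]; exact hI)
  rcases this with h | h
  · exact (Finset.mem_compl.1 h.1) (hO.feas.sub hc0)
  · exact h.1.2 hc0

/-- after a swap at `v`, a connected piece touching `v` is again a triple -/
lemma swap_tri {E : Finset V → Prop} (mono : ∀ B B', B ⊆ B' → E B' → E B)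
    {B C S : Finset V} (hO : Opt G E B C) {v : V} (hv : v ∉ B) (hE : E (insert v B))
    (h3 : 3 ≤ (nb G B v).card) (hS : ∀ s ∈ S, s ∉ B) (hvS : v ∉ S) (hcon : Conn G S)
    {z t b c : V} (hz : z ∈ S) (hvz : G.Adj v z) (ht : t ∈ S) (hb : b ∈ B) (htb : G.Adj t b)
    (hc : c ∈ gm G B C b) (hcv : c ∉ Gam G B C {v}) : ∃ B', Tri G E B' C S := by
  obtain ⟨-, h2, B', hO', hvB', hsub, hg, hk⟩ := hO.swap mono hv hE h3
  refine ⟨B', hO', ?_, ⟨z, hz⟩, hcon, ?_⟩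
  · intro s hs hsB
    rcases Finset.mem_insert.1 (hsub hsB) with h | h
    · exact hvS (h ▸ hs)
    · exact hS s hs h
  · obtain ⟨hbB', hcb⟩ := hk b hb c hc hcv
    have : insert c (Gam G B C {v}) ⊆ Gam G B' C S := by
      apply Finset.insert_subset
      · exact mem_Gam.2 ⟨t, ht, b, hbB', htb, hcb⟩
      · intro d hd
        exact mem_Gam.2 ⟨z, hz, v, hvB', hvz.symm, hg hd⟩
    have := Finset.card_le_card this
    rw [Finset.card_insert_of_notMem hcv] at this
    omega

lemma final_contra {T : SimpleGraph W} (hT : T.IsTree) (hm : 0 < Fintype.card W)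
    (hG : KConnected G 3)
    (hdeg : ∀ v, Fintype.card W + 3 ≤ (nb G Finset.univ v).card) {B0 C0 : Finset V}
    (hO0 : Opt G (Em T G) B0 C0)
    (hH : ∀ B C, Opt G (Em T G) B C → Fintype.card W + 1 ≤ (Bᶜ).card) : False := by
  classical
  obtain ⟨S0, hS0⟩ := exists_tri Em.mono hG hO0 (Finset.card_pos.1 (by
    have := hH _ _ hO0; omega))
  have hex : ∃ n, ∃ B C S, Tri G (Em T G) B C S ∧ S.card = n := ⟨_, _, _, _, hS0, rfl⟩
  obtain ⟨B, C, S, hTri, hn⟩ := Nat.find_spec hex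
  have hmin : ∀ B' C' S', Tri G (Em T G) B' C' S' → S.card ≤ S'.card := by
    intro B' C' S' h'
    rw [hn]
    exact Nat.find_min' hex ⟨B', C', S', h', rfl⟩
  have hO := hTri.opt
  have hlow := opt_low hT hm hdeg hO (hH _ _ hO)
  have hGv : ∀ v, v ∉ B → (Gam G B C {v}).card ≤ 2 := by
    intro v hv
    refine hO.aug (by simpa using hv) (by simp) (conn_single v) ?_
    rw [Finset.union_comm]; exact (hlow v hv).2
  have hterm : ∀ v, v ∉ B → ∃ c t b, t ∈ S ∧ t ≠ v ∧ b ∈ B ∧ G.Adj t b ∧ c ∈ gm G B C b ∧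
      c ∉ Gam G B C {v} := by
    intro v hv
    have : ∃ c ∈ Gam G B C S, c ∉ Gam G B C {v} := by
      by_contra hno
      push Not at hno
      have h1 := Finset.card_le_card hno
      have h2 := hGv v hv
      have h3 := hTri.three
      omega
    obtain ⟨c, hc, hcv⟩ := this
    obtain ⟨t, ht, b, hb, htb, hcb⟩ := mem_Gam.1 hc
    refine ⟨c, t, b, ht, ?_, hb, htb, hcb, hcv⟩
    rintro rfl
    exact hcv (mem_Gam.2 ⟨t, by simp, b, hb, htb, hcb⟩)
  have hjk : ∀ v, v ∉ B → v ∉ S → (nb G S v).card + (nb G B v).card ≤ 4 := by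
    intro v hv hvS
    obtain ⟨hk3, hEv⟩ := hlow v hv
    rcases Finset.eq_empty_or_nonempty (nb G S v) with h0 | hj
    · rw [h0]; simp; omega
    by_cases hk : (nb G B v).card ≤ 2
    · have h1 := hO.nb_le Em.mono hk
      have h2 := hGv v hv
      obtain ⟨K, hK1, hK2, hK3, hK4, hK5⟩ := bound (B := B) (C := C) hTri.con hj
        (hTri.three.trans (Finset.card_le_card (Gam_mono (Finset.subset_insert _ _)))) (by omega)
      have := hmin B C K ⟨hO, (by
        intro s hs
        rcases Finset.mem_insert.1 (hK1 hs) with h | h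
        · rw [h]; exact hv
        · exact hTri.dis s h), ⟨v, hK2⟩, hK3, hK4⟩
      omega
    · obtain ⟨c, t, b, ht, htv, hb, htb, hcb, hcv⟩ := hterm v hv
      obtain ⟨K, z, k1, k2, k3, k4, k5, k6⟩ := geo hTri.con hj ht
      obtain ⟨B', hB'⟩ := swap_tri Em.mono hO hv hEv (by omega) (fun s hs => hTri.dis s (k1 hs))
        (fun h => hvS (k1 h)) k2 k4 k5 k3 hb htb hcb hcv
      have h1 := hmin _ _ _ hB'
      have h2 := Finset.card_le_card k6
      have h3 := Finset.card_insert_le z (S \ nb G S v)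
      have hs : nb G S v ⊆ S := fun w hw => (mem_nb.1 hw).1
      have h4 := Finset.card_sdiff_add_card_eq_card hs
      omega
  have hSB : S ⊆ Bᶜ := fun s hs => by simpa using hTri.dis s hs
  by_cases hSe : S = Bᶜ
  · have hc2 : 2 ≤ S.card := by
      rw [hSe]; have := hH _ _ hO; omega
    obtain ⟨v, hvS, hcon, hne⟩ := noncut hTri.con hc2
    have hv := hTri.dis v hvS
    obtain ⟨hk3, hEv⟩ := hlow v hv
    have hcE : (S.erase v).card + 1 = S.card := Finset.card_erase_add_one hvS
    have hj : (nb G (S.erase v) v).Nonempty := by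
      obtain ⟨w, hw⟩ := hne
      have hw' := Finset.mem_erase.1 hw
      by_contra hno
      rw [Finset.not_nonempty_iff_eq_empty] at hno
      have := (hTri.con v hvS w hw'.2).prop (I := fun x => x = v) rfl (by
        rintro x y hx hy hxy rfl
        by_contra hyx
        have : y ∈ nb G (S.erase x) x := mem_nb.2 ⟨Finset.mem_erase.2 ⟨hyx, hy⟩, hxy⟩
        rw [hno] at this
        simp at this)
      exact hw'.1 this
    have hsp := nb_split (G := G) B v
    rw [← hSe] at hsp
    have hnbe : (nb G S v).card ≤ (nb G (S.erase v) v).card := nb_card_le (by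
      intro w hw hvw
      exact Finset.mem_erase.2 ⟨hvw.ne.symm, hw⟩)
    have hd := hdeg v
    by_cases hk : (nb G B v).card ≤ 2
    · have h1 := hO.nb_le Em.mono hk
      have h2 := hGv v hv
      have hins : insert v (S.erase v) = S := Finset.insert_erase hvS
      obtain ⟨K, hK1, hK2, hK3, hK4, hK5⟩ := bound (B := B) (C := C) hcon hj
        (by rw [hins]; exact hTri.three) (by omega)
      rw [hins] at hK1
      have := hmin B C K ⟨hO, fun s hs => hTri.dis s (hK1 hs), ⟨v, hK2⟩, hK3, hK4⟩
      omega
    · obtain ⟨c, t, b, ht, htv, hb, htb, hcb, hcv⟩ := hterm v hv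
      obtain ⟨z, hz⟩ := hj
      obtain ⟨B', hB'⟩ := swap_tri Em.mono hO hv hEv (by omega)
        (fun s hs => hTri.dis s (Finset.mem_of_mem_erase hs))
        (by simp) hcon (mem_nb.1 hz).1 (mem_nb.1 hz).2 (Finset.mem_erase.2 ⟨htv, ht⟩) hb htb hcb hcv
      have h1 := hmin _ _ _ hB'
      omega
  · have hRne : (Bᶜ \ S).Nonempty := by
      rw [Finset.sdiff_nonempty]
      exact fun h => hSe (Finset.Subset.antisymm hSB h)
    obtain ⟨f, hf, hfR⟩ := greedy hT G (Bᶜ \ S) hRne (by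
      intro x hx
      rw [Finset.mem_sdiff, Finset.mem_compl] at hx
      have h1 := hjk x hx.1 hx.2
      have h2 := nb_split (G := G) B x
      have h3 := hdeg x
      have h4 := nb_card_union (G := G) (Bᶜ \ S) S x
      rw [Finset.sdiff_union_of_subset hSB] at h4
      omega)
    have := hO.aug hTri.dis hTri.ne hTri.con (⟨f, hf, fun t => by
      have := hfR t
      rw [Finset.mem_sdiff, Finset.mem_compl] at this
      rw [Finset.mem_union]
      exact fun h => h.elim this.1 this.2⟩ : Em T G (B ∪ S))
    have h3 := hTri.three
    omega

lemma main_aux {T : SimpleGraph W} (hT : T.IsTree) (hm : 0 < Fintype.card W)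
    (hG : KConnected G 3)
    (hdeg : ∀ v, Fintype.card W + 3 ≤ (nb G Finset.univ v).card) :
    ∃ f : W → V, TEmb T G f ∧ KConnected (G.induce ((Set.range f)ᶜ)) 3 := by
  classical
  have hcV : 4 ≤ Fintype.card V := by
    have := hG.1
    rwa [Nat.card_eq_fintype_card] at this
  have : Nonempty V := Fintype.card_pos_iff.1 (by omega)
  obtain ⟨f0, hf0, -⟩ := greedy hT G Finset.univ Finset.univ_nonempty (fun x _ => by
    have := hdeg x; omega)
  have him : (Finset.univ.image f0).card = Fintype.card W := by
    rw [Finset.card_image_of_injective _ hf0.1, Finset.card_univ]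
  have hF : ∃ B C, Feas G (Em T G) B C := by
    obtain ⟨C, h1, h2, h3⟩ := exists_core G (Finset.univ \ Finset.univ.image f0) (by
      rw [Finset.sdiff_nonempty]
      intro h
      have h1 := Finset.card_le_card h
      rw [him] at h1
      obtain ⟨v⟩ := ‹Nonempty V›
      have h2 := hdeg v
      have h3 := nb_notself (G := G) (Finset.mem_univ v)
      omega) (by
      intro v _
      have h1 := hdeg v
      have h2 := nb_card_sdiff (G := G) Finset.univ (Finset.univ.image f0) v
      omega)
    exact ⟨_, C, h1, h2, h3, f0, hf0, fun t => by simp⟩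
  obtain ⟨B0, C0, hO0⟩ := exists_opt hF
  by_cases hH : ∀ B C, Opt G (Em T G) B C → Fintype.card W + 1 ≤ (Bᶜ).card
  · exact (final_contra hT hm hG hdeg hO0 hH).elim
  push Not at hH
  obtain ⟨B, C, hO, hc⟩ := hH
  obtain ⟨f, hf, hfB⟩ := hO.feas.emb
  have him' : (Finset.univ.image f).card = Fintype.card W := by
    rw [Finset.card_image_of_injective _ hf.1, Finset.card_univ]
  have heq : Finset.univ.image f = Bᶜ := by
    apply Finset.eq_of_subset_of_card_le
    · intro v hv
      obtain ⟨t, -, rfl⟩ := Finset.mem_image.1 hv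
      simpa using hfB t
    · omega
  have hBC : B = C := by
    refine Finset.Subset.antisymm ?_ hO.feas.sub
    intro z hz
    by_contra hzC
    have h1 := hO.deg_le Em.mono hz hzC
    have h2 := nb_split (G := G) B z
    have h3 := hdeg z
    have h4 : (nb G Bᶜ z).card ≤ (Bᶜ).card := Finset.card_le_card (fun w hw => (mem_nb.1 hw).1)
    omega
  refine ⟨f, hf, insep_kc (B := B) ?_ ?_ ?_⟩
  · have := hO.feas.ins; rwa [← hBC] at this
  · have := hO.feas.four; rwa [← hBC] at this
  · ext v
    have : v ∈ Finset.univ.image f ↔ v ∈ Bᶜ := by rw [heq]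
    simp only [Finset.mem_image, Finset.mem_univ, true_and, Finset.mem_compl] at this
    rw [Set.mem_compl_iff, Set.mem_range, this]
    simp

end fin

theorem stmt_13 {V W : Type*} [Fintype V] [DecidableEq V] [Fintype W]
    (G : SimpleGraph V) [DecidableRel G.Adj] (m : ℕ) (hm : 0 < m)
    (T : SimpleGraph W) (hT : T.IsTree) (hTcard : Fintype.card W = m)
    (hG : KConnected G 3)
    (hδ : ∀ v : V, m + 3 ≤ G.degree v) :
    ∃ f : W → V, Function.Injective f ∧
      (∀ a b : W, T.Adj a b → G.Adj (f a) (f b)) ∧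
      KConnected (G.induce ((Set.range f)ᶜ)) 3 := by
  classical
  subst hTcard
  obtain ⟨f, hf, hk⟩ := main_aux hT hm hG (fun v => by
    refine (hδ v).trans (le_of_eq ?_)
    rw [← SimpleGraph.card_neighborFinset_eq_degree]
    congr 1
    ext w
    rw [mem_nb]
    simp)
  exact ⟨f, hf.1, hf.2, hk⟩
end

section
/- For every positive integer m and every tree T of order m, every connected finite simple graph G with minimum degree δ(G) ≥ m contains a subgraph T′ isomorphic to T such that G − V(T′) is still connected. -/
open Relation

/-- rooted structure on a tree -/
structure RT {τ : Type*} (T : SimpleGraph τ) (r : τ) (par : τ → τ) (dp : τ → ℕ) : Prop where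
  root : par r = r
  adj : ∀ t, t ≠ r → T.Adj (par t) t
  lt : ∀ t, t ≠ r → dp (par t) < dp t
  edge : ∀ a b, T.Adj a b → (a ≠ r ∧ par a = b) ∨ (b ≠ r ∧ par b = a)

theorem RT_exists {τ : Type*} (T : SimpleGraph τ) (hT : T.IsTree) (r : τ) :
    ∃ par dp, RT T r par dp := by
  classical
  have hp : ∀ t, ∃ p : T.Walk r t, p.IsPath := fun t => (hT.existsUnique_path r t).exists
  choose p hp using hp
  have hnil : p r = SimpleGraph.Walk.nil := by
    exact SimpleGraph.Walk.Nil.eq_nil (SimpleGraph.Walk.isPath_iff_nil.1 (hp r))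
  have hnn : ∀ t, t ≠ r → ¬ (p t).Nil := fun t ht h => ht h.eq.symm
  refine ⟨fun t => (p t).penultimate, fun t => (p t).length, ?_, ?_, ?_, ?_⟩
  · simp [hnil]
  · intro t ht
    exact SimpleGraph.Walk.adj_penultimate (hnn t ht)
  · intro t ht
    have h1 := SimpleGraph.Walk.adj_penultimate (hnn t ht)
    have h2 : (p t).penultimate ∈ (p t).support :=
      List.mem_of_mem_dropLast (SimpleGraph.Walk.penultimate_mem_dropLast_support (hnn t ht))
    have h3 := hT.isAcyclic.path_concat (hp _) (hp t) h1 h2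
    have h4 := congrArg SimpleGraph.Walk.length h3
    rw [SimpleGraph.Walk.length_concat] at h4
    omega
  · intro a b hab
    by_cases hb : b ∈ (p a).support
    · left
      refine ⟨?_, (hT.isAcyclic.eq_penultimate_of_adj_end (hp a) hab hb).symm⟩
      rintro rfl
      rw [hnil] at hb
      simp at hb
      exact hab.ne hb.symm
    · right
      have h1 := hT.isAcyclic.mem_support_of_ne_mem_support_of_adj_of_isPath (hp b) (hp a) hab.symm hb
      refine ⟨?_, (hT.isAcyclic.eq_penultimate_of_adj_end (hp b) hab.symm h1).symm⟩
      rintro rfl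
      rw [hnil] at h1
      simp at h1
      exact hab.ne h1

/-- ancestor relation (reflexive) -/
def Anc {τ : Type*} (r : τ) (par : τ → τ) (a t : τ) : Prop :=
  ReflTransGen (fun x y => y ≠ r ∧ par y = x) a t

section anc
variable {τ : Type*} {T : SimpleGraph τ} {r : τ} {par : τ → τ} {dp : τ → ℕ}

theorem Anc.refl' (a : τ) : Anc r par a a := ReflTransGen.refl

theorem Anc.trans' {a b c : τ} (h : Anc r par a b) (h2 : Anc r par b c) : Anc r par a c :=
  ReflTransGen.trans h h2

theorem Anc.par_self {t : τ} (ht : t ≠ r) : Anc r par (par t) t :=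
  ReflTransGen.single ⟨ht, rfl⟩

theorem Anc.up {a t : τ} (h : Anc r par a t) (hne : a ≠ t) : t ≠ r ∧ Anc r par a (par t) := by
  rcases ReflTransGen.cases_tail h with h | ⟨c, h1, h2, h3⟩
  · exact absurd h.symm hne
  · subst h3; exact ⟨h2, h1⟩

theorem Anc.down {a t : τ} (h : Anc r par a t) (hne : a ≠ t) :
    ∃ c, c ≠ r ∧ par c = a ∧ Anc r par c t := by
  rcases ReflTransGen.cases_head h with h | ⟨c, ⟨h1, h2⟩, h3⟩
  · exact absurd h hne
  · exact ⟨c, h1, h2, h3⟩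

theorem Anc.dp_le (H : RT T r par dp) {a t : τ} (h : Anc r par a t) : dp a ≤ dp t := by
  induction h with
  | refl => exact le_rfl
  | tail _ h2 ih => 
    have := H.lt _ h2.1
    rw [h2.2] at this
    omega

theorem Anc.dp_lt (H : RT T r par dp) {a t : τ} (h : Anc r par a t) (hne : a ≠ t) :
    dp a < dp t := by
  obtain ⟨h1, h2⟩ := h.up hne
  exact lt_of_le_of_lt (h2.dp_le H) (H.lt _ h1)

theorem Anc.of_root {a : τ} (h : Anc r par a r) : a = r := by
  by_contra hne
  exact (h.up hne).1 rfl

theorem Anc.root (H : RT T r par dp) (t : τ) : Anc r par r t := by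
  induction hn : dp t using Nat.strong_induction_on generalizing t with
  | _ n ih =>
    by_cases ht : t = r
    · subst ht; exact Anc.refl' _
    · exact (ih _ (hn ▸ H.lt t ht) (par t) rfl).trans' (Anc.par_self ht)

theorem Anc.comparable {a b t : τ} (h : Anc r par a t) (h2 : Anc r par b t) :
    Anc r par a b ∨ Anc r par b a := by
  induction h with
  | refl => right; exact h2
  | @tail c d h3 h4 ih =>
    by_cases hb : b = d
    · left; subst hb; exact ReflTransGen.tail h3 h4
    · apply ih
      have := (h2.up hb).2
      rwa [h4.2] at this

/-- every vertex has a leaf below it -/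
theorem leaf_exists [Fintype τ] (H : RT T r par dp) (t : τ) :
    ∃ l, Anc r par t l ∧ ∀ s, s ≠ r → par s ≠ l := by
  classical
  obtain ⟨l, hl, hmax⟩ := Finset.exists_max_image (Finset.univ.filter (fun s => Anc r par t s)) dp
    ⟨t, by simp [Anc.refl']⟩
  simp only [Finset.mem_filter, Finset.mem_univ, true_and] at hl hmax
  refine ⟨l, hl, fun s hs h => ?_⟩
  have h1 := hmax s (hl.trans' (h ▸ Anc.par_self hs))
  have h2 := H.lt s hs
  rw [h] at h2
  omega
end anc

/-- partial embedding -/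
def Valid {τ V : Type*} (G : SimpleGraph V) (r : τ) (par : τ → τ) (φ : τ → V) (P : Finset τ) : Prop :=
  Set.InjOn φ P ∧ ∀ t ∈ P, t ≠ r → G.Adj (φ (par t)) (φ t)

theorem ext_lemma_s14 {τ V : Type*} [DecidableEq τ] [DecidableEq V] {T : SimpleGraph τ} {r : τ}
    {par : τ → τ} {dp : τ → ℕ}
    (H : RT T r par dp) (G : SimpleGraph V) (P' : Finset τ) (Ok : τ → V → Prop)
    (hP' : ∀ t ∈ P', par t ∈ P') (n : ℕ) : ∀ (P : Finset τ) (φ : τ → V), (P' \ P).card = n → P ⊆ P' →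
    r ∈ P → (∀ t ∈ P, par t ∈ P) → Valid G r par φ P →
    (∀ t ∈ P', t ∉ P → par t ∈ P → Ok (par t) (φ (par t))) →
    (∀ X : Finset V, P.image φ ⊆ X → X.card < P'.card → ∀ t ∈ P', t ∉ P → ∀ v ∈ X,
      Ok (par t) v → ∃ q, q ∉ X ∧ G.Adj v q ∧ Ok t q) →
    ∃ φ' : τ → V, (∀ t ∈ P, φ' t = φ t) ∧ Valid G r par φ' P' ∧ ∀ t ∈ P', t ∉ P → Ok t (φ' t) := by
  induction n with
  | zero =>
    intro P φ hc hsub hr hP hv hOk hstep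
    have : P = P' := by
      apply Finset.Subset.antisymm hsub
      rw [Finset.card_eq_zero, Finset.sdiff_eq_empty_iff_subset] at hc
      exact hc
    subst this
    exact ⟨φ, fun _ _ => rfl, hv, fun t h1 h2 => absurd h1 h2⟩
  | succ n ih =>
    intro P φ hc hsub hr hP hv hOk hstep
    have hne : (P' \ P).Nonempty := by
      rw [← Finset.card_pos]; omega
    obtain ⟨t, ht, hmin⟩ := Finset.exists_min_image _ dp hne
    rw [Finset.mem_sdiff] at ht
    have htr : t ≠ r := fun h => ht.2 (h ▸ hr)
    have hpt : par t ∈ P := by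
      by_contra hcon
      have := hmin (par t) (Finset.mem_sdiff.2 ⟨hP' t ht.1, hcon⟩)
      have := H.lt t htr
      omega
    have hcard : (P.image φ).card < P'.card := by
      refine lt_of_le_of_lt Finset.card_image_le (Finset.card_lt_card ?_)
      exact ⟨hsub, fun h => ht.2 (h ht.1)⟩
    obtain ⟨q, hq, hadj, hokq⟩ := hstep (P.image φ) (Finset.Subset.refl _) hcard t ht.1 ht.2 (φ (par t))
      (Finset.mem_image_of_mem _ hpt) (hOk t ht.1 ht.2 hpt)
    have hupd : ∀ s ∈ P, Function.update φ t q s = φ s := by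
      intro s hs
      rw [Function.update_of_ne]
      rintro rfl; exact ht.2 hs
    have hqn : ∀ s ∈ P, φ s ≠ q := fun s hs h => hq (h ▸ Finset.mem_image_of_mem _ hs)
    have himg : P.image φ ⊆ (insert t P).image (Function.update φ t q) := by
      intro x hx
      obtain ⟨s, hs, rfl⟩ := Finset.mem_image.1 hx
      exact Finset.mem_image.2 ⟨s, Finset.mem_insert_of_mem hs, hupd s hs⟩
    have key : ∃ φ' : τ → V, (∀ s ∈ insert t P, φ' s = Function.update φ t q s) ∧
        Valid G r par φ' P' ∧ ∀ s ∈ P', s ∉ insert t P → Ok s (φ' s) := by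
      refine ih (insert t P) (Function.update φ t q) ?_ ?_ ?_ ?_ ?_ ?_ ?_
      · have : P' \ insert t P = (P' \ P).erase t := by
          ext x; simp; tauto
        rw [this, Finset.card_erase_of_mem (Finset.mem_sdiff.2 ht), hc]
        omega
      · exact Finset.insert_subset ht.1 hsub
      · exact Finset.mem_insert_of_mem hr
      · intro s hs
        rcases Finset.mem_insert.1 hs with rfl | hs
        · exact Finset.mem_insert_of_mem hpt
        · exact Finset.mem_insert_of_mem (hP s hs)
      · constructor
        · intro a ha b hb hab
          simp only [Finset.coe_insert, Set.mem_insert_iff, Finset.mem_coe] at ha hb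
          rcases ha with rfl | ha <;> rcases hb with rfl | hb
          · rfl
          · rw [hupd b hb, Function.update_self] at hab
            exact absurd hab.symm (hqn b hb)
          · rw [hupd a ha, Function.update_self] at hab
            exact absurd hab (hqn a ha)
          · rw [hupd a ha, hupd b hb] at hab
            exact hv.1 ha hb hab
        · intro s hs hsr
          rcases Finset.mem_insert.1 hs with rfl | hs
          · rw [hupd _ hpt, Function.update_self]; exact hadj
          · rw [hupd _ (hP s hs), hupd s hs]; exact hv.2 s hs hsr
      · intro s hs hsP hps
        rcases Finset.mem_insert.1 hps with h | h
        · rw [h, Function.update_self]; exact hokq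
        · rw [hupd _ h]
          exact hOk s hs (fun h' => hsP (Finset.mem_insert_of_mem h')) h
      · intro X hX hXc s hs hsP
        exact hstep X (himg.trans hX) hXc s hs (fun h' => hsP (Finset.mem_insert_of_mem h'))
    obtain ⟨φ', h1, h2, h3⟩ := key
    refine ⟨φ', fun s hs => (h1 s (Finset.mem_insert_of_mem hs)).trans (hupd s hs), h2, ?_⟩
    intro s hs hsP
    by_cases hst : s = t
    · subst hst
      rw [h1 s (Finset.mem_insert_self _ _)]
      simpa using hokq
    · exact h3 s hs (by simp [hst, hsP])

theorem nbr_helper {V : Type*} [Fintype V] [DecidableEq V] (G : SimpleGraph V) [DecidableRel G.Adj]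
    (X : Finset V) (v : V) (hv : v ∈ X) (h : X.card ≤ G.degree v) : ∃ q, q ∉ X ∧ G.Adj v q := by
  by_contra hcon
  push Not at hcon
  have hsub : G.neighborFinset v ⊆ X.erase v := by
    intro q hq
    rw [SimpleGraph.mem_neighborFinset] at hq
    rw [Finset.mem_erase]
    refine ⟨hq.ne', ?_⟩
    by_contra h'
    exact hcon q h' hq
  have := Finset.card_le_card hsub
  rw [Finset.card_erase_of_mem hv, SimpleGraph.card_neighborFinset_eq_degree] at this
  have : 0 < X.card := Finset.card_pos.2 ⟨v, hv⟩
  omega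

theorem valid_hom {τ V : Type*} [Fintype τ] {T : SimpleGraph τ} {r : τ} {par : τ → τ} {dp : τ → ℕ}
    (H : RT T r par dp) (G : SimpleGraph V) (φ : τ → V) (h : Valid G r par φ Finset.univ) :
    Function.Injective φ ∧ ∀ a b, T.Adj a b → G.Adj (φ a) (φ b) := by
  refine ⟨fun a b hab => h.1 (by simp) (by simp) hab, fun a b hab => ?_⟩
  rcases H.edge a b hab with ⟨h1, h2⟩ | ⟨h1, h2⟩
  · subst h2; exact (h.2 a (by simp) h1).symm
  · subst h2; exact h.2 b (by simp) h1

/-- vertices above a marked vertex (plus the root) -/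
def HdP {τ : Type*} (r : τ) (par : τ → τ) (A : τ → Prop) (t : τ) : Prop :=
  t = r ∨ ∃ a, A a ∧ Anc r par t a

/-- children of marked vertices with no marked vertex below -/
def ZP {τ : Type*} (r : τ) (par : τ → τ) (A : τ → Prop) (t : τ) : Prop :=
  t ≠ r ∧ A (par t) ∧ ¬ ∃ a, A a ∧ Anc r par t a

theorem HdP.par' {τ : Type*} {r : τ} {par : τ → τ} {A : τ → Prop} {t : τ}
    (h : HdP r par A t) (ht : t ≠ r) : HdP r par A (par t) := by
  rcases h with h | ⟨a, h1, h2⟩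
  · exact absurd h ht
  · exact Or.inr ⟨a, h1, (Anc.par_self ht).trans' h2⟩

theorem ZP.not_Hd {τ : Type*} {r : τ} {par : τ → τ} {A : τ → Prop} {t : τ}
    (h : ZP r par A t) : ¬ HdP r par A t := by
  rintro (h' | h')
  · exact h.1 h'
  · exact h.2.2 h'

theorem closure_lemma {τ V : Type*} [DecidableEq τ] [DecidableEq V] {r : τ}
    {par : τ → τ} (G : SimpleGraph V) (f : τ → V) (A : τ → Prop)
    (B : Finset τ) (hB : ∀ t, t ∈ B ↔ HdP r par A t ∨ ZP r par A t) (hf : Valid G r par f B) :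
    ∃ Cl : (τ → V) → Prop, Cl f ∧
      (∀ φ, Cl φ → Valid G r par φ B ∧ ∀ t, HdP r par A t → φ t = f t) ∧
      (∀ t, ZP r par A t → (∃ φ q, Cl φ ∧ q ∉ B.image φ ∧ G.Adj (f (par t)) q) →
        ∀ φ, Cl φ → ∃ φ', Cl φ' ∧ φ t ∉ B.image φ') := by
  let Sh : (τ → V) → (τ → V) → Prop := fun φ φ' =>
    ∃ t q, ZP r par A t ∧ q ∉ B.image φ ∧ G.Adj (f (par t)) q ∧ φ' = Function.update φ t q
  let Cl : (τ → V) → Prop := fun φ => ReflTransGen Sh f φ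
  have hinv : ∀ φ, Cl φ → Valid G r par φ B ∧ ∀ t, HdP r par A t → φ t = f t := by
    intro φ h
    induction h with
    | refl => exact ⟨hf, fun _ _ => rfl⟩
    | @tail φ φ' h1 h2 ih =>
      obtain ⟨t, q, hz, hq, hadj, rfl⟩ := h2
      obtain ⟨⟨ih1, ih2⟩, ih3⟩ := ih
      have hqn : ∀ s ∈ B, φ s ≠ q := fun s hs h => hq (h ▸ Finset.mem_image_of_mem _ hs)
      have hHd : HdP r par A (par t) := Or.inr ⟨_, hz.2.1, Anc.refl' _⟩
      have hnt : ∀ s, HdP r par A s → s ≠ t := fun s hs h => hz.not_Hd (h ▸ hs)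
      refine ⟨⟨?_, ?_⟩, ?_⟩
      · intro a ha b hb hab
        rw [Finset.mem_coe] at ha hb
        by_cases hat : a = t <;> by_cases hbt : b = t
        · rw [hat, hbt]
        · subst hat
          rw [Function.update_self, Function.update_of_ne hbt] at hab
          exact absurd hab.symm (hqn b hb)
        · subst hbt
          rw [Function.update_self, Function.update_of_ne hat] at hab
          exact absurd hab (hqn a ha)
        · rw [Function.update_of_ne hat, Function.update_of_ne hbt] at hab
          exact ih1 ha hb hab
      · intro s hs hsr
        have hps : HdP r par A (par s) := by
          rcases (hB s).1 hs with h | h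
          · exact h.par' hsr
          · exact Or.inr ⟨_, h.2.1, Anc.refl' _⟩
        rw [Function.update_of_ne (hnt _ hps)]
        by_cases hst : s = t
        · subst hst
          rw [Function.update_self, ih3 _ hHd]; exact hadj
        · rw [Function.update_of_ne hst]; exact ih2 s hs hsr
      · intro s hs
        rw [Function.update_of_ne (hnt s hs)]; exact ih3 s hs
  have hfree : ∀ φ t q, Cl φ → ZP r par A t → q ∉ B.image φ →
      φ t ∉ B.image (Function.update φ t q) := by
    intro φ t q hφ hz hq hmem
    have htB : t ∈ B := (hB t).2 (Or.inr hz)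
    obtain ⟨s, hs, hst⟩ := Finset.mem_image.1 hmem
    by_cases h : s = t
    · subst h
      rw [Function.update_self] at hst
      exact hq (hst ▸ Finset.mem_image_of_mem _ htB)
    · rw [Function.update_of_ne h] at hst
      exact h ((hinv φ hφ).1.1 hs htB hst)
  have hiff : ∀ t, ZP r par A t → ∀ φ, Cl φ →
      ((∃ φ', Cl φ' ∧ φ t ∉ B.image φ') ↔ (∃ φ', Cl φ' ∧ f t ∉ B.image φ')) := by
    intro t hz φ h
    induction h with
    | refl => exact Iff.rfl
    | @tail φ φ' h1 h2 ih =>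
      obtain ⟨s, q, hzs, hq, hadj, rfl⟩ := h2
      rw [← ih]
      by_cases hts : t = s
      · subst hts
        rw [Function.update_self]
        exact ⟨fun _ => ⟨_, ReflTransGen.tail h1 ⟨t, q, hzs, hq, hadj, rfl⟩,
          hfree φ t q h1 hz hq⟩, fun _ => ⟨φ, h1, hq⟩⟩
      · rw [Function.update_of_ne hts]
  refine ⟨Cl, ReflTransGen.refl, hinv, ?_⟩
  rintro t hz ⟨φ₂, q, h2, hq, hadj⟩ φ hφ
  rw [hiff t hz φ hφ, ← hiff t hz φ₂ h2]
  exact ⟨_, ReflTransGen.tail h2 ⟨t, q, hz, hq, hadj, rfl⟩, hfree φ₂ t q h2 hz hq⟩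

set_option maxHeartbeats 4000000 in
theorem core_rooted {τ V : Type*} [Fintype τ] [DecidableEq τ] [Fintype V] [DecidableEq V]
    {T : SimpleGraph τ} {r : τ} {par : τ → τ} {dp : τ → ℕ}
    (H : RT T r par dp) (G : SimpleGraph V) [DecidableRel G.Adj] (N : Finset V)
    (hdeg : ∀ q, q ∉ N → Fintype.card τ ≤ G.degree q) (f : τ → V)
    (hf : Valid G r par f Finset.univ)
    (hr : f r ∉ N ∨ ∃ q, (∀ t, f t ≠ q) ∧ G.Adj (f r) q)
    (ha : ∃ a, f a ∈ N ∧ a ≠ r) (hN : ∀ v ∈ N, ∃ a, f a = v) :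
    ∃ f' : τ → V, Valid G r par f' Finset.univ ∧ ∃ v ∈ N, ∀ t, f' t ≠ v := by
  classical
  set A : τ → Prop := fun a => f a ∈ N with hA
  set B : Finset τ := Finset.univ.filter (fun t => HdP r par A t ∨ ZP r par A t) with hBdef
  have hB : ∀ t, t ∈ B ↔ HdP r par A t ∨ ZP r par A t := fun t => by simp [hBdef]
  have hAHd : ∀ t, A t → HdP r par A t := fun t h => Or.inr ⟨t, h, Anc.refl' _⟩
  have hAB : ∀ t, A t → t ∈ B := fun t h => (hB t).2 (Or.inl (hAHd t h))
  have hrB : r ∈ B := (hB r).2 (Or.inl (Or.inl rfl))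
  have hBpar : ∀ t ∈ B, par t ∈ B := by
    intro t ht
    by_cases htr : t = r
    · subst htr; rw [H.root]; exact ht
    · rcases (hB t).1 ht with h | h
      · exact (hB _).2 (Or.inl (h.par' htr))
      · exact hAB _ h.2.1
  have hchild : ∀ t, t ≠ r → A (par t) → t ∈ B := by
    intro t htr h
    rw [hB]
    by_cases h' : ∃ a, A a ∧ Anc r par t a
    · exact Or.inl (Or.inr h')
    · exact Or.inr ⟨htr, h, h'⟩
  have hfB : Valid G r par f B :=
    ⟨fun a _ b _ hab => hf.1 (by simp) (by simp) hab, fun t _ => hf.2 t (by simp)⟩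
  obtain ⟨Cl, hCf, hCinv, hslot⟩ := closure_lemma G f A B hB hfB
  set Fr : V → Prop := fun v => ∃ φ, Cl φ ∧ v ∉ B.image φ with hFr
  set Om : τ → Prop := fun a => A a ∧ ∀ v, Fr v → ¬ G.Adj (f a) v with hOm
  set E : τ → Prop := fun u => u ≠ r ∧ ¬ Om (par u) ∧ ∃ a, A a ∧ Anc r par u a with hE
  have hrOm : ¬ Om r := by
    rintro ⟨h1, h2⟩
    rcases hr with h | ⟨q, hq, hadj⟩
    · exact h h1
    · refine h2 q ⟨f, hCf, fun h => ?_⟩ hadj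
      obtain ⟨t, _, ht⟩ := Finset.mem_image.1 h
      exact hq t ht
  have hEne : ∃ u, E u := by
    obtain ⟨a, ha1, ha2⟩ := ha
    obtain ⟨c, hc1, hc2, hc3⟩ := (Anc.root H a).down (Ne.symm ha2)
    exact ⟨c, hc1, by rw [hc2]; exact hrOm, a, ha1, hc3⟩
  obtain ⟨u, huE, humax⟩ : ∃ u, E u ∧ ∀ t, E t → dp t ≤ dp u := by
    obtain ⟨u0, hu0⟩ := hEne
    obtain ⟨u, h1, h2⟩ := Finset.exists_max_image (Finset.univ.filter E) dp ⟨u0, by simpa using hu0⟩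
    refine ⟨u, by simpa using h1, fun t ht => h2 t (by simpa using ht)⟩
  obtain ⟨hur, hyOm, a0, ha0A, ha0⟩ := huE
  have huHd : HdP r par A u := Or.inr ⟨a0, ha0A, ha0⟩
  have hyHd : HdP r par A (par u) := huHd.par' hur
  obtain ⟨φ, q, hCφ, hqφ, hadjq⟩ : ∃ φ q, Cl φ ∧ q ∉ B.image φ ∧ G.Adj (f (par u)) q := by
    by_cases hyN : A (par u)
    · have : ∃ v, Fr v ∧ G.Adj (f (par u)) v := by
        by_contra hcon
        push Not at hcon
        exact hyOm ⟨hyN, hcon⟩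
      obtain ⟨v, ⟨φ, h1, h2⟩, h3⟩ := this
      exact ⟨φ, v, h1, h2, h3⟩
    · obtain ⟨q, hq, hadj⟩ := nbr_helper G (B.image f) (f (par u))
        (Finset.mem_image_of_mem _ ((hB _).2 (Or.inl hyHd)))
        ((Finset.card_image_le.trans (Finset.card_le_univ _)).trans (hdeg _ hyN))
      exact ⟨f, q, hCf, hq, hadj⟩
  obtain ⟨hφV, hφHd⟩ := hCinv φ hCφ
  have hFrφ : ∀ v, v ∉ B.image φ → Fr v := fun v hv => ⟨φ, hCφ, hv⟩
  have hNφ : ∀ v ∈ N, v ∈ B.image φ := by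
    intro v hv
    obtain ⟨a, rfl⟩ := hN v hv
    have hAa : A a := hv
    exact Finset.mem_image.2 ⟨a, hAB a hAa, hφHd a (hAHd a hAa)⟩
  have hφN : ∀ t ∈ B, φ t ∈ N → A t := by
    intro t ht h
    obtain ⟨a, hfa⟩ := hN _ h
    have hAa : A a := by show f a ∈ N; rw [hfa]; exact h
    have : a = t := hφV.1 (hAB a hAa) ht (by rw [hφHd a (hAHd a hAa), hfa])
    exact this ▸ hAa
  have hqN : q ∉ N := fun h => hqφ (hNφ q h)
  set S : τ → Prop := fun t => Anc r par u t with hS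
  have hSr : ∀ t, S t → t ≠ r := by
    rintro t ht rfl
    exact hur (Anc.of_root ht)
  have hSup : ∀ t, t ≠ r → S (par t) → S t := fun t ht h => Anc.trans' h (Anc.par_self ht)
  have hSdp : ∀ t, S t → t ≠ u → dp u < dp t := fun t ht h => Anc.dp_lt H ht (Ne.symm h)
  have hSpar : ∀ t, S t → t ≠ u → S (par t) := fun t ht h => (Anc.up ht (Ne.symm h)).2
  have hyS : ¬ S (par u) := by
    intro h
    have := Anc.dp_le H h
    have := H.lt u hur
    omega
  have hnotE : ∀ t, S t → t ≠ u → ¬ E t := by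
    intro t h1 h2 h3
    have := humax t h3
    have := hSdp t h1 h2
    omega
  set Y : Finset τ := Finset.univ.filter (fun t => S t ∧ ¬ Om t ∧ (t = u ∨ Om (par t))) with hYdef
  have hY : ∀ t, t ∈ Y ↔ S t ∧ ¬ Om t ∧ (t = u ∨ Om (par t)) := fun t => by simp [hYdef]
  have claim1 : ∀ t, S t → A t → Om t ∨ t ∈ Y := by
    intro t hSt hAt
    by_contra hcon
    push Not at hcon
    obtain ⟨h1, h2⟩ := hcon
    rw [hY] at h2
    have h3 : t ≠ u := fun h => h2 ⟨hSt, h1, Or.inl h⟩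
    have h4 : ¬ Om (par t) := fun h => h2 ⟨hSt, h1, Or.inr h⟩
    exact hnotE t hSt h3 ⟨hSr t hSt, h4, t, hAt, Anc.refl' _⟩
  have claim2 : ∀ t ∈ B, S t → ¬ Om t → t ∉ Y → Fr (φ t) := by
    intro t htB hSt h1 h2
    rw [hY] at h2
    have h3 : t ≠ u := fun h => h2 ⟨hSt, h1, Or.inl h⟩
    have h4 : ¬ Om (par t) := fun h => h2 ⟨hSt, h1, Or.inr h⟩
    have h5 : ¬ ∃ a, A a ∧ Anc r par t a := fun h => hnotE t hSt h3 ⟨hSr t hSt, h4, h⟩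
    have hZ : ZP r par A t := by
      rcases (hB t).1 htB with (h | h) | h
      · exact absurd h (hSr t hSt)
      · exact absurd h h5
      · exact h
    refine hslot t hZ ?_ φ hCφ
    by_contra hcon
    apply h4
    refine ⟨hZ.2.1, fun v ⟨φ2, hv1, hv2⟩ hadj => hcon ⟨φ2, v, hv1, hv2, hadj⟩⟩
  have claim3 : ∀ t ∈ Y, ∀ t' ∈ Y, Anc r par t t' → t = t' := by
    intro t ht t' ht' hanc
    by_contra hne
    rw [hY] at ht ht'
    have hne2 : t' ≠ u := by
      rintro rfl
      have h1 := Anc.dp_lt H hanc hne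
      have h2 := Anc.dp_le H ht.1
      omega
    have hOmp : Om (par t') := ht'.2.2.resolve_left hne2
    have h1 := (hanc.up hne).2
    have h2 : t ≠ par t' := fun h => ht.2.1 (h ▸ hOmp)
    obtain ⟨c, hc1, hc2, hc3⟩ := h1.down h2
    have hSc : S c := hSup c hc1 (hc2 ▸ ht.1)
    have hcu : c ≠ u := by
      rintro rfl
      rw [hc2] at hyS
      exact hyS ht.1
    exact hnotE c hSc hcu ⟨hc1, by rw [hc2]; exact ht.2.1, _, hOmp.1, hc3⟩
  choose lf hlf1 hlf2 using leaf_exists H (τ := τ)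
  set Lf : Finset τ := Y.image lf with hLfdef
  have hLfcard : Lf.card = Y.card := by
    apply Finset.card_image_of_injOn
    intro s hs t ht hst
    have h1 := hlf1 s
    have h2 := hlf1 t
    have hst' : lf s = lf t := hst
    rw [hst'] at h1
    rcases h1.comparable h2 with h | h
    · exact claim3 s hs t ht h
    · exact (claim3 t ht s hs h).symm
  have hLfS : ∀ l ∈ Lf, S l := by
    intro l hl
    obtain ⟨t, ht, rfl⟩ := Finset.mem_image.1 hl
    exact Anc.trans' ((hY t).1 ht).1 (hlf1 t)
  have hLfleaf : ∀ l ∈ Lf, ∀ s, s ≠ r → par s ≠ l := by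
    intro l hl
    obtain ⟨t, ht, rfl⟩ := Finset.mem_image.1 hl
    exact hlf2 t
  have hrS : ¬ S r := fun h => hSr r h rfl
  -- first use of the extension lemma
  set Sc : Finset τ := Finset.univ.filter (fun t => ¬ S t) with hScdef
  have hSc : ∀ t, t ∈ Sc ↔ ¬ S t := fun t => by simp [hScdef]
  have hScpar : ∀ t ∈ Sc, par t ∈ Sc := by
    intro t ht
    rw [hSc] at ht ⊢
    by_cases htr : t = r
    · subst htr; rw [H.root]; exact ht
    · exact fun h => ht (hSup t htr h)
  obtain ⟨ψ, hψ1, hψ2, hψ3⟩ := ext_lemma_s14 H G (B ∪ Sc) (fun _ v => v ∉ N ∧ v ≠ q)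
    (by
      intro t ht
      rcases Finset.mem_union.1 ht with h | h
      · exact Finset.mem_union_left _ (hBpar t h)
      · exact Finset.mem_union_right _ (hScpar t h)) _ B φ rfl Finset.subset_union_left hrB hBpar hφV
    (by
      intro t _ htB hpt
      have htr : t ≠ r := fun h => htB (h ▸ hrB)
      refine ⟨fun h => htB (hchild t htr (hφN _ hpt h)), ?_⟩
      rintro h
      exact hqφ (h ▸ Finset.mem_image_of_mem _ hpt))
    (by
      rintro X hX hXc t _ _ v hvX ⟨hv1, hv2⟩
      have hc1 : (insert q X).card ≤ G.degree v := by
        refine le_trans (Finset.card_insert_le _ _) (le_trans ?_ (hdeg v hv1))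
        have := Finset.card_le_univ (B ∪ Sc)
        omega
      obtain ⟨p, hp1, hp2⟩ := nbr_helper G (insert q X) v (Finset.mem_insert_of_mem hvX) hc1
      rw [Finset.mem_insert, not_or] at hp1
      exact ⟨p, hp1.2, hp2, fun h => hp1.2 (hX (hNφ p h)), hp1.1⟩)
  have hψq : ∀ t ∈ B ∪ Sc, ψ t ≠ q := by
    intro t ht
    by_cases htB : t ∈ B
    · rw [hψ1 t htB]
      rintro h
      exact hqφ (h ▸ Finset.mem_image_of_mem _ htB)
    · exact (hψ3 t ht htB).2
  have hScB : ∀ t, ¬ S t → t ∈ B ∪ Sc := fun t h => Finset.mem_union_right _ ((hSc t).2 h)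
  -- second use
  have hSu : S u := Anc.refl' u
  have hφ2S : ∀ t, ¬ S t → Function.update ψ u q t = ψ t := by
    intro t ht
    rw [Function.update_of_ne]
    rintro rfl
    exact ht hSu
  set P2 : Finset τ := insert u Sc with hP2
  set P3 : Finset τ := Finset.univ \ (Lf.erase u) with hP3
  have hP3mem : ∀ t, t ∈ P3 ↔ (t ∈ Lf → t = u) := by
    intro t; simp [hP3]; tauto
  have hP2mem : ∀ t, t ∉ P2 → S t ∧ t ≠ u := by
    intro t ht
    rw [hP2, Finset.mem_insert, not_or, hSc, not_not] at ht
    exact ⟨ht.2, ht.1⟩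
  have hP3par : ∀ t ∈ P3, par t ∈ P3 := by
    intro t ht
    by_cases htr : t = r
    · subst htr; rw [H.root]; exact ht
    · rw [hP3mem]
      intro h
      exact absurd rfl (hLfleaf _ h t htr)
  have hP2par : ∀ t ∈ P2, par t ∈ P2 := by
    intro t ht
    rcases Finset.mem_insert.1 ht with h | h
    · rw [h]; exact Finset.mem_insert_of_mem ((hSc _).2 hyS)
    · exact Finset.mem_insert_of_mem (hScpar t h)
  have hrP2 : r ∈ P2 := Finset.mem_insert_of_mem ((hSc _).2 hrS)
  have hP23 : P2 ⊆ P3 := by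
    intro t ht
    rw [hP3mem]
    intro hl
    rcases Finset.mem_insert.1 ht with h | h
    · exact h
    · exact absurd (hLfS t hl) ((hSc t).1 h)
  have hP3card : P3.card + Lf.card ≤ Fintype.card τ + 1 := by
    have h1 : P3.card = Fintype.card τ - (Lf.erase u).card := by
      rw [hP3, Finset.card_sdiff_of_subset (Finset.subset_univ _), Finset.card_univ]
    have h2 : (Lf.erase u).card ≤ Fintype.card τ := Finset.card_le_univ _
    have h3 : Lf.card ≤ (Lf.erase u).card + 1 := by
      have := Finset.pred_card_le_card_erase (s := Lf) (a := u)
      omega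
    omega
  have hv2 : Valid G r par (Function.update ψ u q) P2 := by
    constructor
    · intro a ha b hb hab
      rw [Finset.mem_coe, hP2, Finset.mem_insert, hSc] at ha hb
      rcases ha with rfl | ha <;> rcases hb with rfl | hb
      · rfl
      · rw [Function.update_self, hφ2S b hb] at hab
        exact absurd hab.symm (hψq b (hScB b hb))
      · rw [Function.update_self, hφ2S a ha] at hab
        exact absurd hab (hψq a (hScB a ha))
      · rw [hφ2S a ha, hφ2S b hb] at hab
        exact hψ2.1 (hScB a ha) (hScB b hb) hab
    · intro t ht htr
      rw [hP2, Finset.mem_insert] at ht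
      rcases ht with rfl | ht
      · rw [Function.update_self, hφ2S _ hyS, hψ1 _ ((hB _).2 (Or.inl hyHd)), hφHd _ hyHd]
        exact hadjq
      · rw [hφ2S _ ((hSc _).1 (hScpar t ht)), hφ2S _ ((hSc _).1 ht)]
        exact hψ2.2 t (Finset.mem_union_right _ ht) htr
  obtain ⟨χ, hχ1, hχ2, hχ3⟩ := ext_lemma_s14 H G P3 (fun _ v => Fr v ∧ v ∉ N)
    hP3par _ P2 (Function.update ψ u q) rfl hP23 hrP2 hP2par hv2
    (by
      intro t _ ht hpt
      obtain ⟨h1, h2⟩ := hP2mem t ht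
      have h3 := hSpar t h1 h2
      rcases Finset.mem_insert.1 hpt with h | h
      · rw [h, Function.update_self]
        exact ⟨hFrφ q hqφ, hqN⟩
      · exact absurd h3 ((hSc _).1 h))
    (by
      rintro X hX hXc t _ _ v hvX ⟨hv1, hv2⟩
      have hc1 : (X ∪ Y.image φ).card ≤ G.degree v := by
        refine le_trans (Finset.card_union_le _ _) (le_trans ?_ (hdeg v hv2))
        have : (Y.image φ).card ≤ Y.card := Finset.card_image_le
        omega
      obtain ⟨p, hp1, hp2⟩ := nbr_helper G (X ∪ Y.image φ) v (Finset.mem_union_left _ hvX) hc1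
      rw [Finset.mem_union, not_or] at hp1
      refine ⟨p, hp1.1, hp2, ?_⟩
      by_cases hpB : p ∈ B.image φ
      · obtain ⟨s, hs, rfl⟩ := Finset.mem_image.1 hpB
        have hSs : S s := by
          by_contra hSs
          apply hp1.1
          apply hX
          refine Finset.mem_image.2 ⟨s, Finset.mem_insert_of_mem ((hSc s).2 hSs), ?_⟩
          rw [hφ2S s hSs, hψ1 s hs]
        have hsY : s ∉ Y := fun h => hp1.2 (Finset.mem_image_of_mem _ h)
        have hsOm : ¬ Om s := by
          intro h
          rw [hφHd s (hAHd s h.1)] at hp2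
          exact h.2 v hv1 hp2.symm
        refine ⟨claim2 s hs hSs hsOm hsY, fun h => ?_⟩
        rcases claim1 s hSs (hφN s hs h) with h | h
        · exact hsOm h
        · exact hsY h
      · exact ⟨hFrφ p hpB, fun h => hpB (hNφ p h)⟩)
  -- third use
  have ha0S : S a0 := ha0
  have hv0 : f a0 ∈ N := ha0A
  have hχu : χ u = q := by
    rw [hχ1 u (Finset.mem_insert_self _ _), Function.update_self]
  have hχN : ∀ t ∈ P3, S t → χ t ∉ N := by
    intro t ht hSt
    by_cases htu : t = u
    · rw [htu, hχu]; exact hqN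
    · refine (hχ3 t ht ?_).2
      rw [hP2, Finset.mem_insert, not_or, hSc, not_not]
      exact ⟨htu, hSt⟩
  obtain ⟨ω, hω1, hω2, hω3⟩ := ext_lemma_s14 H G Finset.univ (fun t v => v ≠ f a0 ∧ (t ∉ Lf → v ∉ N))
    (fun _ _ => Finset.mem_univ _) _ P3 χ rfl (Finset.subset_univ _) (hP23 hrP2) hP3par hχ2
    (by
      intro t _ ht hpt
      rw [hP3mem] at ht
      push Not at ht
      have h1 := hSpar t (hLfS t ht.1) ht.2
      have h2 := hχN _ hpt h1
      exact ⟨fun h => h2 (h ▸ hv0), fun _ => h2⟩)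
    (by
      rintro X hX hXc t _ ht v hvX ⟨hv1, hv2⟩
      rw [hP3mem] at ht
      push Not at ht
      have hpl : par t ∉ Lf := fun h => hLfleaf _ h t (hSr t (hLfS t ht.1)) rfl
      have hc1 : (insert (f a0) X).card ≤ G.degree v := by
        refine le_trans (Finset.card_insert_le _ _) (le_trans ?_ (hdeg v (hv2 hpl)))
        rw [Finset.card_univ] at hXc
        omega
      obtain ⟨p, hp1, hp2⟩ := nbr_helper G (insert (f a0) X) v (Finset.mem_insert_of_mem hvX) hc1
      rw [Finset.mem_insert, not_or] at hp1
      exact ⟨p, hp1.2, hp2, hp1.1, fun h => absurd ht.1 h⟩)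
  refine ⟨ω, hω2, f a0, hv0, fun t => ?_⟩
  by_cases ht3 : t ∈ P3
  · rw [hω1 t ht3]
    by_cases hSt : S t
    · exact fun h => hχN t ht3 hSt (h ▸ hv0)
    · rw [hχ1 t (Finset.mem_insert_of_mem ((hSc t).2 hSt)), hφ2S t hSt]
      intro h
      have h1 : ψ a0 = f a0 := by rw [hψ1 a0 (hAB a0 ha0A), hφHd a0 (hAHd a0 ha0A)]
      have h2 : t = a0 := hψ2.1 (hScB t hSt) (Finset.mem_union_left _ (hAB a0 ha0A)) (h.trans h1.symm)
      exact hSt (h2 ▸ ha0S)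
  · exact (hω3 t (Finset.mem_univ _) ht3).1

theorem core {τ V : Type*} [Fintype τ] [DecidableEq τ] [Fintype V] [DecidableEq V]
    (T : SimpleGraph τ) (hT : T.IsTree) (G : SimpleGraph V) [DecidableRel G.Adj] (N : Finset V)
    (hNne : N.Nonempty)
    (hdeg : ∀ q, q ∉ N → Fintype.card τ ≤ G.degree q) (f : τ → V)
    (hinj : Function.Injective f) (hhom : ∀ a b, T.Adj a b → G.Adj (f a) (f b))
    (h : V) (hh : ∀ t, f t ≠ h) :
    ∃ f' : τ → V, Function.Injective f' ∧ (∀ a b, T.Adj a b → G.Adj (f' a) (f' b)) ∧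
      ∃ v ∈ N, ∀ t, f' t ≠ v := by
  by_cases hN : ∀ v ∈ N, ∃ a, f a = v
  swap
  · push Not at hN
    obtain ⟨v, hv, hv2⟩ := hN
    exact ⟨f, hinj, hhom, v, hv, hv2⟩
  obtain ⟨v0, hv0⟩ := hNne
  obtain ⟨a0, ha0⟩ := hN v0 hv0
  have ha0N : f a0 ∈ N := ha0 ▸ hv0
  have key : ∀ r, (f r ∉ N ∨ ∃ q, (∀ t, f t ≠ q) ∧ G.Adj (f r) q) → (∃ a, f a ∈ N ∧ a ≠ r) →
      ∃ f' : τ → V, Function.Injective f' ∧ (∀ a b, T.Adj a b → G.Adj (f' a) (f' b)) ∧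
      ∃ v ∈ N, ∀ t, f' t ≠ v := by
    intro r hr ha
    obtain ⟨par, dp, H⟩ := RT_exists T hT r
    obtain ⟨f', h1, h2⟩ := core_rooted H G N hdeg f
      ⟨hinj.injOn, fun t _ ht => hhom _ _ (H.adj t ht)⟩ hr ha hN
    obtain ⟨h3, h4⟩ := valid_hom H G f' h1
    exact ⟨f', h3, h4, h2⟩
  by_cases hA : ∃ r, f r ∉ N
  · obtain ⟨r, hr⟩ := hA
    exact key r (Or.inl hr) ⟨a0, ha0N, fun e => hr (e ▸ ha0N)⟩
  push Not at hA
  by_cases hB : ∃ r q, (∀ t, f t ≠ q) ∧ G.Adj (f r) q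
  · obtain ⟨r, q, hq, hadj⟩ := hB
    by_cases hr : ∃ a, a ≠ r
    · obtain ⟨a, ha⟩ := hr
      exact key r (Or.inr ⟨q, hq, hadj⟩) ⟨a, hA a, ha⟩
    · push Not at hr
      refine ⟨fun _ => h, fun a b _ => (hr a).trans (hr b).symm, fun a b hab => ?_, v0, hv0,
        fun _ e => hh a0 (ha0.trans e.symm)⟩
      exact absurd ((hr a).trans (hr b).symm) hab.ne
  · push Not at hB
    obtain ⟨par, dp, H⟩ := RT_exists T hT a0
    obtain ⟨f', h1, h2, h3⟩ := ext_lemma_s14 H G Finset.univ (fun _ v => ∀ t, f t ≠ v)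
      (fun _ _ => Finset.mem_univ _) _ {a0} (fun _ => h) rfl (Finset.subset_univ _)
      (Finset.mem_singleton_self _) (by simp [H.root]) ⟨by simp, by simp⟩
      (fun _ _ _ _ => hh)
      (by
        intro X _ hXc t _ _ v hvX hv
        have hvN : v ∉ N := fun e => by
          obtain ⟨a, ha⟩ := hN v e
          exact hv a ha
        obtain ⟨q, hq1, hq2⟩ := nbr_helper G X v hvX
          (le_trans (le_of_lt (by rwa [Finset.card_univ] at hXc)) (hdeg v hvN))
        refine ⟨q, hq1, hq2, fun s e => ?_⟩
        subst e
        exact hB s v hv hq2.symm)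
    obtain ⟨h4, h5⟩ := valid_hom H G f' h2
    refine ⟨f', h4, h5, v0, hv0, fun t => ?_⟩
    by_cases ht : t = a0
    · rw [ht, h1 a0 (Finset.mem_singleton_self _)]
      exact fun e => hh a0 (ha0.trans e.symm)
    · rw [← ha0]
      exact fun e => h3 t (Finset.mem_univ _) (by simpa using ht) a0 e.symm

theorem stmt_14 {V W : Type*} [Fintype V] [DecidableEq V] [Fintype W]
    (G : SimpleGraph V) [DecidableRel G.Adj] (m : ℕ) (hm : 0 < m)
    (T : SimpleGraph W) (hT : T.IsTree) (hTcard : Fintype.card W = m)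
    (hGconn : G.Connected)
    (hδ : ∀ v : V, m ≤ G.degree v) :
    ∃ f : W → V, Function.Injective f ∧
      (∀ a b : W, T.Adj a b → G.Adj (f a) (f b)) ∧
      (G.induce ((Set.range f)ᶜ)).Connected := by
  classical
  subst hTcard
  let Pr : Finset V → Prop := fun C => (G.induce (C : Set V)).Connected ∧
    ∃ f : W → V, Function.Injective f ∧ (∀ a b : W, T.Adj a b → G.Adj (f a) (f b)) ∧ ∀ t, f t ∉ C
  have hex : ∃ C, Pr C := by
    obtain ⟨r0⟩ := hGconn.nonempty
    obtain ⟨v1, hv1⟩ : (G.neighborFinset r0).Nonempty := by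
      rw [← Finset.card_pos, SimpleGraph.card_neighborFinset_eq_degree]
      exact lt_of_lt_of_le hm (hδ r0)
    rw [SimpleGraph.mem_neighborFinset] at hv1
    obtain ⟨w0⟩ := hT.connected.nonempty
    obtain ⟨par, dp, H⟩ := RT_exists T hT w0
    obtain ⟨f, h1, h2, h3⟩ := ext_lemma_s14 H G Finset.univ (fun _ v => v ≠ r0)
      (fun _ _ => Finset.mem_univ _) _ {w0} (fun _ => v1) rfl (Finset.subset_univ _)
      (Finset.mem_singleton_self _) (by simp [H.root]) ⟨by simp, by simp⟩
      (fun _ _ _ _ => hv1.ne')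
      (by
        intro X _ hXc t _ _ v hvX hv
        have hc1 : (insert r0 X).card ≤ G.degree v := by
          refine le_trans (Finset.card_insert_le _ _) (le_trans ?_ (hδ v))
          rw [Finset.card_univ] at hXc
          omega
        obtain ⟨p, hp1, hp2⟩ := nbr_helper G (insert r0 X) v (Finset.mem_insert_of_mem hvX) hc1
        rw [Finset.mem_insert, not_or] at hp1
        exact ⟨p, hp1.2, hp2, hp1.1⟩)
    obtain ⟨h4, h5⟩ := valid_hom H G f h2
    refine ⟨{r0}, ?_, f, h4, h5, fun t => ?_⟩
    · rw [Finset.coe_singleton, SimpleGraph.induce_singleton_eq_top]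
      exact SimpleGraph.connected_top
    · rw [Finset.mem_singleton]
      by_cases ht : t = w0
      · rw [ht, h1 w0 (Finset.mem_singleton_self _)]; exact hv1.ne'
      · exact h3 t (Finset.mem_univ _) (by simpa using ht)
  obtain ⟨C, ⟨hCconn, f, hinj, hhom, hfC⟩, hmax⟩ : ∃ C, Pr C ∧ ∀ D, Pr D → D.card ≤ C.card := by
    obtain ⟨C0, hC0⟩ := hex
    obtain ⟨C, h1, h2⟩ := Finset.exists_max_image (Finset.univ.filter Pr) Finset.card
      ⟨C0, by simpa using hC0⟩
    exact ⟨C, by simpa using h1, fun D hD => h2 D (by simpa using hD)⟩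
  by_cases hfull : ∀ v, v ∉ C → ∃ t, f t = v
  · refine ⟨f, hinj, hhom, ?_⟩
    have : (Set.range f)ᶜ = (C : Set V) := by
      ext v
      simp only [Set.mem_compl_iff, Set.mem_range, Finset.mem_coe]
      constructor
      · intro h
        by_contra hv
        exact h (hfull v hv)
      · rintro hv ⟨t, rfl⟩
        exact hfC t hv
    rw [this]; exact hCconn
  exfalso
  push Not at hfull
  obtain ⟨h, hhC, hh⟩ := hfull
  let G' : SimpleGraph {v // v ∉ C} := G.comap Subtype.val
  let N : Finset {v // v ∉ C} := Finset.univ.filter (fun w => ∃ c ∈ C, G.Adj c w.1)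
  have hNne : N.Nonempty := by
    obtain ⟨⟨c, hc⟩⟩ := hCconn.nonempty
    obtain ⟨p⟩ := hGconn c h
    obtain ⟨d, _, hd1, hd2⟩ := p.exists_boundary_dart (C : Set V) hc hhC
    exact ⟨⟨d.snd, hd2⟩, Finset.mem_filter.2 ⟨Finset.mem_univ _, d.fst, hd1, d.adj⟩⟩
  have hdeg : ∀ q, q ∉ N → Fintype.card W ≤ G'.degree q := by
    intro q hq
    refine le_trans (hδ q.1) ?_
    rw [← SimpleGraph.card_neighborFinset_eq_degree, ← SimpleGraph.card_neighborFinset_eq_degree]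
    have : G.neighborFinset q.1 ⊆ (G'.neighborFinset q).image Subtype.val := by
      intro x hx
      rw [SimpleGraph.mem_neighborFinset] at hx
      have hxC : x ∉ C := fun hxC =>
        hq (Finset.mem_filter.2 ⟨Finset.mem_univ _, x, hxC, hx.symm⟩)
      refine Finset.mem_image.2 ⟨⟨x, hxC⟩, ?_, rfl⟩
      rw [SimpleGraph.mem_neighborFinset]
      exact hx
    exact (Finset.card_le_card this).trans Finset.card_image_le
  obtain ⟨f', h1, h2, v, hv, h3⟩ := core T hT G' N hNne hdeg (fun t => ⟨f t, hfC t⟩)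
    (fun a b hab => hinj (congrArg Subtype.val hab)) (fun a b hab => hhom a b hab) ⟨h, hhC⟩
    (fun t e => hh t (congrArg Subtype.val e))
  obtain ⟨_, c, hc, hadj⟩ := Finset.mem_filter.1 hv
  have hle := hmax (insert v.1 C) ⟨?_, fun t => (f' t).1, ?_, ?_, ?_⟩
  · rw [Finset.card_insert_of_notMem v.2] at hle
    omega
  · have e : ((insert v.1 C : Finset V) : Set V) = (C : Set V) ∪ {c, v.1} := by
      ext x
      simp only [Finset.coe_insert, Set.mem_insert_iff, Finset.mem_coe, Set.mem_union,
        Set.mem_singleton_iff]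
      constructor
      · tauto
      · rintro (h | h | h)
        · exact Or.inr h
        · exact Or.inr (h ▸ hc)
        · exact Or.inl h
    rw [e]
    exact SimpleGraph.induce_union_connected hCconn.preconnected
      (SimpleGraph.induce_pair_connected_of_adj hadj).preconnected ⟨c, hc, by simp⟩
  · exact fun a b hab => h1 (Subtype.ext hab)
  · exact fun a b hab => h2 a b hab
  · intro t ht
    rcases Finset.mem_insert.1 ht with e | e
    · exact h3 t (Subtype.ext e)
    · exact (f' t).2 e
end
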